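/- arXiv:2111.08912 — 3 statements merged into one kernel-verified Lean document; each statement's English description precedes it below -/
import Mathlib

section
/- Let 10 < P_1 < Q_1 ≤ X, and let S^c_{P_1,Q_1,X} denote the complement of S_{P_1,Q_1,X} in the set of positive integers n ≤ X. Then |S^c_{P_1,Q_1,X}| ≪ Σ_{j≤J} (log P_j)/(log Q_j) · X ≪ (log P_1)/(log Q_1) · X, with absolute implied constants. -/
open Finset

/-- `P_j = exp(j^{4j}·(log Q₁)^{j−1}·(log P₁))`; note `P_1 = P₁`. -/
noncomputable def Pseq (P₁ Q₁ : ℝ) (j : ℕ) : ℝ :=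
  Real.exp ((j : ℝ) ^ (4 * j) * Real.log Q₁ ^ (j - 1) * Real.log P₁)

/-- `Q_j = exp(j^{4j+2}·(log Q₁)^j)`; note `Q_1 = Q₁`. -/
noncomputable def Qseq (Q₁ : ℝ) (j : ℕ) : ℝ :=
  Real.exp ((j : ℝ) ^ (4 * j + 2) * Real.log Q₁ ^ j)

/-- `J` is the largest index with `Q_J ≤ exp(√((1/2)·log X))`. -/
noncomputable def Jmax (Q₁ X : ℝ) : ℕ :=
  sSup {j : ℕ | Qseq Q₁ j ≤ Real.exp (Real.sqrt (Real.log X / 2))}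

/-- `S_{P₁,Q₁,X}` : the set of positive integers having at least one prime factor
in each interval `[P_j, Q_j]` for `j = 1, …, J`. -/
def memS (P₁ Q₁ X : ℝ) (n : ℕ) : Prop :=
  0 < n ∧ ∀ j ∈ Icc 1 (Jmax Q₁ X),
    ∃ p : ℕ, p.Prime ∧ p ∣ n ∧ Pseq P₁ Q₁ j ≤ (p : ℝ) ∧ (p : ℝ) ≤ Qseq Q₁ j

open scoped Classical in
/-- The sum of `1 / n` over the positive integers `n ≤ N` all of whose prime factors satisfy `s`. -/
noncomputable def invSum (s : ℕ → Prop) (N : ℕ) : ℝ :=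
  ∑ n ∈ Icc 1 N with ∀ p : ℕ, p.Prime → p ∣ n → s p, (n : ℝ)⁻¹

theorem invSum_nonneg (s : ℕ → Prop) (N : ℕ) : 0 ≤ invSum s N :=
  sum_nonneg fun _ _ => by positivity

theorem invSum_congr {s t : ℕ → Prop} {N : ℕ} (h : ∀ p, p.Prime → p ≤ N → (s p ↔ t p)) :
    invSum s N = invSum t N := by
  classical
  unfold invSum
  congr 1
  ext n
  simp only [mem_filter, mem_Icc, and_congr_right_iff]
  intro hn
  refine forall_congr' fun p => forall_congr' fun hp => forall_congr' fun hd => ?_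
  exact h p hp ((Nat.le_of_dvd hn.1 hd).trans hn.2)

theorem cast_harmonic_eq_sum (N : ℕ) : (harmonic N : ℝ) = ∑ n ∈ Icc 1 N, (n : ℝ)⁻¹ := by
  simp [harmonic_eq_sum_Icc]

theorem exists_eq_mul_of_primes_partition (s : ℕ → Prop) (n : ℕ) (hn : n ≠ 0) :
    ∃ a b, n = a * b ∧ (∀ p : ℕ, p.Prime → p ∣ a → s p) ∧ ∀ p : ℕ, p.Prime → p ∣ b → ¬ s p := by
  induction n using Nat.recOnMul with
  | zero => exact absurd rfl hn
  | one =>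
    exact ⟨1, 1, rfl, fun p hp h => absurd h hp.not_dvd_one, fun p hp h => absurd h hp.not_dvd_one⟩
  | prime q hq =>
    by_cases hs : s q
    · refine ⟨q, 1, by simp, fun p hp hd => ?_, fun p hp h => absurd h hp.not_dvd_one⟩
      rwa [(Nat.prime_dvd_prime_iff_eq hp hq).1 hd]
    · refine ⟨1, q, by simp, fun p hp h => absurd h hp.not_dvd_one, fun p hp hd => ?_⟩
      rwa [(Nat.prime_dvd_prime_iff_eq hp hq).1 hd]
  | mul m n hm hn' =>
    obtain ⟨a, b, rfl, ha, hb⟩ := hm (left_ne_zero_of_mul hn)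
    obtain ⟨c, d, rfl, hc, hd⟩ := hn' (right_ne_zero_of_mul hn)
    refine ⟨a * c, b * d, by ring, fun p hp h => ?_, fun p hp h => ?_⟩
    · exact (hp.dvd_mul.1 h).elim (ha p hp) (hc p hp)
    · exact (hp.dvd_mul.1 h).elim (hb p hp) (hd p hp)

theorem harmonic_le_invSum_mul_invSum_not (s : ℕ → Prop) (N : ℕ) :
    (harmonic N : ℝ) ≤ invSum s N * invSum (fun p => ¬ s p) N := by
  classical
  rw [cast_harmonic_eq_sum, invSum, invSum, sum_mul_sum, ← sum_product']
  have key : Icc 1 N ⊆ (({n ∈ Icc 1 N | ∀ p : ℕ, p.Prime → p ∣ n → s p} ×ˢ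
      {n ∈ Icc 1 N | ∀ p : ℕ, p.Prime → p ∣ n → ¬ s p}).image fun x => x.1 * x.2) := by
    intro n hn
    rw [mem_Icc] at hn
    obtain ⟨a, b, rfl, ha, hb⟩ := exists_eq_mul_of_primes_partition s n (by omega)
    have ha0 : 0 < a := Nat.pos_of_mul_pos_right hn.1
    have hb0 : 0 < b := Nat.pos_of_mul_pos_left hn.1
    refine mem_image.2 ⟨(a, b), ?_, rfl⟩
    simp only [mem_product, mem_filter, mem_Icc]
    exact ⟨⟨⟨ha0, (Nat.le_mul_of_pos_right a hb0).trans hn.2⟩, ha⟩,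
      ⟨⟨hb0, (Nat.le_mul_of_pos_left b ha0).trans hn.2⟩, hb⟩⟩
  refine (sum_le_sum_of_subset_of_nonneg key fun _ _ _ => by positivity).trans ?_
  refine (sum_image_le_of_nonneg fun _ _ => by positivity).trans_eq ?_
  exact sum_congr rfl fun x _ => by push_cast; rw [mul_inv]

theorem coprime_of_primes_disjoint {s : ℕ → Prop} {a b : ℕ} (ha : ∀ p : ℕ, p.Prime → p ∣ a → s p)
    (hb : ∀ p : ℕ, p.Prime → p ∣ b → ¬ s p) : a.Coprime b :=
  Nat.coprime_of_dvd fun p hp h h' => hb p hp h' (ha p hp h)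

theorem invSum_mul_invSum_not_le_harmonic (s : ℕ → Prop) (M N : ℕ) :
    invSum s M * invSum (fun p => ¬ s p) N ≤ harmonic (M * N) := by
  classical
  rw [cast_harmonic_eq_sum, invSum, invSum, sum_mul_sum, ← sum_product']
  have inj : Set.InjOn (fun x : ℕ × ℕ => x.1 * x.2)
      (({n ∈ Icc 1 M | ∀ p : ℕ, p.Prime → p ∣ n → s p} ×ˢ
      {n ∈ Icc 1 N | ∀ p : ℕ, p.Prime → p ∣ n → ¬ s p} : Finset (ℕ × ℕ)) : Set (ℕ × ℕ)) := by
    rintro ⟨a, b⟩ hx ⟨c, d⟩ hy h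
    simp only [coe_product, coe_filter, mem_Icc, Set.mem_prod, Set.mem_ofPred_eq] at hx hy h
    obtain ⟨⟨ha, has⟩, hb, hbs⟩ := hx
    obtain ⟨⟨hc, hcs⟩, hd, hds⟩ := hy
    have hac : a = c := Nat.dvd_antisymm
      ((coprime_of_primes_disjoint has hds).dvd_of_dvd_mul_right (h ▸ dvd_mul_right a b))
      ((coprime_of_primes_disjoint hcs hbs).dvd_of_dvd_mul_right (h ▸ dvd_mul_right c d))
    subst hac
    rw [Nat.eq_of_mul_eq_mul_left (by omega) h]
  have heq := sum_image (f := fun n : ℕ => (n : ℝ)⁻¹) inj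
  simp only [Nat.cast_mul, mul_inv] at heq
  rw [← heq]
  refine sum_le_sum_of_subset_of_nonneg (fun n hn => ?_) fun _ _ _ => by positivity
  obtain ⟨⟨a, b⟩, hx, rfl⟩ := mem_image.1 hn
  simp only [mem_product, mem_filter, mem_Icc] at hx
  exact mem_Icc.2 ⟨Nat.mul_pos hx.1.1.1 hx.2.1.1, Nat.mul_le_mul hx.1.1.2 hx.2.1.2⟩

open ArithmeticFunction in
theorem sum_vonMangoldt_div_le (N : ℕ) :
    ∑ d ∈ Ioc 0 N, vonMangoldt d / d ≤ 2 * Real.log N := by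
  rcases Nat.eq_zero_or_pos N with rfl | hN
  · simp
  have hN' : (0 : ℝ) < N := by exact_mod_cast hN
  have h := sum_Ioc_mul_zeta_eq_sum vonMangoldt N
  rw [vonMangoldt_mul_zeta] at h
  have hup : ∑ n ∈ Ioc 0 N, ArithmeticFunction.log n ≤ N * Real.log N := by
    calc _ ≤ ∑ n ∈ Ioc 0 N, Real.log N := by
          refine sum_le_sum fun n hn => ?_
          rw [mem_Ioc] at hn
          rw [log_apply]
          have : (0 : ℝ) < n := by exact_mod_cast hn.1
          gcongr
          exact hn.2
      _ = _ := by simp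
  have hlow : ∀ d ∈ Ioc 0 N, N / 2 * (vonMangoldt d / d) ≤ vonMangoldt d * (N / d : ℕ) := by
    intro d hd
    rw [mem_Ioc] at hd
    have hd0 : (0 : ℝ) < d := by exact_mod_cast hd.1
    have h2 : N ≤ 2 * (d * (N / d)) := by
      have h1 := Nat.div_add_mod N d
      have h3 := Nat.mod_lt N hd.1
      have h4 : 1 ≤ N / d := Nat.div_pos hd.2 hd.1
      have h5 : d * 1 ≤ d * (N / d) := Nat.mul_le_mul_left d h4
      omega
    have h3 : (N : ℝ) ≤ 2 * (d * (N / d : ℕ)) := by exact_mod_cast h2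
    have h4 : (N : ℝ) / 2 / d ≤ (N / d : ℕ) := by
      rw [div_le_iff₀ hd0]; linarith
    calc _ = vonMangoldt d * ((N : ℝ) / 2 / d) := by ring
      _ ≤ _ := mul_le_mul_of_nonneg_left h4 vonMangoldt_nonneg
  have := sum_le_sum hlow
  rw [← mul_sum, ← h] at this
  have h6 := this.trans hup
  have : N * (∑ d ∈ Ioc 0 N, vonMangoldt d / d) ≤ N * (2 * Real.log N) := by linarith
  exact le_of_mul_le_mul_left this hN'

open scoped Classical in
/-- The `1 / k`-weighted mean of the `p`-adic valuation of `k` over the integers with prime factors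
in `s` is at most `2 / p`. -/
theorem sum_factorization_div_le (s : ℕ → Prop) (N p : ℕ) (hp : p.Prime) :
    ∑ k ∈ Icc 1 N with ∀ q : ℕ, q.Prime → q ∣ k → s q, (k.factorization p : ℝ) * (k : ℝ)⁻¹
      ≤ 2 / p * invSum s N := by
  set S := {k ∈ Icc 1 N | ∀ q : ℕ, q.Prime → q ∣ k → s q} with hS
  set A := ∑ k ∈ S, (k.factorization p : ℝ) * (k : ℝ)⁻¹ with hA
  have hp2 : (2 : ℝ) ≤ p := by exact_mod_cast hp.two_le
  have hp0 : (0 : ℝ) < p := by linarith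
  have hrec : A ≤ ∑ k ∈ S, ((k.factorization p : ℝ) + 1) * ((p : ℝ)⁻¹ * (k : ℝ)⁻¹) := by
    have h1 : A = ∑ k ∈ S with p ∣ k, (k.factorization p : ℝ) * (k : ℝ)⁻¹ := by
      rw [sum_filter_of_ne]
      intro k _ hk
      by_contra hd
      simp [Nat.factorization_eq_zero_of_not_dvd hd] at hk
    have hsub : {k ∈ S | p ∣ k} ⊆ S.image (p * ·) := by
      intro k hk
      obtain ⟨hk, m, rfl⟩ := mem_filter.1 hk
      rw [hS, mem_filter, mem_Icc] at hk
      refine mem_image.2 ⟨m, ?_, rfl⟩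
      rw [hS, mem_filter, mem_Icc]
      refine ⟨⟨Nat.pos_of_mul_pos_left hk.1.1, (Nat.le_mul_of_pos_left m hp.pos).trans hk.1.2⟩,
        fun q hq hd => hk.2 q hq (hd.mul_left p)⟩
    rw [h1]
    refine (sum_le_sum_of_subset_of_nonneg hsub fun _ _ _ => by positivity).trans ?_
    refine (sum_image_le_of_nonneg fun _ _ => by positivity).trans_eq ?_
    refine sum_congr rfl fun k hk => ?_
    have hk0 : k ≠ 0 := by rw [hS, mem_filter, mem_Icc] at hk; omega
    rw [Nat.factorization_mul hp.ne_zero hk0]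
    simp [hp.factorization_self, add_comm, mul_comm]
  have hsplit : ∑ k ∈ S, ((k.factorization p : ℝ) + 1) * ((p : ℝ)⁻¹ * (k : ℝ)⁻¹)
      = (p : ℝ)⁻¹ * (A + invSum s N) := by
    rw [hA, invSum, ← sum_add_distrib, mul_sum]
    exact sum_congr rfl fun k _ => by ring
  rw [hsplit] at hrec
  have hT := invSum_nonneg s N
  have h1 : p * A ≤ A + invSum s N := by
    calc p * A ≤ p * ((p : ℝ)⁻¹ * (A + invSum s N)) := by gcongr
      _ = _ := by field_simp
  have hA0 : 0 ≤ A := sum_nonneg fun _ _ => by positivity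
  rw [div_mul_eq_mul_div, le_div_iff₀ hp0]
  nlinarith

/-- The sum of reciprocals of integers composed of primes below `P` is `O(log P)`. -/
theorem invSum_lt_le {P : ℝ} (hP : 3 ≤ P) (N : ℕ) :
    invSum (fun p => (p : ℝ) < P) N ≤ 18 * Real.log P := by
  classical
  set T := invSum (fun p => (p : ℝ) < P) N with hT
  set S := {k ∈ Icc 1 N | ∀ q : ℕ, q.Prime → q ∣ k → (q : ℝ) < P} with hS
  have hlogP : 1 ≤ Real.log P := by
    rw [Real.le_log_iff_exp_le (by linarith)]
    linarith [Real.exp_one_lt_d9]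
  have hT0 : 0 ≤ T := invSum_nonneg _ _
  have hmean : ∑ k ∈ S, Real.log k * (k : ℝ)⁻¹ ≤ 4 * Real.log P * T := by
    have h1 : ∀ k ∈ S, Real.log k * (k : ℝ)⁻¹ = ∑ p ∈ Ioc 0 ⌊P⌋₊ with p.Prime,
        Real.log p * ((k.factorization p : ℝ) * (k : ℝ)⁻¹) := by
      intro k hk
      rw [hS, mem_filter, mem_Icc] at hk
      rw [Real.log_nat_eq_sum_factorization, Finsupp.sum, sum_mul, Nat.support_factorization]
      rw [sum_subset (s₂ := {p ∈ Ioc 0 ⌊P⌋₊ | p.Prime})]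
      · exact sum_congr rfl fun p _ => by ring
      · intro p hp
        have hp' := Nat.prime_of_mem_primeFactors hp
        rw [mem_filter, mem_Ioc]
        exact ⟨⟨hp'.pos, Nat.le_floor (hk.2 p hp' (Nat.dvd_of_mem_primeFactors hp)).le⟩, hp'⟩
      · intro p _ hp
        rw [← Nat.support_factorization, Finsupp.notMem_support_iff] at hp
        simp [hp]
    rw [sum_congr rfl h1, sum_comm]
    calc _ ≤ ∑ p ∈ Ioc 0 ⌊P⌋₊ with p.Prime,
          ArithmeticFunction.vonMangoldt p / p * (2 * T) := by
          refine sum_le_sum fun p hp => ?_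
          have hp' := (mem_filter.1 hp).2
          rw [ArithmeticFunction.vonMangoldt_apply_prime hp', ← mul_sum]
          have := mul_le_mul_of_nonneg_left (sum_factorization_div_le (fun p => (p : ℝ) < P) N p hp')
            (Real.log_natCast_nonneg p)
          refine this.trans_eq ?_
          rw [← hT]; ring
      _ ≤ ∑ p ∈ Ioc 0 ⌊P⌋₊, ArithmeticFunction.vonMangoldt p / p * (2 * T) := by
          refine sum_le_sum_of_subset_of_nonneg (filter_subset _ _) fun p _ _ => ?_
          have := @ArithmeticFunction.vonMangoldt_nonneg p
          positivity
      _ ≤ 2 * Real.log ⌊P⌋₊ * (2 * T) := by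
          rw [← sum_mul]
          gcongr
          exact sum_vonMangoldt_div_le _
      _ ≤ 2 * Real.log P * (2 * T) := by
          have : 0 < ⌊P⌋₊ := Nat.floor_pos.2 (by linarith)
          gcongr
          exact Nat.floor_le (by linarith)
      _ = _ := by ring
  set D := 8 * Real.log P with hD
  have hD0 : 0 < D := by linarith
  have hsmall : ∑ k ∈ S with Real.log (k : ℕ) ≤ D, (k : ℝ)⁻¹ ≤ 1 + D := by
    calc _ ≤ ∑ k ∈ Icc 1 ⌊Real.exp D⌋₊, (k : ℝ)⁻¹ := by
          refine sum_le_sum_of_subset_of_nonneg (fun k hk => ?_) fun _ _ _ => by positivity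
          rw [mem_filter, hS, mem_filter, mem_Icc] at hk
          have : (0 : ℝ) < k := by exact_mod_cast hk.1.1.1
          exact mem_Icc.2 ⟨hk.1.1.1, Nat.le_floor ((Real.log_le_iff_le_exp this).1 hk.2)⟩
      _ ≤ _ := by
          rw [← cast_harmonic_eq_sum]
          simpa using harmonic_floor_le_one_add_log (Real.exp D) (Real.one_le_exp hD0.le)
  have hlarge : ∑ k ∈ S with ¬ Real.log (k : ℕ) ≤ D, (k : ℝ)⁻¹ ≤ T / 2 := by
    calc _ ≤ ∑ k ∈ S with ¬ Real.log (k : ℕ) ≤ D, (Real.log k * (k : ℝ)⁻¹) / D := by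
          refine sum_le_sum fun k hk => ?_
          have := not_le.1 (mem_filter.1 hk).2
          rw [le_div_iff₀ hD0, mul_comm]
          gcongr
      _ ≤ ∑ k ∈ S, (Real.log k * (k : ℝ)⁻¹) / D := by
          refine sum_le_sum_of_subset_of_nonneg (filter_subset _ _) fun k _ _ => ?_
          have := Real.log_natCast_nonneg k
          positivity
      _ ≤ (4 * Real.log P * T) / D := by
          rw [← sum_div]
          gcongr
      _ = _ := by rw [hD]; field_simp; ring
  have : T = _ := (sum_filter_add_sum_filter_not S (fun k => Real.log k ≤ D) _).symm
  linarith

open scoped Classical in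
open ArithmeticFunction in
/-- Integers with restricted prime factors: their number is controlled by their logarithmic sum. -/
theorem card_mul_log_le (s : ℕ → Prop) (N : ℕ) :
    (#{n ∈ Icc 1 N | ∀ p : ℕ, p.Prime → p ∣ n → s p} : ℝ) * Real.log N
      ≤ (Real.log 4 + 5) * N * invSum s N := by
  set S := {n ∈ Icc 1 N | ∀ p : ℕ, p.Prime → p ∣ n → s p} with hS
  let f : ArithmeticFunction ℝ := ⟨fun n => if n ∈ S then 1 else 0, by simp [hS]⟩
  have hf : ∀ n, f n = if n ∈ S then 1 else 0 := fun n => rfl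
  have hf0 : ∀ n, 0 ≤ f n := fun n => by rw [hf]; split_ifs <;> simp
  have hlog : ∑ n ∈ S, Real.log n ≤ (Real.log 4 + 4) * N * invSum s N := by
    calc ∑ n ∈ S, Real.log n ≤ ∑ n ∈ S, (f * vonMangoldt) n := by
          refine sum_le_sum fun n hn => ?_
          rw [← vonMangoldt_sum, mul_apply,
            Nat.sum_divisorsAntidiagonal' (f := fun a b => f a * vonMangoldt b)]
          refine sum_le_sum fun d hd => ?_
          rw [hS, mem_filter, mem_Icc] at hn
          have hdvd := Nat.div_dvd_of_dvd (Nat.dvd_of_mem_divisors hd)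
          have hmem : n / d ∈ S := by
            rw [hS, mem_filter, mem_Icc]
            exact ⟨⟨Nat.pos_of_dvd_of_pos hdvd hn.1.1, (Nat.div_le_self n d).trans hn.1.2⟩,
              fun p hp h => hn.2 p hp (h.trans hdvd)⟩
          rw [hf, if_pos hmem, one_mul]
      _ ≤ ∑ n ∈ Ioc 0 N, (f * vonMangoldt) n := by
          refine sum_le_sum_of_subset_of_nonneg (fun n hn => ?_) fun n _ _ => ?_
          · rw [hS, mem_filter, mem_Icc] at hn
            exact mem_Ioc.2 hn.1
          · rw [mul_apply]
            exact sum_nonneg fun x _ => mul_nonneg (hf0 _) vonMangoldt_nonneg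
      _ = ∑ n ∈ Ioc 0 N, f n * ∑ m ∈ Ioc 0 (N / n), vonMangoldt m :=
          sum_Ioc_mul_eq_sum_sum f vonMangoldt N
      _ ≤ ∑ n ∈ Ioc 0 N, f n * ((Real.log 4 + 4) * N * (n : ℝ)⁻¹) := by
          refine sum_le_sum fun n _ => mul_le_mul_of_nonneg_left ?_ (hf0 n)
          have := Chebyshev.psi_le_const_mul_self (x := (N : ℝ) / n) (by positivity)
          rw [Chebyshev.psi, Nat.floor_div_eq_div] at this
          refine this.trans_eq (by ring)
      _ = _ := by
          simp only [hf, ite_mul, one_mul, zero_mul]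
          rw [← sum_filter, invSum, mul_sum]
          refine sum_congr ?_ fun _ _ => rfl
          ext n
          simp only [hS, mem_filter, mem_Icc, mem_Ioc]
          grind
  have hdiff : ∑ n ∈ S, (Real.log N - Real.log n) ≤ N * invSum s N := by
    rw [invSum, mul_sum]
    refine sum_le_sum fun n hn => ?_
    rw [hS, mem_filter, mem_Icc] at hn
    have hn0 : (0 : ℝ) < n := by exact_mod_cast hn.1.1
    have hN0 : (0 : ℝ) < N := by exact_mod_cast hn.1.1.trans hn.1.2
    rw [← Real.log_div hN0.ne' hn0.ne', ← div_eq_mul_inv]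
    exact Real.log_le_self (by positivity)
  rw [sum_sub_distrib, sum_const, nsmul_eq_mul] at hdiff
  linarith

open scoped Classical in
/-- Upper bound sieve: the number of integers up to `X` free of prime factors in `[P, Q]`. -/
theorem card_no_prime_factor_Icc_le {P Q X : ℝ} (hP : 3 ≤ P) (hPQ : P ≤ Q) (hQX : Q ≤ X) :
    (#{n ∈ Icc 1 ⌊X⌋₊ | ∀ p : ℕ, p.Prime → p ∣ n → ¬ (P ≤ p ∧ p ≤ Q)} : ℝ)
      ≤ 756 * (Real.log P / Real.log Q * X) := by
  set N := ⌊X⌋₊ with hN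
  set M := ⌊Q⌋₊ with hM
  set F := invSum (fun p => ¬ (P ≤ (p : ℝ) ∧ (p : ℝ) ≤ Q)) N with hF
  set R := invSum (fun p => P ≤ (p : ℝ) ∧ (p : ℝ) ≤ Q) M with hR
  have hlogP : 1 ≤ Real.log P := by
    rw [Real.le_log_iff_exp_le (by linarith)]
    linarith [Real.exp_one_lt_d9]
  have hlogQ : Real.log P ≤ Real.log Q := Real.log_le_log (by linarith) hPQ
  have hlogX : Real.log Q ≤ Real.log X := Real.log_le_log (by linarith) hQX
  have hN1 : X < N + 1 := Nat.lt_floor_add_one X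
  have hNX : (N : ℝ) ≤ X := Nat.floor_le (by linarith)
  have hMQ : (M : ℝ) ≤ Q := Nat.floor_le (by linarith)
  have hN3 : 3 ≤ N := Nat.le_floor (by push_cast; linarith)
  have hM3 : 3 ≤ M := Nat.le_floor (by push_cast; linarith)
  have hN3' : (3 : ℝ) ≤ N := by exact_mod_cast hN3
  have hM3' : (3 : ℝ) ≤ M := by exact_mod_cast hM3
  have hlogN : Real.log X ≤ 2 * Real.log N := by
    rw [← Real.log_rpow (by linarith), Real.rpow_two]
    exact Real.log_le_log (by linarith) (by nlinarith)
  have hRF : R * F ≤ 3 * Real.log X := by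
    refine (invSum_mul_invSum_not_le_harmonic _ M N).trans
      ((harmonic_le_one_add_log _).trans ?_)
    rw [Nat.cast_mul, Real.log_mul (by linarith) (by linarith)]
    have h1 := Real.log_le_log (by linarith) hNX
    have h2 := Real.log_le_log (by linarith) hMQ
    linarith
  have hRT : Real.log Q ≤ 18 * Real.log P * R := by
    have h1 := harmonic_le_invSum_mul_invSum_not (fun p : ℕ => (p : ℝ) < P) M
    have h2 : invSum (fun p : ℕ => ¬ (p : ℝ) < P) M = R := by
      refine invSum_congr fun p _ hp => ?_
      have : (p : ℝ) ≤ Q := (Nat.cast_le.2 hp).trans hMQ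
      simp [this]
    rw [h2] at h1
    refine ((log_le_harmonic_floor Q (by linarith)).trans h1).trans ?_
    exact mul_le_mul_of_nonneg_right (invSum_lt_le hP M) (invSum_nonneg _ _)
  have hF0 : 0 ≤ F := invSum_nonneg _ _
  have hFle : Real.log Q * F ≤ 54 * Real.log P * Real.log X := by
    calc Real.log Q * F ≤ 18 * Real.log P * R * F := by gcongr
      _ = 18 * Real.log P * (R * F) := by ring
      _ ≤ 18 * Real.log P * (3 * Real.log X) := by gcongr
      _ = _ := by ring
  have hlog4 : Real.log 4 ≤ 2 := by
    rw [show (4 : ℝ) = 2 ^ 2 by norm_num, Real.log_pow]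
    push_cast
    linarith [Real.log_two_lt_d9]
  have hcard := card_mul_log_le (fun p : ℕ => ¬ (P ≤ (p : ℝ) ∧ (p : ℝ) ≤ Q)) N
  rw [← hF] at hcard
  set c : ℝ := (#{n ∈ Icc 1 N | ∀ p : ℕ, p.Prime → p ∣ n → ¬ (P ≤ (p : ℝ) ∧ (p : ℝ) ≤ Q)} : ℝ)
  have hc0 : 0 ≤ c := Nat.cast_nonneg _
  have h1 : c * Real.log X ≤ 14 * X * F := by
    calc c * Real.log X ≤ c * (2 * Real.log N) := by gcongr
      _ = 2 * (c * Real.log N) := by ring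
      _ ≤ 2 * ((Real.log 4 + 5) * N * F) := by gcongr
      _ ≤ 2 * ((2 + 5) * X * F) := by gcongr
      _ = _ := by ring
  have hX0 : 0 ≤ X := by linarith
  have h2 : Real.log X * (c * Real.log Q) ≤ Real.log X * (756 * Real.log P * X) := by
    calc _ = Real.log Q * (c * Real.log X) := by ring
      _ ≤ Real.log Q * (14 * X * F) := by gcongr; linarith
      _ = 14 * X * (Real.log Q * F) := by ring
      _ ≤ 14 * X * (54 * Real.log P * Real.log X) := by gcongr
      _ = _ := by ring
  have h3 := le_of_mul_le_mul_left h2 (by linarith)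
  rw [div_mul_eq_mul_div, ← mul_div_assoc, le_div_iff₀ (by linarith)]
  linarith

/-- The quotients `log P_j / log Q_j` decay like `1 / j²`. -/
theorem log_Pseq_div_log_Qseq {P₁ Q₁ : ℝ} (hQ : Real.log Q₁ ≠ 0) {j : ℕ} (hj : 1 ≤ j) :
    Real.log (Pseq P₁ Q₁ j) / Real.log (Qseq Q₁ j)
      = Real.log P₁ / Real.log Q₁ * ((j : ℝ) ^ 2)⁻¹ := by
  obtain ⟨i, rfl⟩ := Nat.exists_eq_add_of_le' hj
  have hi : ((i + 1 : ℕ) : ℝ) ≠ 0 := by positivity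
  rw [Pseq, Qseq, Real.log_exp, Real.log_exp, Nat.add_sub_cancel, pow_add, pow_succ (Real.log Q₁)]
  field_simp

theorem Qseq_mono {Q₁ : ℝ} (hQ : 1 ≤ Real.log Q₁) {i j : ℕ} (hi : 1 ≤ i) (hij : i ≤ j) :
    Qseq Q₁ i ≤ Qseq Q₁ j := by
  have hi' : (1 : ℝ) ≤ i := by exact_mod_cast hi
  have hij' : (i : ℝ) ≤ j := by exact_mod_cast hij
  have hpow : (i : ℝ) ^ (4 * i + 2) ≤ (j : ℝ) ^ (4 * j + 2) :=
    (pow_le_pow_left₀ (by linarith) hij' _).trans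
      (pow_le_pow_right₀ (hi'.trans hij') (by omega))
  unfold Qseq
  gcongr

theorem Qseq_le_of_le_Jmax {Q₁ X : ℝ} (hQ : 1 ≤ Real.log Q₁) (hX : 1 ≤ Real.log X) (hX0 : 0 < X)
    {j : ℕ} (hj : 1 ≤ j) (hjJ : j ≤ Jmax Q₁ X) : Qseq Q₁ j ≤ X := by
  set A := {j : ℕ | Qseq Q₁ j ≤ Real.exp (Real.sqrt (Real.log X / 2))} with hA
  have hJ : Jmax Q₁ X = sSup A := rfl
  have hne : A.Nonempty := by
    by_contra h
    rw [Set.not_nonempty_iff_eq_empty] at h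
    rw [hJ, h, csSup_empty, bot_eq_zero] at hjJ
    omega
  have hbdd : BddAbove A := by
    by_contra h
    rw [hJ, Nat.sSup_of_not_bddAbove h] at hjJ
    omega
  have hmem : Qseq Q₁ (Jmax Q₁ X) ≤ Real.exp (Real.sqrt (Real.log X / 2)) := Nat.sSup_mem hne hbdd
  refine (Qseq_mono hQ hj hjJ).trans (hmem.trans ?_)
  rw [← Real.le_log_iff_exp_le hX0, Real.sqrt_le_left (by linarith)]
  nlinarith

theorem le_Pseq {P₁ Q₁ : ℝ} (hP₁ : 0 < P₁) (hP : 0 ≤ Real.log P₁) (hQ : 1 ≤ Real.log Q₁) {j : ℕ}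
    (hj : 1 ≤ j) : P₁ ≤ Pseq P₁ Q₁ j := by
  have hj' : (1 : ℝ) ≤ j := by exact_mod_cast hj
  rw [Pseq, ← Real.log_le_iff_le_exp hP₁]
  exact le_mul_of_one_le_left hP (one_le_mul_of_one_le_of_one_le (one_le_pow₀ hj') (one_le_pow₀ hQ))

theorem Pseq_le_Qseq {P₁ Q₁ : ℝ} (hP : 0 ≤ Real.log P₁) (hPQ : Real.log P₁ ≤ Real.log Q₁)
    {j : ℕ} (hj : 1 ≤ j) : Pseq P₁ Q₁ j ≤ Qseq Q₁ j := by
  have hj' : (1 : ℝ) ≤ j := by exact_mod_cast hj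
  rw [Pseq, Qseq, Real.exp_le_exp]
  calc _ ≤ (j : ℝ) ^ (4 * j + 2) * Real.log Q₁ ^ (j - 1) * Real.log Q₁ := by
        have := pow_le_pow_right₀ hj' (Nat.le_add_right (4 * j) 2)
        have := hP.trans hPQ
        gcongr
    _ = _ := by rw [mul_assoc, ← pow_succ, Nat.sub_add_cancel hj]

open scoped Classical in
/-- **Equation (2.1): the fundamental lemma bound for the complement of `S`.**
For `10 < P₁ < Q₁ ≤ X`, the complement `S^c` of `S_{P₁,Q₁,X}` in `[1,X] ∩ ℕ`
satisfies `|S^c| ≪ ∑_{j ≤ J} (log P_j)/(log Q_j)·X ≪ (log P₁)/(log Q₁)·X`,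
with absolute implied constants. -/
theorem complement_of_S_bound :
    ∃ K : ℝ, 0 < K ∧ ∀ P₁ Q₁ X : ℝ, 10 < P₁ → P₁ < Q₁ → Q₁ ≤ X →
      ((((Icc 1 ⌊X⌋₊).filter (fun n => ¬ memS P₁ Q₁ X n)).card : ℝ)
        ≤ K * ((∑ j ∈ Icc 1 (Jmax Q₁ X),
            Real.log (Pseq P₁ Q₁ j) / Real.log (Qseq Q₁ j)) * X)) ∧
      ((∑ j ∈ Icc 1 (Jmax Q₁ X),
          Real.log (Pseq P₁ Q₁ j) / Real.log (Qseq Q₁ j)) * X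
        ≤ K * (Real.log P₁ / Real.log Q₁ * X)) := by
  classical
  refine ⟨756, by norm_num, fun P₁ Q₁ X hP hPQ hQX => ?_⟩
  have hlogP : 1 ≤ Real.log P₁ := by
    rw [Real.le_log_iff_exp_le (by linarith)]
    linarith [Real.exp_one_lt_d9]
  have hlogPQ : Real.log P₁ ≤ Real.log Q₁ := Real.log_le_log (by linarith) hPQ.le
  have hlogQ : 1 ≤ Real.log Q₁ := hlogP.trans hlogPQ
  have hlogX : 1 ≤ Real.log X := hlogQ.trans (Real.log_le_log (by linarith) hQX)
  have hX0 : 0 < X := by linarith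
  constructor
  · have hsub : {n ∈ Icc 1 ⌊X⌋₊ | ¬ memS P₁ Q₁ X n} ⊆ (Icc 1 (Jmax Q₁ X)).biUnion fun j =>
        {n ∈ Icc 1 ⌊X⌋₊ | ∀ p : ℕ, p.Prime → p ∣ n →
          ¬ (Pseq P₁ Q₁ j ≤ (p : ℝ) ∧ (p : ℝ) ≤ Qseq Q₁ j)} := by
      intro n hn
      rw [mem_filter, memS, not_and] at hn
      have h := hn.2 (mem_Icc.1 hn.1).1
      push Not at h
      obtain ⟨j, hj, h⟩ := h
      refine mem_biUnion.2 ⟨j, hj, mem_filter.2 ⟨hn.1, fun p hp hd hpj => ?_⟩⟩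
      exact absurd hpj.2 (not_le.2 (h p hp hd hpj.1))
    have hcard := (card_le_card hsub).trans card_biUnion_le
    refine (Nat.cast_le.2 hcard).trans ?_
    rw [Nat.cast_sum, sum_mul, mul_sum]
    refine sum_le_sum fun j hj => ?_
    rw [mem_Icc] at hj
    refine card_no_prime_factor_Icc_le ?_ (Pseq_le_Qseq (by linarith) hlogPQ hj.1)
      (Qseq_le_of_le_Jmax hlogQ hlogX hX0 hj.1 hj.2)
    linarith [le_Pseq (by linarith : 0 < P₁) (by linarith) hlogQ hj.1]
  · rw [sum_congr rfl fun j hj => log_Pseq_div_log_Qseq (by linarith) (mem_Icc.1 hj).1, ← mul_sum]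
    have hsum : ∑ j ∈ Icc 1 (Jmax Q₁ X), ((j : ℝ) ^ 2)⁻¹ ≤ 2 := by
      have h := sum_Ioo_inv_sq_le (α := ℝ) 0 (Jmax Q₁ X + 1)
      have hI : Ioo 0 (Jmax Q₁ X + 1) = Icc 1 (Jmax Q₁ X) := by
        ext; simp only [mem_Ioo, mem_Icc]; omega
      rw [hI] at h
      simpa using h
    have hq : 0 ≤ Real.log P₁ / Real.log Q₁ := div_nonneg (by linarith) (by linarith)
    calc _ ≤ Real.log P₁ / Real.log Q₁ * 2 * X := by gcongr
      _ ≤ _ := by nlinarith [mul_nonneg hq hX0.le]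
end

section
/- Let k ≥ m ≥ 1 and A ≥ 1 be fixed. Then Σ_{h ∈ ([0,H] ∩ Z)^m} sup_{L_1,…,L_k} 𝔖({L_1(h),…,L_k(h)}) ≪_{k,A} H^m, where the supremum ranges over all k-tuples of affine-linear forms L_j(h_1,…,h_m) = a_j + Σ_{i=1}^m a_{i,j} h_i with integer coefficients satisfying |a_{i,j}|, |a_j| ≤ A. -/
open Finset

/-- `ν_p(𝓗)`: the number of distinct residue classes modulo `p` occupied by the
integers `h 0, …, h (k-1)`. -/
def nuP {k : ℕ} (h : Fin k → ℤ) (p : ℕ) : ℕ :=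
  (Finset.image (fun i => ((h i : ZMod p))) Finset.univ).card

/-- The singular series `𝔖(𝓗) = ∏_p (1 − ν_p(𝓗)/p)·(1 − 1/p)^{−k}`,
the product running over all primes (with `k` the number of forms). -/
noncomputable def singSeries {k : ℕ} (h : Fin k → ℤ) : ℝ :=
  ∏' p : Nat.Primes, ((1 - (nuP h p : ℝ) / (p : ℝ)) * (1 - 1 / (p : ℝ)) ^ (-(k : ℤ)))

/-- The multiplicative weight `n / φ(n) = ∏_{p ∣ n} (1 - 1/p)⁻¹`, equal to `1` at `n = 0`. -/
noncomputable def primeWeight (n : ℕ) : ℝ := ∏ p ∈ n.primeFactors, (1 - 1 / (p : ℝ))⁻¹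

lemma one_le_inv_one_sub_one_div {p : ℕ} (hp : 2 ≤ p) : 1 ≤ (1 - 1 / (p : ℝ))⁻¹ := by
  have h2 : (2 : ℝ) ≤ p := by exact_mod_cast hp
  have h3 : 1 / (p : ℝ) ≤ 1 / 2 := one_div_le_one_div_of_le (by norm_num) h2
  have h4 : 0 ≤ 1 / (p : ℝ) := by positivity
  exact (one_le_inv₀ (by linarith)).2 (by linarith)

lemma one_le_primeWeight (n : ℕ) : 1 ≤ primeWeight n :=
  Finset.one_le_prod fun _ hp =>
    one_le_inv_one_sub_one_div (Nat.prime_of_mem_primeFactors hp).two_le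

lemma primeWeight_mul_le (a b : ℕ) :
    primeWeight (a * b) ≤ primeWeight a * primeWeight b := by
  rcases eq_or_ne a 0 with rfl | ha
  · simpa [primeWeight] using one_le_primeWeight b
  rcases eq_or_ne b 0 with rfl | hb
  · simpa [primeWeight] using one_le_primeWeight a
  have hinter : 1 ≤ ∏ p ∈ a.primeFactors ∩ b.primeFactors, (1 - 1 / (p : ℝ))⁻¹ :=
    Finset.one_le_prod fun _ hp => one_le_inv_one_sub_one_div
      (Nat.prime_of_mem_primeFactors (Finset.mem_inter.1 hp).1).two_le
  have hab := one_le_primeWeight (a * b)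
  unfold primeWeight at hab ⊢
  rw [Nat.primeFactors_mul ha hb] at hab ⊢
  rw [← Finset.prod_union_inter]
  exact le_mul_of_one_le_right (by linarith) hinter

lemma primeWeight_prod_le {ι : Type*} (s : Finset ι) (f : ι → ℕ) :
    primeWeight (∏ i ∈ s, f i) ≤ ∏ i ∈ s, primeWeight (f i) := by
  classical
  induction s using Finset.induction_on with
  | empty => simp [primeWeight]
  | insert i s hi ih =>
    rw [Finset.prod_insert hi, Finset.prod_insert hi]
    exact (primeWeight_mul_le _ _).trans
      (mul_le_mul_of_nonneg_left ih (zero_le_one.trans (one_le_primeWeight _)))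

lemma one_add_pow_le_one_add_two_pow_mul {x : ℝ} (h0 : 0 ≤ x) (h1 : x ≤ 1) (B : ℕ) :
    (1 + x) ^ B ≤ 1 + (2 ^ B - 1) * x := by
  induction B with
  | zero => simp
  | succ B ih =>
    have hB : (1 : ℝ) ≤ 2 ^ B := one_le_pow₀ (by norm_num)
    rw [pow_succ, pow_succ]
    nlinarith [mul_le_mul_of_nonneg_right ih (by linarith : 0 ≤ 1 + x),
      mul_nonneg (mul_nonneg (sub_nonneg.2 hB) h0) (sub_nonneg.2 h1)]

lemma inv_one_sub_one_div_pow_le {p : ℕ} (hp : 2 ≤ p) (B : ℕ) :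
    ((1 - 1 / (p : ℝ))⁻¹) ^ B ≤ 1 + 2 * 2 ^ B / p := by
  have h2 : (2 : ℝ) ≤ p := by exact_mod_cast hp
  have hp0 : (0 : ℝ) < p := by linarith
  have hx1 : 2 / (p : ℝ) ≤ 1 := (div_le_one hp0).2 h2
  have hx0 : 0 ≤ 2 / (p : ℝ) := by positivity
  have hinv : (1 - 1 / (p : ℝ))⁻¹ ≤ 1 + 2 / p := by
    have hh : 1 - 1 / (p : ℝ) = 1 - (2 / p) / 2 := by ring
    rw [hh, inv_le_comm₀ (by linarith) (by linarith), inv_le_iff_one_le_mul₀ (by linarith)]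
    nlinarith
  calc ((1 - 1 / (p : ℝ))⁻¹) ^ B ≤ (1 + 2 / p) ^ B :=
        pow_le_pow_left₀ (zero_le_one.trans (one_le_inv_one_sub_one_div hp)) hinv B
    _ ≤ 1 + (2 ^ B - 1) * (2 / p) := one_add_pow_le_one_add_two_pow_mul hx0 hx1 B
    _ ≤ 1 + 2 * 2 ^ B / p := by
        have : 2 * 2 ^ B / (p : ℝ) = 2 ^ B * (2 / p) := by ring
        rw [this]; linarith

lemma sum_prod_primeFactors_le {C : ℝ} (hC : 0 ≤ C) (N : ℕ) :
    ∑ n ∈ Finset.Ioc 0 N, ∏ p ∈ n.primeFactors, (1 + C / (p : ℝ))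
      ≤ N * ∏ p ∈ (Finset.Ioc 0 N).filter Nat.Prime, (1 + C / (p : ℝ) ^ 2) := by
  set P := (Finset.Ioc 0 N).filter Nat.Prime with hP
  have hexpand : ∀ n ∈ Finset.Ioc 0 N, ∏ p ∈ n.primeFactors, (1 + C / (p : ℝ))
      = ∑ S ∈ P.powerset, if (∏ p ∈ S, p) ∣ n then ∏ p ∈ S, (C / (p : ℝ)) else 0 := by
    intro n hn
    rw [Finset.mem_Ioc] at hn
    rw [Finset.prod_one_add, ← Finset.sum_filter]
    refine Finset.sum_congr ?_ fun _ _ => rfl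
    ext S
    simp only [Finset.mem_powerset, Finset.mem_filter]
    constructor
    · intro hS
      refine ⟨fun p hp => ?_, (Finset.prod_dvd_prod_of_subset _ _ _ hS).trans
        (Nat.prod_primeFactors_dvd n)⟩
      have hpn := hS hp
      rw [hP, Finset.mem_filter, Finset.mem_Ioc]
      exact ⟨⟨(Nat.prime_of_mem_primeFactors hpn).pos,
        (Nat.le_of_mem_primeFactors hpn).trans hn.2⟩, Nat.prime_of_mem_primeFactors hpn⟩
    · rintro ⟨hS, hdvd⟩ p hp
      exact Nat.mem_primeFactors.2 ⟨(Finset.mem_filter.1 (hS hp)).2,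
        (Finset.dvd_prod_of_mem _ hp).trans hdvd, by omega⟩
  rw [Finset.sum_congr rfl hexpand, Finset.sum_comm, Finset.prod_one_add, Finset.mul_sum]
  refine Finset.sum_le_sum fun S _ => ?_
  rw [← Finset.sum_filter, Finset.sum_const, nsmul_eq_mul, Nat.Ioc_filter_dvd_card_eq_div]
  have hS0 : 0 ≤ ∏ p ∈ S, (C / (p : ℝ)) := Finset.prod_nonneg fun _ _ => by positivity
  calc ((N / ∏ p ∈ S, p : ℕ) : ℝ) * ∏ p ∈ S, (C / (p : ℝ))
      ≤ ((N : ℝ) / ((∏ p ∈ S, p : ℕ) : ℝ)) * ∏ p ∈ S, (C / (p : ℝ)) :=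
        mul_le_mul_of_nonneg_right Nat.cast_div_le hS0
    _ = N * ∏ p ∈ S, (C / (p : ℝ) ^ 2) := by
        rw [Nat.cast_prod, div_mul_eq_mul_div, mul_div_assoc, ← Finset.prod_div_distrib]
        congr 1
        refine Finset.prod_congr rfl fun p _ => ?_
        rw [div_div, sq]

/-- The moments of `n / φ(n)` are bounded on average. -/
lemma exists_sum_primeWeight_pow_le (B : ℕ) :
    ∃ K : ℝ, 0 < K ∧ ∀ N : ℕ, ∑ n ∈ Finset.range (N + 1), primeWeight n ^ B ≤ K * (N + 1) := by
  set C : ℝ := 2 * 2 ^ B with hC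
  have hC0 : 0 ≤ C := by positivity
  have hsum : Summable fun n : ℕ => 1 / (n : ℝ) ^ 2 := Real.summable_one_div_nat_pow.2 (by norm_num)
  set E : ℝ := Real.exp (C * ∑' n : ℕ, 1 / (n : ℝ) ^ 2)
  have hE1 : 1 ≤ E := Real.one_le_exp (mul_nonneg hC0 (tsum_nonneg fun _ => by positivity))
  refine ⟨E, by linarith, fun N => ?_⟩
  have hrange : Finset.range (N + 1) = insert 0 (Finset.Ioc 0 N) := by
    ext n; simp only [Finset.mem_range, Finset.mem_insert, Finset.mem_Ioc]; omega
  have hzero : primeWeight 0 = 1 := by simp [primeWeight]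
  rw [hrange, Finset.sum_insert (by simp), hzero, one_pow]
  have hpos : ∑ n ∈ Finset.Ioc 0 N, primeWeight n ^ B ≤ N * E := by
    calc ∑ n ∈ Finset.Ioc 0 N, primeWeight n ^ B
        ≤ ∑ n ∈ Finset.Ioc 0 N, ∏ p ∈ n.primeFactors, (1 + C / (p : ℝ)) := by
          refine Finset.sum_le_sum fun n _ => ?_
          rw [primeWeight, ← Finset.prod_pow]
          refine Finset.prod_le_prod (fun p hp => ?_) fun p hp => ?_
          · have := one_le_inv_one_sub_one_div (Nat.prime_of_mem_primeFactors hp).two_le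
            exact pow_nonneg (by linarith) _
          · exact inv_one_sub_one_div_pow_le (Nat.prime_of_mem_primeFactors hp).two_le B
      _ ≤ N * ∏ p ∈ (Finset.Ioc 0 N).filter Nat.Prime, (1 + C / (p : ℝ) ^ 2) :=
          sum_prod_primeFactors_le hC0 N
      _ ≤ N * E := by
          refine mul_le_mul_of_nonneg_left ?_ (Nat.cast_nonneg N)
          calc ∏ p ∈ (Finset.Ioc 0 N).filter Nat.Prime, (1 + C / (p : ℝ) ^ 2)
              ≤ ∏ p ∈ (Finset.Ioc 0 N).filter Nat.Prime, Real.exp (C * (1 / (p : ℝ) ^ 2)) := by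
                refine Finset.prod_le_prod (fun p _ => by positivity) fun p _ => ?_
                rw [mul_one_div, add_comm]
                exact Real.add_one_le_exp _
            _ = Real.exp (C * ∑ p ∈ (Finset.Ioc 0 N).filter Nat.Prime, 1 / (p : ℝ) ^ 2) := by
                rw [Finset.mul_sum, Real.exp_sum]
            _ ≤ E := Real.exp_le_exp.2 (mul_le_mul_of_nonneg_left
                (hsum.sum_le_tsum _ fun _ _ => by positivity) hC0)
  linarith

lemma sum_comp_le_mul_sum {α β : Type*} [DecidableEq β] (s : Finset α) (t : Finset β)
    (g : α → β) (f : β → ℝ) (C : ℕ) (hf : ∀ b, 0 ≤ f b) (hg : ∀ a ∈ s, g a ∈ t)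
    (hC : ∀ b ∈ t, (s.filter fun a => g a = b).card ≤ C) :
    ∑ a ∈ s, f (g a) ≤ C * ∑ b ∈ t, f b := by
  rw [← Finset.sum_fiberwise_of_maps_to hg, Finset.mul_sum]
  refine Finset.sum_le_sum fun b hb => ?_
  rw [Finset.sum_congr rfl fun a ha => by rw [(Finset.mem_filter.1 ha).2], Finset.sum_const,
    nsmul_eq_mul]
  exact mul_le_mul_of_nonneg_right (by exact_mod_cast hC b hb) (hf b)

lemma sum_Icc_natAbs_le (X : ℕ) (f : ℕ → ℝ) (hf : ∀ n, 0 ≤ f n) :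
    ∑ z ∈ Finset.Icc (-(X : ℤ)) X, f z.natAbs ≤ 2 * ∑ n ∈ Finset.range (X + 1), f n := by
  refine sum_comp_le_mul_sum _ _ Int.natAbs f 2 hf (fun z hz => ?_) fun n _ => ?_
  · rw [Finset.mem_Icc] at hz
    rw [Finset.mem_range]
    omega
  · refine (Finset.card_le_card (t := {(n : ℤ), -(n : ℤ)}) fun z hz => ?_).trans Finset.card_le_two
    rw [Finset.mem_filter] at hz
    rw [Finset.mem_insert, Finset.mem_singleton]
    omega

lemma card_filter_affine_eq_le {n : ℕ} (N : ℕ) (c : ℤ) (a : Fin (n + 1) → ℤ) (i₀ : Fin (n + 1))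
    (ha : a i₀ ≠ 0) (b : ℤ) :
    ((Fintype.piFinset fun _ : Fin (n + 1) => Finset.Icc (0 : ℤ) N).filter
      fun h => c + ∑ i, a i * h i = b).card ≤ (N + 1) ^ n := by
  have hcard : (Fintype.piFinset fun _ : Fin n => Finset.Icc (0 : ℤ) N).card = (N + 1) ^ n := by
    simp [Fintype.card_piFinset]
  rw [← hcard]
  refine Finset.card_le_card_of_injOn (fun h => i₀.removeNth h) (fun h hh => ?_) ?_
  · have := Fintype.mem_piFinset.1 (Finset.mem_filter.1 hh).1
    exact Fintype.mem_piFinset.2 fun j => this _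
  · intro h hh h' hh' heq
    have e := (Finset.mem_filter.1 hh).2
    have e' := (Finset.mem_filter.1 hh').2
    have hrest : ∀ j, h (i₀.succAbove j) = h' (i₀.succAbove j) := fun j => congrFun heq j
    rw [Fin.sum_univ_succAbove _ i₀] at e e'
    simp only [hrest] at e
    have hi : a i₀ * h i₀ = a i₀ * h' i₀ := by linarith
    funext i
    refine Fin.succAboveCases i₀ (mul_left_cancel₀ ha hi) hrest i

lemma exists_sum_primeWeight_affine_pow_le (m B : ℕ) (c : ℤ) (a : Fin m → ℤ) :
    ∃ K : ℝ, 0 < K ∧ ∀ N : ℕ, 1 ≤ N →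
      ∑ h ∈ Fintype.piFinset (fun _ : Fin m => Finset.Icc (0 : ℤ) N),
        primeWeight (c + ∑ i, a i * h i).natAbs ^ B ≤ K * (N : ℝ) ^ m := by
  have hw : ∀ n, 0 < primeWeight n ^ B := fun n => pow_pos (by linarith [one_le_primeWeight n]) B
  have hN2 : ∀ N : ℕ, 1 ≤ N → ((N : ℝ) + 1) ≤ 2 * N := by
    intro N hN
    have : (1 : ℝ) ≤ N := by exact_mod_cast hN
    linarith
  by_cases ha : ∀ i, a i = 0
  · refine ⟨2 ^ m * primeWeight c.natAbs ^ B, mul_pos (by positivity) (hw _), fun N hN => ?_⟩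
    simp only [ha, zero_mul, Finset.sum_const_zero, add_zero, Finset.sum_const, nsmul_eq_mul,
      Fintype.card_piFinset, Int.card_Icc, Finset.prod_const, Finset.card_univ, Fintype.card_fin]
    rw [mul_right_comm, ← mul_pow]
    refine mul_le_mul_of_nonneg_right ?_ (hw _).le
    push_cast
    refine pow_le_pow_left₀ (by positivity) ?_ m
    have : ((N : ℤ) + 1 - 0).toNat = N + 1 := by omega
    rw [this]
    exact_mod_cast hN2 N hN
  · push Not at ha
    obtain ⟨i₀, hi₀⟩ := ha
    obtain ⟨n, rfl⟩ : ∃ n, m = n + 1 := ⟨m - 1, by have := i₀.2; omega⟩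
    obtain ⟨K, hK, hbound⟩ := exists_sum_primeWeight_pow_le B
    set Y : ℕ := c.natAbs + ∑ i, (a i).natAbs with hY
    refine ⟨2 ^ n * (2 * (K * (Y + 1))), by positivity, fun N hN => ?_⟩
    have hmaps : ∀ h ∈ Fintype.piFinset (fun _ : Fin (n + 1) => Finset.Icc (0 : ℤ) N),
        c + ∑ i, a i * h i ∈ Finset.Icc (-((Y * N : ℕ) : ℤ)) ((Y * N : ℕ) : ℤ) := by
      intro h hh
      rw [Fintype.mem_piFinset] at hh
      rw [Finset.mem_Icc, ← abs_le]
      have hN' : (1 : ℤ) ≤ N := by exact_mod_cast hN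
      calc |c + ∑ i, a i * h i| ≤ |c| + ∑ i, |a i * h i| :=
            (abs_add_le _ _).trans (by gcongr; exact Finset.abs_sum_le_sum_abs _ _)
        _ ≤ |c| * N + ∑ i, |a i| * N := by
            refine add_le_add (le_mul_of_one_le_right (abs_nonneg _) hN')
              (Finset.sum_le_sum fun i _ => ?_)
            have := Finset.mem_Icc.1 (hh i)
            rw [abs_mul]
            exact mul_le_mul_of_nonneg_left (abs_le.2 ⟨by linarith, this.2⟩) (abs_nonneg _)
        _ = ((Y * N : ℕ) : ℤ) := by
            rw [hY]; push_cast
            rw [← Finset.sum_mul, ← add_mul]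
    have hN1 : (1 : ℝ) ≤ N := by exact_mod_cast hN
    calc _ ≤ (((N + 1) ^ n : ℕ) : ℝ) * ∑ z ∈ Finset.Icc (-((Y * N : ℕ) : ℤ)) ((Y * N : ℕ) : ℤ),
            primeWeight z.natAbs ^ B :=
          sum_comp_le_mul_sum _ _ (fun h : Fin (n + 1) → ℤ => c + ∑ i, a i * h i)
            (fun z => primeWeight z.natAbs ^ B) _ (fun z => (hw _).le) hmaps
            fun b _ => card_filter_affine_eq_le N c a i₀ hi₀ b
      _ ≤ (((N + 1) ^ n : ℕ) : ℝ) * (2 * (K * ((Y * N : ℕ) + 1))) := by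
          refine mul_le_mul_of_nonneg_left ?_ (Nat.cast_nonneg _)
          refine (sum_Icc_natAbs_le _ (fun n => primeWeight n ^ B) fun n => (hw _).le).trans ?_
          exact mul_le_mul_of_nonneg_left (hbound _) (by norm_num)
      _ ≤ (2 * N) ^ n * (2 * (K * ((Y + 1) * N))) := by
          push_cast
          gcongr
          · exact hN2 N hN
          · linarith
      _ = _ := by rw [mul_pow]; ring

lemma one_add_sum_le_prod_one_add {ι : Type*} (s : Finset ι) (g : ι → ℝ)
    (hg : ∀ i ∈ s, 0 ≤ g i) : 1 + ∑ i ∈ s, g i ≤ ∏ i ∈ s, (1 + g i) := by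
  classical
  induction s using Finset.induction_on with
  | empty => simp
  | insert i s hi ih =>
    have hs : ∀ j ∈ s, 0 ≤ g j := fun j hj => hg j (Finset.mem_insert_of_mem hj)
    have hgi := hg i (Finset.mem_insert_self i s)
    rw [Finset.sum_insert hi, Finset.prod_insert hi]
    nlinarith [mul_le_mul_of_nonneg_left (ih hs) (by linarith : 0 ≤ 1 + g i),
      mul_nonneg hgi (Finset.sum_nonneg hs)]

lemma Multipliable.summable_of_one_add_le {ι : Type*} {f g : ι → ℝ} (hmul : Multipliable f)
    (hf : ∀ i, 0 < f i) (hg : ∀ i, 0 ≤ g i) {s : Set ι} (hs : s.Finite)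
    (hfg : ∀ i ∉ s, 1 + g i ≤ f i) : Summable g := by
  classical
  obtain ⟨a, ha⟩ := hmul
  have hev : ∀ᶠ t : Finset ι in Filter.atTop, ∏ i ∈ t, f i < a + 1 :=
    ha.eventually (gt_mem_nhds (by linarith))
  obtain ⟨s₁, hs₁⟩ := Filter.eventually_atTop.1 hev
  set U := s₁ ∪ hs.toFinset
  have hP : 0 < ∏ i ∈ U, f i := Finset.prod_pos fun i _ => hf i
  refine summable_of_sum_le (c := ∑ i ∈ U, g i + (a + 1) / ∏ i ∈ U, f i) hg fun T => ?_
  have hout : ∑ i ∈ T \ U, g i ≤ (a + 1) / ∏ i ∈ U, f i := by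
    calc ∑ i ∈ T \ U, g i ≤ 1 + ∑ i ∈ T \ U, g i := by linarith
      _ ≤ ∏ i ∈ T \ U, (1 + g i) := one_add_sum_le_prod_one_add _ _ fun i _ => hg i
      _ ≤ ∏ i ∈ T \ U, f i := by
          refine Finset.prod_le_prod (fun i _ => by linarith [hg i]) fun i hi => hfg i fun his => ?_
          exact (Finset.mem_sdiff.1 hi).2 (Finset.mem_union_right _ (hs.mem_toFinset.2 his))
      _ ≤ (a + 1) / ∏ i ∈ U, f i := by
          rw [le_div_iff₀ hP, mul_comm, ← Finset.prod_union Finset.disjoint_sdiff]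
          exact (hs₁ _ (Finset.subset_union_left.trans Finset.subset_union_left)).le
  calc ∑ i ∈ T, g i ≤ ∑ i ∈ U ∪ T \ U, g i := by
        rw [Finset.union_sdiff_self_eq_union]
        exact Finset.sum_le_sum_of_subset_of_nonneg Finset.subset_union_right fun i _ _ => hg i
    _ = ∑ i ∈ U, g i + ∑ i ∈ T \ U, g i := Finset.sum_union Finset.disjoint_sdiff
    _ ≤ _ := by linarith

lemma nuP_le_prime {k : ℕ} (v : Fin k → ℤ) (p : Nat.Primes) : nuP v p ≤ p := by
  have : NeZero (p : ℕ) := ⟨p.2.ne_zero⟩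
  exact (Finset.card_le_univ _).trans (ZMod.card _).le

lemma nuP_lt_of_not_injective {k : ℕ} {v : Fin k → ℤ} (hv : ¬ Function.Injective v) (p : ℕ) :
    nuP v p < k := by
  refine lt_of_le_of_ne ((Finset.card_image_le).trans (by simp)) fun heq => hv ?_
  have hinj := Finset.card_image_iff.1 (heq.trans (Finset.card_fin k).symm)
  intro i j hij
  exact hinj (Finset.mem_coe.2 (Finset.mem_univ i)) (Finset.mem_coe.2 (Finset.mem_univ j))
    (congrArg (Int.cast : ℤ → ZMod p) hij)

lemma nuP_eq_of_forall_not_dvd {k : ℕ} {v : Fin k → ℤ} {p : ℕ}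
    (hv : ∀ i j, i ≠ j → ¬ (p : ℤ) ∣ v i - v j) : nuP v p = k := by
  rw [nuP, Finset.card_image_of_injective, Finset.card_fin]
  intro i j hij
  by_contra hne
  refine hv i j hne ((ZMod.intCast_zmod_eq_zero_iff_dvd _ _).1 ?_)
  push_cast
  exact sub_eq_zero.2 hij

/-- The local factor of the singular series at `p`. -/
noncomputable def singFactor {k : ℕ} (v : Fin k → ℤ) (p : ℕ) : ℝ :=
  (1 - (nuP v p : ℝ) / p) * ((1 - 1 / (p : ℝ))⁻¹) ^ k

lemma singSeries_eq_tprod_singFactor {k : ℕ} (v : Fin k → ℤ) :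
    singSeries v = ∏' p : Nat.Primes, singFactor v p := by
  simp only [singSeries, singFactor, zpow_neg, zpow_natCast, inv_pow]

lemma singFactor_nonneg {k : ℕ} (v : Fin k → ℤ) (p : Nat.Primes) : 0 ≤ singFactor v p := by
  have hp : (0 : ℝ) < (p : ℕ) := by exact_mod_cast p.2.pos
  refine mul_nonneg (sub_nonneg.2 ((div_le_one hp).2 (by exact_mod_cast nuP_le_prime v p)))
    (pow_nonneg (zero_le_one.trans (one_le_inv_one_sub_one_div p.2.two_le)) k)

lemma singFactor_le {k : ℕ} (v : Fin k → ℤ) (p : Nat.Primes) :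
    singFactor v p ≤ ((1 - 1 / ((p : ℕ) : ℝ))⁻¹) ^ k := by
  refine mul_le_of_le_one_left
    (pow_nonneg (zero_le_one.trans (one_le_inv_one_sub_one_div p.2.two_le)) k) ?_
  have : 0 ≤ (nuP v p : ℝ) / (p : ℕ) := by positivity
  linarith

lemma singFactor_le_one {k : ℕ} {v : Fin k → ℤ} {p : Nat.Primes} (hv : nuP v p = k) :
    singFactor v p ≤ 1 := by
  have hp : (2 : ℝ) ≤ (p : ℕ) := by exact_mod_cast p.2.two_le
  have hp2 : 1 / ((p : ℕ) : ℝ) ≤ 1 / 2 := one_div_le_one_div_of_le (by norm_num) hp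
  rw [singFactor, hv, inv_pow, ← div_eq_mul_inv, div_le_one (pow_pos (by linarith) k)]
  have := one_add_mul_le_pow (a := -(1 / ((p : ℕ) : ℝ))) (by linarith) k
  calc 1 - (k : ℝ) / (p : ℕ) = 1 + k * -(1 / ((p : ℕ) : ℝ)) := by ring
    _ ≤ _ := this
    _ = _ := by rw [← sub_eq_add_neg]

lemma one_add_le_singFactor {k : ℕ} {v : Fin k → ℤ} {p : Nat.Primes} (hv : nuP v p < k)
    (hp : 2 * k ^ 2 ≤ (p : ℕ)) : 1 + 1 / 2 * (1 / ((p : ℕ) : ℝ)) ≤ singFactor v p := by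
  have hp2 : (2 : ℝ) ≤ (p : ℕ) := by exact_mod_cast p.2.two_le
  have hpk : 2 * (k : ℝ) ^ 2 ≤ (p : ℕ) := by exact_mod_cast hp
  set x : ℝ := 1 / ((p : ℕ) : ℝ) with hx
  have hx0 : 0 < x := by positivity
  have hx2 : x ≤ 1 / 2 := one_div_le_one_div_of_le (by norm_num) hp2
  have hk1 : (nuP v p : ℝ) + 1 ≤ k := by exact_mod_cast hv
  have hkx : 2 * (k : ℝ) ^ 2 * x ≤ 1 := by
    rw [hx, mul_one_div]; exact (div_le_one (by linarith)).2 hpk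
  have hk : (1 : ℝ) ≤ k := by linarith [(nuP v p).cast_nonneg (α := ℝ)]
  have hpow : 1 + k * x ≤ ((1 - x)⁻¹) ^ k := by
    refine (one_add_mul_le_pow (by linarith) k).trans (pow_le_pow_left₀ (by linarith) ?_ k)
    rw [le_inv_comm₀ (by linarith) (by linarith), inv_eq_one_div, le_div_iff₀ (by linarith)]
    nlinarith
  have hfirst : 1 - ((k : ℝ) - 1) * x ≤ 1 - (nuP v p : ℝ) / (p : ℕ) := by
    have : (nuP v p : ℝ) / (p : ℕ) = nuP v p * x := by rw [hx]; ring
    rw [this]; nlinarith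
  have hfirst0 : 0 ≤ 1 - ((k : ℝ) - 1) * x := by nlinarith
  calc 1 + 1 / 2 * x ≤ (1 - ((k : ℝ) - 1) * x) * (1 + k * x) := by
        nlinarith [mul_le_mul_of_nonneg_right hkx hx0.le,
          mul_nonneg (by linarith : (0 : ℝ) ≤ k) (mul_self_nonneg x)]
    _ ≤ (1 - (nuP v p : ℝ) / (p : ℕ)) * ((1 - x)⁻¹) ^ k :=
        mul_le_mul hfirst hpow (by positivity) (hfirst0.trans hfirst)

lemma singSeries_le_one_of_not_injective {k : ℕ} {v : Fin k → ℤ}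
    (hv : ¬ Function.Injective v) : singSeries v ≤ 1 := by
  rw [singSeries_eq_tprod_singFactor]
  by_cases hmul : Multipliable fun p : Nat.Primes => singFactor v p
  swap
  · rw [tprod_eq_one_of_not_multipliable hmul]
  by_cases hzero : ∃ p : Nat.Primes, singFactor v p = 0
  · rw [tprod_of_exists_eq_zero hzero]
    exact zero_le_one
  push Not at hzero
  have hfin : {p : Nat.Primes | (p : ℕ) < 2 * k ^ 2}.Finite :=
    (Set.finite_Iio (2 * k ^ 2)).preimage Subtype.val_injective.injOn
  have hsum := hmul.summable_of_one_add_le (g := fun p : Nat.Primes => 1 / 2 * (1 / ((p : ℕ) : ℝ)))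
    (fun p => (singFactor_nonneg v p).lt_of_ne' (hzero p)) (fun p => by positivity) hfin
    fun p hp => one_add_le_singFactor (nuP_lt_of_not_injective hv p) (not_lt.1 hp)
  exact absurd ((summable_mul_left_iff (by norm_num)).1 hsum) Nat.Primes.not_summable_one_div

lemma singSeries_le_primeWeight_pow {k : ℕ} (v : Fin k → ℤ) :
    singSeries v ≤
      primeWeight (∏ x ∈ (Finset.univ : Finset (Fin k)).offDiag, (v x.1 - v x.2).natAbs) ^ k := by
  set D := ∏ x ∈ (Finset.univ : Finset (Fin k)).offDiag, (v x.1 - v x.2).natAbs with hD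
  have hD1 : 1 ≤ primeWeight D ^ k := one_le_pow₀ (one_le_primeWeight D)
  by_cases hv : Function.Injective v
  swap
  · exact (singSeries_le_one_of_not_injective hv).trans hD1
  have hD0 : D ≠ 0 := by
    refine Finset.prod_ne_zero_iff.2 fun x hx => ?_
    rw [Int.natAbs_ne_zero, sub_ne_zero]
    exact hv.ne (Finset.mem_offDiag.1 hx).2.2
  rw [singSeries_eq_tprod_singFactor]
  by_cases hmul : Multipliable fun p : Nat.Primes => singFactor v p
  swap
  · rwa [tprod_eq_one_of_not_multipliable hmul]
  refine le_of_tendsto' hmul.hasProd fun s => ?_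
  set T := s.filter fun p : Nat.Primes => (p : ℕ) ∣ D
  calc ∏ p ∈ s, singFactor v p
      ≤ ∏ p ∈ s, if (p : ℕ) ∣ D then ((1 - 1 / ((p : ℕ) : ℝ))⁻¹) ^ k else 1 := by
        refine Finset.prod_le_prod (fun p _ => singFactor_nonneg v p) fun p _ => ?_
        split_ifs with hpD
        · exact singFactor_le v p
        · refine singFactor_le_one (nuP_eq_of_forall_not_dvd fun i j hij hdvd => hpD ?_)
          have hmem : (i, j) ∈ (Finset.univ : Finset (Fin k)).offDiag :=
            Finset.mem_offDiag.2 ⟨Finset.mem_univ i, Finset.mem_univ j, hij⟩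
          exact (Int.natCast_dvd.1 hdvd).trans
            (Finset.dvd_prod_of_mem (fun x => (v x.1 - v x.2).natAbs) hmem)
    _ = ∏ p ∈ T.image fun q : Nat.Primes => (q : ℕ), ((1 - 1 / (p : ℝ))⁻¹) ^ k := by
        rw [← Finset.prod_filter]
        exact (Finset.prod_image (f := fun p : ℕ => ((1 - 1 / (p : ℝ))⁻¹) ^ k)
          Nat.Primes.coe_nat_injective.injOn).symm
    _ ≤ ∏ p ∈ D.primeFactors, ((1 - 1 / (p : ℝ))⁻¹) ^ k := by
        refine Finset.prod_le_prod_of_subset_of_one_le ?_ ?_ ?_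
        · intro p hp
          obtain ⟨q, hq, rfl⟩ := Finset.mem_image.1 hp
          exact Nat.mem_primeFactors.2 ⟨q.2, (Finset.mem_filter.1 hq).2, hD0⟩
        · intro p hp
          obtain ⟨q, -, rfl⟩ := Finset.mem_image.1 hp
          exact pow_nonneg (zero_le_one.trans (one_le_inv_one_sub_one_div q.2.two_le)) k
        · intro p hp _
          exact one_le_pow₀ (one_le_inv_one_sub_one_div (Nat.prime_of_mem_primeFactors hp).two_le)
    _ = primeWeight D ^ k := by rw [Finset.prod_pow, primeWeight]

/-- Integer affine forms in `m` variables, as pairs of a constant term and the linear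
coefficients, all bounded by `C` in absolute value. -/
noncomputable def boundedForms (m C : ℕ) : Finset (ℤ × (Fin m → ℤ)) :=
  Finset.Icc (-(C : ℤ)) C ×ˢ Fintype.piFinset fun _ => Finset.Icc (-(C : ℤ)) C

lemma singSeries_affine_le_sum {k m A : ℕ} (h : Fin m → ℤ) (c : Fin k → ℤ)
    (M : Fin m → Fin k → ℤ) (hc : ∀ j, |c j| ≤ (A : ℤ)) (hM : ∀ i j, |M i j| ≤ (A : ℤ)) :
    singSeries (fun j => c j + ∑ i, M i j * h i) ≤
      ∑ L ∈ boundedForms m (2 * A), primeWeight (L.1 + ∑ i, L.2 i * h i).natAbs ^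
        ((Finset.univ : Finset (Fin k)).offDiag.card * k) := by
  set w : ℤ × (Fin m → ℤ) → ℝ := fun L => primeWeight (L.1 + ∑ i, L.2 i * h i).natAbs with hw
  have hw0 : ∀ L, 0 ≤ w L := fun L => zero_le_one.trans (one_le_primeWeight _)
  have hne : (boundedForms m (2 * A)).Nonempty := by
    refine ⟨(0, 0), Finset.mem_product.2 ⟨?_, Fintype.mem_piFinset.2 fun i => ?_⟩⟩ <;>
    · rw [Finset.mem_Icc]
      simp
  obtain ⟨L₀, hL₀, hmax⟩ := Finset.exists_max_image _ w hne
  calc singSeries (fun j => c j + ∑ i, M i j * h i)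
      ≤ _ := singSeries_le_primeWeight_pow _
    _ ≤ (∏ x ∈ (Finset.univ : Finset (Fin k)).offDiag, w L₀) ^ k := by
        refine pow_le_pow_left₀ (zero_le_one.trans (one_le_primeWeight _)) ?_ k
        refine (primeWeight_prod_le _ _).trans (Finset.prod_le_prod
          (fun x _ => zero_le_one.trans (one_le_primeWeight _)) fun x _ => ?_)
        have hmem : (c x.1 - c x.2, fun i => M i x.1 - M i x.2) ∈ boundedForms m (2 * A) := by
          refine Finset.mem_product.2 ⟨?_, Fintype.mem_piFinset.2 fun i => ?_⟩ <;>
            rw [Finset.mem_Icc] <;> push_cast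
          · have h₁ := abs_le.1 (hc x.1)
            have h₂ := abs_le.1 (hc x.2)
            constructor <;> linarith
          · have h₁ := abs_le.1 (hM i x.1)
            have h₂ := abs_le.1 (hM i x.2)
            constructor <;> linarith
        refine le_trans (le_of_eq ?_) (hmax _ hmem)
        simp only [hw, sub_mul, Finset.sum_sub_distrib]
        congr 2
        ring
    _ = w L₀ ^ ((Finset.univ : Finset (Fin k)).offDiag.card * k) := by
        rw [Finset.prod_const, ← pow_mul]
    _ ≤ _ := Finset.single_le_sum
        (f := fun L => w L ^ ((Finset.univ : Finset (Fin k)).offDiag.card * k))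
        (fun L _ => pow_nonneg (hw0 L) _) hL₀

/-- **Corollary 2.6.** For fixed `k ≥ m ≥ 1` and `A ≥ 1`,
`∑_{h ∈ ([0,H]∩ℤ)^m} sup_{L₁,…,L_k} 𝔖({L₁(h),…,L_k(h)}) ≪_{k,A} H^m`, the
supremum ranging over affine-linear forms `L_j(h₁,…,h_m) = a_j + ∑_i a_{i,j}h_i`
with integer coefficients bounded by `A` in absolute value. -/
theorem singSeries_affine_forms_average (k m A : ℕ) (hm : 1 ≤ m) (hkm : m ≤ k)
    (hA : 1 ≤ A) :
    ∃ K : ℝ, 0 < K ∧ ∀ H : ℝ, 1 ≤ H →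
      ∑ h ∈ Fintype.piFinset (fun _ : Fin m => Finset.Icc (0 : ℤ) ⌊H⌋),
        sSup {S : ℝ | ∃ (c : Fin k → ℤ) (M : Fin m → Fin k → ℤ),
          (∀ j, |c j| ≤ (A : ℤ)) ∧ (∀ i j, |M i j| ≤ (A : ℤ)) ∧
          S = singSeries (fun j => c j + ∑ i, M i j * h i)}
      ≤ K * H ^ m := by
  set B := (Finset.univ : Finset (Fin k)).offDiag.card * k
  choose K hK hbound using fun L : ℤ × (Fin m → ℤ) =>
    exists_sum_primeWeight_affine_pow_le m B L.1 L.2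
  have hK0 : 0 ≤ ∑ L ∈ boundedForms m (2 * A), K L := Finset.sum_nonneg fun L _ => (hK L).le
  refine ⟨∑ L ∈ boundedForms m (2 * A), K L + 1, by linarith, fun H hH => ?_⟩
  obtain ⟨N, hN⟩ : ∃ N : ℕ, (N : ℤ) = ⌊H⌋ :=
    Int.eq_ofNat_of_zero_le (Int.floor_nonneg.2 (by linarith)) |>.imp fun _ h => h.symm
  have hN1 : 1 ≤ N := by
    have : (1 : ℤ) ≤ ⌊H⌋ := Int.le_floor.2 (by exact_mod_cast hH)
    omega
  have hNH : (N : ℝ) ≤ H := by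
    have := Int.floor_le H
    rw [← hN] at this
    exact_mod_cast this
  rw [← hN]
  calc _ ≤ ∑ h ∈ Fintype.piFinset (fun _ : Fin m => Finset.Icc (0 : ℤ) N),
        ∑ L ∈ boundedForms m (2 * A), primeWeight (L.1 + ∑ i, L.2 i * h i).natAbs ^ B := by
        refine Finset.sum_le_sum fun h _ => Real.sSup_le ?_ (Finset.sum_nonneg fun L _ =>
          pow_nonneg (zero_le_one.trans (one_le_primeWeight _)) _)
        rintro S ⟨c, M, hc, hM, rfl⟩
        exact singSeries_affine_le_sum h c M hc hM
    _ ≤ ∑ L ∈ boundedForms m (2 * A), K L * (N : ℝ) ^ m := by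
        rw [Finset.sum_comm]
        exact Finset.sum_le_sum fun L _ => hbound L N hN1
    _ = (∑ L ∈ boundedForms m (2 * A), K L) * (N : ℝ) ^ m := by rw [Finset.sum_mul]
    _ ≤ _ := mul_le_mul (by linarith) (pow_le_pow_left₀ (Nat.cast_nonneg N) hNH m)
        (by positivity) (by linarith)
end

section
/- Let ℓ ≥ 1 and k ≥ 2 be fixed, and let a_1,…,a_ℓ be distinct fixed integers. For X ≥ H ≥ 2 and any function g with |g(n)| ≤ 1 for all n, define M_{2k} = ∫_0^X ∫_0^1 | Σ_{x≤n≤x+H} g(n) e(αn) Π_{j=1}^ℓ Λ(n+a_j) |^{2k} dα dx. Then M_{2k} ≪ X·( H^{2k−1} + H^k (log X)^{kℓ} + H (log X)^{(2k−1)ℓ} ), with implied constant depending only on k, ℓ and the a_j. In particular, if H ≥ (log X)^{ℓk/(k−1)} then M_{2k} ≪ X·H^{2k−1}. -/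
open ArithmeticFunction Finset

/-- `e(θ) = e^{2πiθ}`. -/
noncomputable def eTwoPi (θ : ℝ) : ℂ := Complex.exp (2 * Real.pi * Complex.I * θ)

/-! ### Sums of periodic functions -/

theorem sum_range_mul_of_periodic {F : ℕ → ℝ} {q : ℕ} (hF : Function.Periodic F q) (a : ℕ) :
    ∑ n ∈ range (q * a), F n = a * ∑ n ∈ range q, F n := by
  induction a with
  | zero => simp
  | succ a ih =>
    rw [Nat.mul_succ, sum_range_add, ih]
    have : ∀ x, F (q * a + x) = F x := fun x => by
      rw [mul_comm, add_comm]; exact hF.nat_mul a x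
    simp only [this]
    push_cast; ring

theorem sum_range_of_periodic {F : ℕ → ℝ} {q : ℕ} (hF : Function.Periodic F q) (N : ℕ) :
    ∑ n ∈ range N, F n = (N / q : ℕ) * ∑ n ∈ range q, F n + ∑ n ∈ range (N % q), F n := by
  conv_lhs => rw [← Nat.div_add_mod N q]
  rw [sum_range_add, sum_range_mul_of_periodic hF]
  congr 1
  refine sum_congr rfl fun x _ => ?_
  rw [mul_comm, add_comm]; exact hF.nat_mul (N / q) x

theorem abs_sum_range_le_of_periodic {F : ℕ → ℝ} {q : ℕ} (hq : 0 < q) (hF : Function.Periodic F q)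
    (h0 : ∑ n ∈ range q, F n = 0) {C : ℝ} (hC : ∀ n, |F n| ≤ C) (N : ℕ) :
    |∑ n ∈ range N, F n| ≤ q * C := by
  rw [sum_range_of_periodic hF, h0, mul_zero, zero_add]
  have hC0 : 0 ≤ C := (abs_nonneg _).trans (hC 0)
  calc _ ≤ ∑ n ∈ range (N % q), |F n| := abs_sum_le_sum_abs _ _
    _ ≤ ∑ n ∈ range (N % q), C := sum_le_sum fun n _ => hC n
    _ = (N % q : ℕ) * C := by simp
    _ ≤ q * C := by
      gcongr
      exact (Nat.mod_lt _ hq).le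

theorem sum_range_le_of_periodic {F : ℕ → ℝ} {q : ℕ} (hq : 0 < q) (hF : Function.Periodic F q)
    (h0 : ∀ n, 0 ≤ F n) (N : ℕ) :
    ∑ n ∈ range N, F n ≤ ((N : ℝ) / q + 1) * ∑ n ∈ range q, F n := by
  rw [sum_range_of_periodic hF, add_mul, one_mul]
  have hs : 0 ≤ ∑ n ∈ range q, F n := sum_nonneg fun n _ => h0 n
  gcongr
  · exact Nat.cast_div_le
  · exact fun i _ _ => h0 i
  · exact (Nat.mod_lt _ hq).le

theorem sum_range_mul_of_coprime {a b : ℕ} (ha : 0 < a) (hb : 0 < b) (hab : a.Coprime b)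
    {F G : ℕ → ℝ} (hF : Function.Periodic F a) (hG : Function.Periodic G b) :
    ∑ n ∈ range (a * b), F n * G n = (∑ n ∈ range a, F n) * ∑ n ∈ range b, G n := by
  rw [sum_mul_sum, ← sum_product']
  refine sum_bij (fun n _ => (n % a, n % b)) ?_ ?_ ?_ ?_
  · intro n _
    simp [Nat.mod_lt, ha, hb]
  · intro m hm n hn h
    simp only [Prod.mk.injEq] at h
    have : m ≡ n [MOD a * b] := (Nat.modEq_and_modEq_iff_modEq_mul hab).1 h
    exact this.eq_of_lt_of_lt (mem_range.1 hm) (mem_range.1 hn)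
  · rintro ⟨x, y⟩ hxy
    simp only [mem_product, mem_range] at hxy
    obtain ⟨k, hk1, hk2⟩ := Nat.chineseRemainder hab x y
    refine ⟨k % (a * b), mem_range.2 (Nat.mod_lt _ (by positivity)), ?_⟩
    simp only [Nat.mod_mul_right_mod, Nat.mod_mul_left_mod, Prod.mk.injEq]
    exact ⟨Eq.trans hk1 (Nat.mod_eq_of_lt hxy.1), Eq.trans hk2 (Nat.mod_eq_of_lt hxy.2)⟩
  · intro n _
    simp only
    rw [hF.map_mod_nat, hG.map_mod_nat]

theorem periodic_prod {T : Finset ℕ} {F : ℕ → ℕ → ℝ} (hF : ∀ p ∈ T, Function.Periodic (F p) p) :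
    Function.Periodic (fun n => ∏ p ∈ T, F p n) (∏ p ∈ T, p) := by
  intro n
  refine prod_congr rfl fun p hp => ?_
  obtain ⟨c, hc⟩ := dvd_prod_of_mem (fun p => p) hp
  rw [hc, mul_comm p c]
  exact (hF p hp).nat_mul c n

theorem sum_range_prod_of_primes {T : Finset ℕ} (hT : ∀ p ∈ T, p.Prime) {F : ℕ → ℕ → ℝ}
    (hF : ∀ p ∈ T, Function.Periodic (F p) p) :
    ∑ n ∈ range (∏ p ∈ T, p), ∏ p ∈ T, F p n = ∏ p ∈ T, ∑ n ∈ range p, F p n := by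
  induction T using Finset.induction_on with
  | empty => simp
  | insert p T hp ih =>
    rw [prod_insert hp, prod_insert hp, ← ih (fun q hq => hT q (mem_insert_of_mem hq))
      (fun q hq => hF q (mem_insert_of_mem hq))]
    rw [← sum_range_mul_of_coprime (hT p (mem_insert_self _ _)).pos
      (prod_pos fun q hq => (hT q (mem_insert_of_mem hq)).pos) ?_ (hF p (mem_insert_self _ _))
      (periodic_prod fun q hq => hF q (mem_insert_of_mem hq))]
    · exact sum_congr rfl fun n _ => prod_insert hp
    · refine Nat.Coprime.prod_right fun q hq => ?_
      refine (Nat.coprime_primes (hT p (mem_insert_self _ _)) (hT q (mem_insert_of_mem hq))).2 ?_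
      rintro rfl
      exact hp hq

/-! ### An orthogonality form of Selberg's upper bound sieve -/

set_option maxHeartbeats 1000000 in
/-- A set of integers below `N` avoiding `r` residue classes modulo each prime of `P` is small. -/
theorem card_mul_sum_le_of_sifted {P : Finset ℕ} (hP : ∀ p ∈ P, p.Prime) {r : ℕ} (hr : 1 ≤ r)
    (hrP : ∀ p ∈ P, r < p) (bad : ℕ → ℕ → Prop) [∀ p n, Decidable (bad p n)]
    (hper : ∀ p ∈ P, ∀ n, bad p (n + p) ↔ bad p n)
    (hcard : ∀ p ∈ P, #{n ∈ range p | bad p n} = r) {D N : ℕ} (hD : 1 ≤ D) {Z : Finset ℕ}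
    (hZ : Z ⊆ range N) (hZbad : ∀ n ∈ Z, ∀ p ∈ P, ¬ bad p n) :
    (#Z : ℝ) * ∑ T ∈ P.powerset with ∏ p ∈ T, p ≤ D, ∏ p ∈ T, (r : ℝ) / ((p : ℝ) - r)
      ≤ N + 2 * (D : ℝ) ^ 6 := by
  set 𝒯 := P.powerset.filter (fun T => ∏ p ∈ T, p ≤ D) with h𝒯
  set g : ℕ → ℝ := fun p => (r : ℝ) / ((p : ℝ) - r) with hg
  set S := ∑ T ∈ 𝒯, ∏ p ∈ T, g p with hS
  set f : ℕ → ℕ → ℝ := fun p n => if bad p n then -1 else g p with hf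
  have hsub : ∀ T ∈ 𝒯, T ⊆ P := fun T hT => mem_powerset.1 (mem_filter.1 hT).1
  have hle : ∀ T ∈ 𝒯, ∏ p ∈ T, p ≤ D := fun T hT => (mem_filter.1 hT).2
  have hr' : (1 : ℝ) ≤ r := by exact_mod_cast hr
  have hrp : ∀ p ∈ P, (1 : ℝ) ≤ (p : ℝ) - r := fun p hp => by
    have : r + 1 ≤ p := hrP p hp
    have : (r : ℝ) + 1 ≤ p := by exact_mod_cast this
    linarith
  have hg0 : ∀ p ∈ P, 0 ≤ g p := fun p hp => by
    have := hrp p hp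
    simp only [hg]; positivity
  have hgr : ∀ p ∈ P, g p ≤ r := fun p hp => div_le_self (by positivity) (hrp p hp)
  have hfper : ∀ p ∈ P, Function.Periodic (f p) p := fun p hp n => by
    simp only [hf, hper p hp n]
  have hfabs : ∀ p ∈ P, ∀ n, |f p n| ≤ p := fun p hp n => by
    have := hrp p hp
    simp only [hf]
    split_ifs
    · rw [abs_neg, abs_one]; linarith
    · rw [abs_of_nonneg (hg0 p hp)]; linarith [hgr p hp]
  have hfsum : ∀ p ∈ P, ∑ n ∈ range p, f p n = 0 := fun p hp => by
    have h1 := hrp p hp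
    have h2 := card_filter_add_card_filter_not (s := range p) (fun n => bad p n)
    rw [hcard p hp, card_range] at h2
    have h3 : (#{n ∈ range p | ¬ bad p n} : ℝ) = p - r := by
      have : ((r + #{n ∈ range p | ¬ bad p n} : ℕ) : ℝ) = p := by rw [h2]
      push_cast at this
      linarith
    simp only [hf, sum_ite, sum_const, hcard p hp, nsmul_eq_mul, h3, hg]
    field_simp
    ring
  have hfsq : ∀ p ∈ P, ∑ n ∈ range p, f p n * f p n = p * g p := fun p hp => by
    have h1 := hrp p hp
    have h2 := card_filter_add_card_filter_not (s := range p) (fun n => bad p n)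
    rw [hcard p hp, card_range] at h2
    have h3 : (#{n ∈ range p | ¬ bad p n} : ℝ) = p - r := by
      have : ((r + #{n ∈ range p | ¬ bad p n} : ℕ) : ℝ) = p := by rw [h2]
      push_cast at this
      linarith
    simp only [hf, mul_ite, ite_mul]
    have : ∀ n, (if bad p n then if bad p n then (-1 : ℝ) * -1 else g p * -1
        else if bad p n then -1 * g p else g p * g p) = if bad p n then 1 else g p * g p := by
      intro n; split_ifs <;> ring
    simp only [this]
    simp only [sum_ite, sum_const, hcard p hp, nsmul_eq_mul, h3, hg]
    field_simp
    ring
  have hprodabs : ∀ T ∈ 𝒯, ∀ n, |∏ p ∈ T, f p n| ≤ D := fun T hT n => by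
    rw [abs_prod]
    calc _ ≤ ∏ p ∈ T, (p : ℝ) :=
          prod_le_prod (fun p _ => abs_nonneg _) fun p hp => hfabs p (hsub T hT hp) n
      _ = ((∏ p ∈ T, p : ℕ) : ℝ) := by push_cast; rfl
      _ ≤ D := by exact_mod_cast hle T hT
  -- the off-diagonal terms
  have hoff : ∀ T ∈ 𝒯, ∀ T' ∈ 𝒯, T ≠ T' →
      ∑ n ∈ range N, (∏ p ∈ T, f p n) * ∏ p ∈ T', f p n ≤ (D : ℝ) ^ 4 := by
    intro T hT T' hT' hne
    set F : ℕ → ℕ → ℝ := fun p n =>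
      (if p ∈ T then f p n else 1) * (if p ∈ T' then f p n else 1) with hF
    have hU : T ∪ T' ⊆ P := union_subset (hsub T hT) (hsub T' hT')
    have hFper : ∀ p ∈ T ∪ T', Function.Periodic (F p) p := fun p hp n => by
      simp only [hF, hfper p (hU hp) n]
    have hFprod : ∀ n, ∏ p ∈ T ∪ T', F p n = (∏ p ∈ T, f p n) * ∏ p ∈ T', f p n := fun n => by
      simp only [hF, prod_mul_distrib, prod_ite_mem, union_inter_cancel_left,
        union_inter_cancel_right]
    have hzero : ∑ n ∈ range (∏ p ∈ T ∪ T', p), ∏ p ∈ T ∪ T', F p n = 0 := by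
      rw [sum_range_prod_of_primes (fun p hp => hP p (hU hp)) hFper]
      obtain ⟨p, hp⟩ : ∃ p, ¬ (p ∈ T ↔ p ∈ T') := by
        by_contra! h
        exact hne (Finset.ext h)
      have hpU : p ∈ T ∪ T' := by rw [mem_union]; tauto
      refine prod_eq_zero hpU ?_
      rw [← hfsum p (hU hpU)]
      refine sum_congr rfl fun n _ => ?_
      simp only [hF]
      by_cases h1 : p ∈ T <;> by_cases h2 : p ∈ T'
      · exact absurd (iff_of_true h1 h2) hp
      · rw [if_pos h1, if_neg h2, mul_one]
      · rw [if_neg h1, if_pos h2, one_mul]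
      · exact absurd (iff_of_false h1 h2) hp
    have hpos : 0 < ∏ p ∈ T ∪ T', p := prod_pos fun p hp => (hP p (hU hp)).pos
    have hqle : ((∏ p ∈ T ∪ T', p : ℕ) : ℝ) ≤ (D : ℝ) * D := by
      have h1 : ∏ p ∈ T ∪ T', p ≤ (∏ p ∈ T, p) * ∏ p ∈ T', p := by
        rw [← prod_union_inter]
        exact Nat.le_mul_of_pos_right _
          (prod_pos fun p hp => (hP p (hU (inter_subset_left.trans subset_union_left hp))).pos)
      exact_mod_cast h1.trans (Nat.mul_le_mul (hle T hT) (hle T' hT'))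
    have key := abs_sum_range_le_of_periodic hpos (periodic_prod hFper) hzero
      (C := (D : ℝ) * D) (fun n => by
        rw [hFprod, abs_mul]
        exact mul_le_mul (hprodabs T hT n) (hprodabs T' hT' n) (abs_nonneg _) (by positivity)) N
    simp only [hFprod] at key
    refine (le_abs_self _).trans (key.trans ?_)
    calc _ ≤ ((D : ℝ) * D) * (D * D) := by gcongr
      _ = _ := by ring
  have hdiag : ∀ T ∈ 𝒯, ∑ n ∈ range N, (∏ p ∈ T, f p n) * ∏ p ∈ T, f p n
      ≤ (N + D) * ∏ p ∈ T, g p := by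
    intro T hT
    have hFper : ∀ p ∈ T, Function.Periodic (fun n => f p n * f p n) p := fun p hp n => by
      simp only [hfper p (hsub T hT hp) n]
    have hpos : 0 < ∏ p ∈ T, p := prod_pos fun p hp => (hP p (hsub T hT hp)).pos
    have key := sum_range_le_of_periodic hpos (periodic_prod hFper)
      (fun n => prod_nonneg fun p _ => mul_self_nonneg _) N
    rw [sum_range_prod_of_primes (fun p hp => hP p (hsub T hT hp)) hFper,
      prod_congr rfl fun p hp => hfsq p (hsub T hT hp)] at key
    simp only [prod_mul_distrib] at key
    refine key.trans ?_
    have hpos' : (0 : ℝ) < ∏ p ∈ T, (p : ℝ) := by rw [← Nat.cast_prod]; exact_mod_cast hpos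
    have hle' : ∏ p ∈ T, (p : ℝ) ≤ D := by rw [← Nat.cast_prod]; exact_mod_cast hle T hT
    have hg' : 0 ≤ ∏ p ∈ T, g p := prod_nonneg fun p hp => hg0 p (hsub T hT hp)
    push_cast
    calc _ = (N + ∏ p ∈ T, (p : ℝ)) * ∏ p ∈ T, g p := by field_simp
      _ ≤ _ := by gcongr
  have hcardT : (#𝒯 : ℝ) ≤ D := by
    have : #𝒯 ≤ #(Icc 1 D) := by
      refine card_le_card_of_injOn (fun T => ∏ p ∈ T, p) ?_ ?_
      · intro T hT
        simp only [coe_Icc, Set.mem_Icc]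
        exact ⟨prod_pos fun p hp => (hP p (hsub T hT hp)).pos, hle T hT⟩
      · intro T hT T' hT' h
        simp only at h
        have h1 := Nat.primeFactors_prod (fun p hp => hP p (hsub T hT hp))
        have h2 := Nat.primeFactors_prod (fun p hp => hP p (hsub T' hT' hp))
        rw [← h1, ← h2, h]
    rw [Nat.card_Icc, Nat.add_sub_cancel] at this
    exact_mod_cast this
  have hS1 : 1 ≤ S := by
    have : ∅ ∈ 𝒯 := by simp [h𝒯, hD]
    have h := single_le_sum (f := fun T => ∏ p ∈ T, g p)
      (fun T hT => prod_nonneg fun p hp => hg0 p (hsub T hT hp)) this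
    simpa using h
  have hlower : (#Z : ℝ) * S ^ 2 ≤ ∑ n ∈ range N, (∑ T ∈ 𝒯, ∏ p ∈ T, f p n) ^ 2 := by
    calc (#Z : ℝ) * S ^ 2 = ∑ n ∈ Z, (∑ T ∈ 𝒯, ∏ p ∈ T, f p n) ^ 2 := by
          rw [← nsmul_eq_mul, ← sum_const]
          refine sum_congr rfl fun n hn => ?_
          congr 1
          refine sum_congr rfl fun T hT => prod_congr rfl fun p hp => ?_
          simp only [hf, if_neg (hZbad n hn p (hsub T hT hp))]
      _ ≤ _ := sum_le_sum_of_subset_of_nonneg hZ fun n _ _ => sq_nonneg _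
  have hupper : ∑ n ∈ range N, (∑ T ∈ 𝒯, ∏ p ∈ T, f p n) ^ 2
      ≤ (N + D) * S + (D : ℝ) ^ 6 := by
    calc _ = ∑ T ∈ 𝒯, ∑ T' ∈ 𝒯, ∑ n ∈ range N, (∏ p ∈ T, f p n) * ∏ p ∈ T', f p n := by
          simp only [sq, sum_mul_sum]
          rw [sum_comm]
          refine sum_congr rfl fun T _ => ?_
          rw [sum_comm]
      _ ≤ ∑ T ∈ 𝒯, ∑ T' ∈ 𝒯, ((if T = T' then (N + D) * ∏ p ∈ T, g p else 0) + (D : ℝ) ^ 4) := by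
          refine sum_le_sum fun T hT => sum_le_sum fun T' hT' => ?_
          split_ifs with h
          · subst h
            have := hdiag T hT
            have : (0 : ℝ) ≤ (D : ℝ) ^ 4 := by positivity
            linarith
          · rw [zero_add]; exact hoff T hT T' hT' h
      _ = (N + D) * S + #𝒯 * (#𝒯 * (D : ℝ) ^ 4) := by
          simp only [sum_add_distrib, sum_const, nsmul_eq_mul, sum_ite_eq, hS, mul_sum]
          congr 1
          exact sum_congr rfl fun T hT => if_pos hT
      _ ≤ (N + D) * S + D * (D * (D : ℝ) ^ 4) := by gcongr
      _ = _ := by ring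
  have hD1 : (1 : ℝ) ≤ D := by exact_mod_cast hD
  have hD6 : (D : ℝ) ≤ (D : ℝ) ^ 6 := le_self_pow₀ hD1 (by norm_num)
  have : (#Z : ℝ) * S * S ≤ (N + 2 * (D : ℝ) ^ 6) * S := by
    nlinarith [hlower, hupper, mul_nonneg (sub_nonneg.2 hS1) (pow_nonneg (zero_le_one.trans hD1) 6),
      mul_le_mul_of_nonneg_right hD6 (zero_le_one.trans hS1)]
  exact le_of_mul_le_mul_right this (by linarith)

/-! ### Lower bounds for the sieve density -/

theorem sum_Icc_one_pow_le {x : ℝ} (hx : 1 < x) (z : ℕ) :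
    ∑ e ∈ Icc 1 z, (x⁻¹) ^ e ≤ 1 / (x - 1) := by
  have h : ∀ z : ℕ, ∑ e ∈ Icc 1 z, (x⁻¹) ^ e = (1 - (x⁻¹) ^ z) / (x - 1) := by
    intro z
    have : x - 1 ≠ 0 := by linarith
    induction z with
    | zero => simp
    | succ z ih =>
      rw [sum_Icc_succ_top (by omega), ih]
      have hx0 : x * x⁻¹ = 1 := mul_inv_cancel₀ (by linarith)
      rw [div_add' _ _ _ this, pow_succ]
      congr 1
      linear_combination x⁻¹ ^ z * hx0
  rw [h]
  have : 0 < x - 1 := by linarith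
  have : 0 ≤ (x⁻¹) ^ z := by positivity
  gcongr
  linarith

/-- The sum of reciprocals of integers with a prescribed set of prime factors. -/
theorem sum_inv_le_of_primeFactors_eq {T : Finset ℕ} {z : ℕ} {E : Finset ℕ}
    (hp : ∀ p ∈ T, p.Prime) (hE : E ⊆ Icc 1 z) (hT : ∀ d ∈ E, d.primeFactors = T) :
    ∑ d ∈ E, (d : ℝ)⁻¹ ≤ ∏ p ∈ T, (1 / ((p : ℝ) - 1)) := by
  calc ∑ d ∈ E, (d : ℝ)⁻¹
      = ∑ d ∈ E, ∏ p ∈ T.attach, ((p : ℕ) : ℝ)⁻¹ ^ (d.factorization p) := by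
        refine sum_congr rfl fun d hd => ?_
        have hd0 : d ≠ 0 := by have := (mem_Icc.1 (hE hd)).1; omega
        conv_lhs => rw [← Nat.prod_factorization_pow_eq_self hd0,
          Nat.prod_factorization_eq_prod_primeFactors, hT d hd]
        rw [Finset.prod_attach T (fun p => (p : ℝ)⁻¹ ^ (d.factorization p))]
        push_cast
        rw [← prod_inv_distrib]
        simp
    _ ≤ ∑ x ∈ T.pi (fun _ => Icc 1 z), ∏ p ∈ T.attach, ((p : ℕ) : ℝ)⁻¹ ^ (x p p.2) := by
        rw [← sum_image (s := E) (g := fun d => (fun p (_ : p ∈ T) => d.factorization p))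
          (f := fun x => ∏ p ∈ T.attach, ((p : ℕ) : ℝ)⁻¹ ^ (x p p.2))]
        · refine sum_le_sum_of_subset_of_nonneg ?_ fun x _ _ => prod_nonneg fun p _ => by positivity
          intro x hx
          obtain ⟨d, hd, rfl⟩ := mem_image.1 hx
          have hdz := mem_Icc.1 (hE hd)
          refine mem_pi.2 fun p hpT => mem_Icc.2 ⟨?_, ?_⟩
          · rw [← hT d hd] at hpT
            exact (Nat.prime_of_mem_primeFactors hpT).factorization_pos_of_dvd (by omega)
              (Nat.dvd_of_mem_primeFactors hpT)
          · exact (Nat.factorization_lt p (by omega)).le.trans hdz.2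
        · intro d hd d' hd' h
          have hdz := mem_Icc.1 (hE hd)
          have hdz' := mem_Icc.1 (hE hd')
          refine Nat.eq_of_factorization_eq (by omega) (by omega) fun p => ?_
          by_cases hpT : p ∈ T
          · exact congrFun (congrFun h p) hpT
          · rw [Finsupp.notMem_support_iff.1 (by rwa [Nat.support_factorization, hT d hd]),
              Finsupp.notMem_support_iff.1 (by rwa [Nat.support_factorization, hT d' hd'])]
    _ = ∏ p ∈ T, ∑ e ∈ Icc 1 z, ((p : ℝ)⁻¹) ^ e := by rw [prod_sum]
    _ ≤ _ := by
        refine prod_le_prod (fun p _ => sum_nonneg fun e _ => by positivity) fun p hpT => ?_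
        exact sum_Icc_one_pow_le (by exact_mod_cast (hp p hpT).one_lt) z

theorem log_le_sum_prod_primes (z : ℕ) :
    Real.log (z + 1) ≤ ∑ T ∈ ((range (z + 1)).filter Nat.Prime).powerset with ∏ p ∈ T, p ≤ z,
      ∏ p ∈ T, (1 / ((p : ℝ) - 1)) := by
  have h1 : Real.log (z + 1) ≤ ∑ d ∈ Icc 1 z, (d : ℝ)⁻¹ := by
    have := log_add_one_le_harmonic z
    rw [harmonic_eq_sum_Icc] at this
    push_cast at this
    exact this
  refine h1.trans ?_
  rw [← sum_fiberwise_of_maps_to (s := Icc 1 z) (g := Nat.primeFactors)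
    (t := {T ∈ ((range (z + 1)).filter Nat.Prime).powerset | ∏ p ∈ T, p ≤ z})]
  · refine sum_le_sum fun T hT => sum_inv_le_of_primeFactors_eq (z := z)
      (fun p hp => (mem_filter.1 (mem_powerset.1 (mem_filter.1 hT).1 hp)).2) (filter_subset _ _) ?_
    exact fun d hd => (mem_filter.1 hd).2
  · intro d hd
    rw [mem_Icc] at hd
    have h0 : 0 < d := by omega
    refine mem_filter.2 ⟨mem_powerset.2 fun p hp => ?_, ?_⟩
    · have := Nat.le_of_mem_primeFactors hp
      exact mem_filter.2 ⟨mem_range.2 (by omega), Nat.prime_of_mem_primeFactors hp⟩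
    · exact (Nat.le_of_dvd h0 (Nat.prod_primeFactors_dvd d)).trans hd.2

theorem sum_union_eq_prod (T : Finset ℕ) (u v : ℕ → ℝ) :
    ∑ x ∈ T.powerset ×ˢ T.powerset with x.1 ∪ x.2 = T, (∏ p ∈ x.1, u p) * ∏ p ∈ x.2, v p
      = ∏ p ∈ T, (u p * (1 + v p) + v p) := by
  rw [prod_add, sum_filter, sum_product]
  refine sum_congr rfl fun A hA => ?_
  rw [mem_powerset] at hA
  rw [prod_mul_distrib, prod_one_add, mul_assoc, sum_mul, mul_sum, ← sum_filter]
  symm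
  refine sum_bij (fun R _ => R ∪ (T \ A)) ?_ ?_ ?_ ?_
  · intro R hR
    rw [mem_powerset] at hR
    refine mem_filter.2 ⟨mem_powerset.2 (union_subset (hR.trans hA) sdiff_subset), ?_⟩
    ext x
    have h1 := @hA x
    have h2 := @hR x
    simp only [mem_union, mem_sdiff]
    tauto
  · intro R hR R' hR' h
    rw [mem_powerset] at hR hR'
    ext x
    have h1 := @hR x
    have h2 := @hR' x
    have h3 := Finset.ext_iff.1 h x
    simp only [mem_union, mem_sdiff] at h3
    tauto
  · intro B hB
    rw [mem_filter, mem_powerset] at hB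
    refine ⟨B ∩ A, mem_powerset.2 inter_subset_right, ?_⟩
    ext x
    have h1 := @hB.1 x
    have h2 := Finset.ext_iff.1 hB.2 x
    simp only [mem_union, mem_sdiff, mem_inter] at *
    tauto
  · intro R hR
    rw [mem_powerset] at hR
    rw [prod_union]
    exact disjoint_of_subset_left hR disjoint_sdiff

theorem sum_mul_sum_le_sum_prod {P : Finset ℕ} {u v : ℕ → ℝ} (hu : ∀ p ∈ P, 0 ≤ u p)
    (hv : ∀ p ∈ P, 0 ≤ v p) (hP : ∀ p ∈ P, 0 < p) (y z : ℕ) :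
    (∑ T ∈ P.powerset with ∏ p ∈ T, p ≤ y, ∏ p ∈ T, u p) *
      (∑ T ∈ P.powerset with ∏ p ∈ T, p ≤ z, ∏ p ∈ T, v p)
      ≤ ∑ T ∈ P.powerset with ∏ p ∈ T, p ≤ y * z, ∏ p ∈ T, (u p * (1 + v p) + v p) := by
  rw [sum_mul_sum, ← sum_product']
  rw [← sum_fiberwise_of_maps_to (g := fun x : Finset ℕ × Finset ℕ => x.1 ∪ x.2)
    (t := {T ∈ P.powerset | ∏ p ∈ T, p ≤ y * z})]
  · refine sum_le_sum fun T hT => ?_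
    rw [mem_filter, mem_powerset] at hT
    rw [← sum_union_eq_prod]
    refine sum_le_sum_of_subset_of_nonneg ?_ ?_
    · rintro ⟨A, B⟩ hx
      simp only [mem_filter, mem_product, mem_powerset] at hx ⊢
      refine ⟨⟨?_, ?_⟩, hx.2⟩
      · rw [← hx.2]; exact subset_union_left
      · rw [← hx.2]; exact subset_union_right
    · rintro ⟨A, B⟩ hx _
      simp only [mem_filter, mem_product, mem_powerset] at hx
      exact mul_nonneg (prod_nonneg fun p hp => hu p (hT.1 (hx.1.1 hp)))
        (prod_nonneg fun p hp => hv p (hT.1 (hx.1.2 hp)))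
  · rintro ⟨A, B⟩ hx
    simp only [mem_filter, mem_product, mem_powerset] at hx ⊢
    refine ⟨union_subset hx.1.1 hx.2.1, ?_⟩
    have h1 : ∏ p ∈ A ∪ B, p ≤ (∏ p ∈ A, p) * ∏ p ∈ B, p := by
      rw [← prod_union_inter]
      exact Nat.le_mul_of_pos_right _
        (prod_pos fun p hp => hP p (hx.1.1 (inter_subset_left hp)))
    exact h1.trans (Nat.mul_le_mul hx.1.2 hx.2.2)

theorem sum_pow_le_sum_prod {P : Finset ℕ} {u : ℕ → ℝ} (hu : ∀ p ∈ P, 0 ≤ u p)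
    (hP : ∀ p ∈ P, 0 < p) (z r : ℕ) :
    (∑ T ∈ P.powerset with ∏ p ∈ T, p ≤ z, ∏ p ∈ T, u p) ^ r
      ≤ ∑ T ∈ P.powerset with ∏ p ∈ T, p ≤ z ^ r, ∏ p ∈ T, ((1 + u p) ^ r - 1) := by
  have hnn : ∀ z, 0 ≤ ∑ T ∈ P.powerset with ∏ p ∈ T, p ≤ z, ∏ p ∈ T, u p := fun z => by
    refine sum_nonneg fun T hT => prod_nonneg fun p hp => hu p ?_
    exact mem_powerset.1 (mem_filter.1 hT).1 hp
  induction r with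
  | zero =>
    have : ∅ ∈ P.powerset.filter (fun T => ∏ p ∈ T, p ≤ z ^ 0) := by simp
    have h := single_le_sum (f := fun T => ∏ p ∈ T, ((1 + u p) ^ 0 - 1))
      (fun T hT => prod_nonneg fun p hp => by simp) this
    simpa using h
  | succ r ih =>
    rw [pow_succ, pow_succ]
    refine (mul_le_mul_of_nonneg_right ih (hnn z)).trans ?_
    refine (sum_mul_sum_le_sum_prod (fun p hp => ?_) hu hP _ _).trans (le_of_eq ?_)
    · have := one_le_pow₀ (n := r) (le_add_of_nonneg_right (a := (1 : ℝ)) (hu p hp))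
      linarith
    · refine sum_congr rfl fun T _ => prod_congr rfl fun p _ => ?_
      ring

theorem sum_le_prod_mul_sum {P Q : Finset ℕ} (hPQ : P ⊆ Q) {u : ℕ → ℝ} (hu : ∀ p ∈ Q, 0 ≤ u p)
    (hQ : ∀ p ∈ Q, 0 < p) (z : ℕ) :
    ∑ T ∈ Q.powerset with ∏ p ∈ T, p ≤ z, ∏ p ∈ T, u p ≤
      (∏ p ∈ Q \ P, (1 + u p)) * ∑ T ∈ P.powerset with ∏ p ∈ T, p ≤ z, ∏ p ∈ T, u p := by
  rw [prod_one_add, sum_mul_sum, ← sum_product']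
  calc _ = ∑ T ∈ Q.powerset with ∏ p ∈ T, p ≤ z, (∏ p ∈ T \ P, u p) * ∏ p ∈ T ∩ P, u p := by
        refine sum_congr rfl fun T _ => ?_
        rw [mul_comm, prod_inter_mul_prod_sdiff]
    _ ≤ _ := by
        rw [← sum_image (s := Q.powerset.filter (fun T => ∏ p ∈ T, p ≤ z))
          (g := fun T => (T \ P, T ∩ P)) (f := fun x => (∏ p ∈ x.1, u p) * ∏ p ∈ x.2, u p)]
        · refine sum_le_sum_of_subset_of_nonneg ?_ ?_
          · intro x hx
            obtain ⟨T, hT, rfl⟩ := mem_image.1 hx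
            rw [mem_filter, mem_powerset] at hT
            simp only [mem_product, mem_powerset, mem_filter]
            refine ⟨sdiff_subset_sdiff hT.1 le_rfl, inter_subset_right, le_trans ?_ hT.2⟩
            rw [← prod_inter_mul_prod_sdiff T P]
            exact Nat.le_mul_of_pos_right _ (prod_pos fun p hp => hQ p (hT.1 (mem_sdiff.1 hp).1))
          · rintro ⟨A, B⟩ hx _
            simp only [mem_product, mem_powerset, mem_filter] at hx
            exact mul_nonneg (prod_nonneg fun p hp => hu p (mem_sdiff.1 (hx.1 hp)).1)
              (prod_nonneg fun p hp => hu p (hPQ (hx.2.1 hp)))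
        · intro T _ T' _ h
          simp only [Prod.mk.injEq] at h
          rw [← sdiff_union_inter T P, ← sdiff_union_inter T' P, h.1, h.2]

/-- The sieve density of dimension `r` over the primes of `P`, up to `z ^ r`, is large. -/
theorem log_pow_le_sieve_density {P : Finset ℕ} {z r : ℕ}
    (hP : P ⊆ (range (z + 1)).filter Nat.Prime) (hr : ∀ p ∈ P, r < p) :
    Real.log (z + 1) ^ r ≤
      (∏ p ∈ (range (z + 1)).filter Nat.Prime \ P, (1 + 1 / ((p : ℝ) - 1))) ^ r *
        ∑ T ∈ P.powerset with ∏ p ∈ T, p ≤ z ^ r, ∏ p ∈ T, (r : ℝ) / ((p : ℝ) - r) := by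
  set Q := (range (z + 1)).filter Nat.Prime with hQ
  have hQp : ∀ p ∈ Q, p.Prime := fun p hp => (mem_filter.1 hp).2
  have hu : ∀ p ∈ Q, 0 ≤ 1 / ((p : ℝ) - 1) := fun p hp => by
    have : (1 : ℝ) < p := by exact_mod_cast (hQp p hp).one_lt
    exact div_nonneg zero_le_one (by linarith)
  have hlog : 0 ≤ Real.log (z + 1) := Real.log_nonneg (by simp)
  calc Real.log (z + 1) ^ r
      ≤ ((∏ p ∈ Q \ P, (1 + 1 / ((p : ℝ) - 1))) *
          ∑ T ∈ P.powerset with ∏ p ∈ T, p ≤ z, ∏ p ∈ T, 1 / ((p : ℝ) - 1)) ^ r := by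
        gcongr
        exact (log_le_sum_prod_primes z).trans
          (sum_le_prod_mul_sum hP hu (fun p hp => (hQp p hp).pos) z)
    _ ≤ _ := by
        rw [mul_pow]
        have h0 : 0 ≤ ∏ p ∈ Q \ P, (1 + 1 / ((p : ℝ) - 1)) :=
          prod_nonneg fun p hp => add_nonneg zero_le_one (hu p (mem_sdiff.1 hp).1)
        gcongr
        refine (sum_pow_le_sum_prod (fun p hp => hu p (hP hp))
          (fun p hp => (hQp p (hP hp)).pos) z r).trans ?_
        refine sum_le_sum fun T hT => prod_le_prod (fun p hp => ?_) fun p hp => ?_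
        · have hpP := mem_powerset.1 (mem_filter.1 hT).1 hp
          have := one_le_pow₀ (n := r) (le_add_of_nonneg_right (a := (1 : ℝ)) (hu p (hP hpP)))
          linarith
        · have hpP := mem_powerset.1 (mem_filter.1 hT).1 hp
          have hp1 : (1 : ℝ) < p := by exact_mod_cast (hQp p (hP hpP)).one_lt
          have hpr : (r : ℝ) < p := by exact_mod_cast hr p hpP
          have hb := one_add_mul_le_pow (a := -((p : ℝ)⁻¹))
            (by have : (p : ℝ)⁻¹ ≤ 1 := inv_le_one_of_one_le₀ hp1.le
                linarith) r
          have e1 : (1 : ℝ) + 1 / ((p : ℝ) - 1) = (1 + -((p : ℝ)⁻¹))⁻¹ := by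
            have : (p : ℝ) - 1 ≠ 0 := by linarith
            have h2 : (1 : ℝ) + -(p : ℝ)⁻¹ = (p - 1) / p := by field_simp; ring
            rw [h2, inv_div]
            field_simp
            ring
          have e2 : (r : ℝ) / (p - r) = (1 + r * -((p : ℝ)⁻¹))⁻¹ - 1 := by
            have : (p : ℝ) - r ≠ 0 := by linarith
            have h2 : (1 : ℝ) + r * -(p : ℝ)⁻¹ = (p - r) / p := by field_simp; ring
            rw [h2, inv_div]
            field_simp
            ring
          rw [e1, e2, inv_pow]
          have : 0 < 1 + (r : ℝ) * -((p : ℝ)⁻¹) := by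
            have h2 : (1 : ℝ) + r * -(p : ℝ)⁻¹ = (p - r) / p := by field_simp; ring
            rw [h2]
            exact div_pos (by linarith) (by linarith)
          gcongr

/-! ### The ratio `n / φ(n)` and its moments -/

/-- The ratio `n / φ(n)`, as a product over the primes dividing `n`. -/
noncomputable def totientRatio (n : ℕ) : ℝ := ∏ p ∈ n.primeFactors, (1 + 1 / ((p : ℝ) - 1))

theorem one_le_one_add_inv_pred {p : ℕ} (hp : p.Prime) : 1 ≤ 1 + 1 / ((p : ℝ) - 1) := by
  have : (1 : ℝ) < p := by exact_mod_cast hp.one_lt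
  have : 0 ≤ 1 / ((p : ℝ) - 1) := div_nonneg zero_le_one (by linarith)
  linarith

theorem one_le_totientRatio (n : ℕ) : 1 ≤ totientRatio n :=
  Finset.one_le_prod fun _ hp => one_le_one_add_inv_pred (Nat.prime_of_mem_primeFactors hp)

theorem one_add_pow_le_one_add_mul {t : ℝ} (h0 : 0 ≤ t) (h1 : t ≤ 1) (c : ℕ) :
    (1 + t) ^ c ≤ 1 + (2 ^ c - 1) * t := by
  induction c with
  | zero => simp
  | succ c ih =>
    have h2 : (1 : ℝ) ≤ 2 ^ c := one_le_pow₀ (by norm_num)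
    calc (1 + t) ^ (c + 1) = (1 + t) ^ c * (1 + t) := pow_succ _ _
      _ ≤ (1 + (2 ^ c - 1) * t) * (1 + t) := by gcongr
      _ ≤ _ := by
        rw [pow_succ]
        nlinarith [mul_nonneg (mul_nonneg (sub_nonneg.2 h2) h0) (sub_nonneg.2 h1)]

theorem exists_sum_totientRatio_pow_le (c : ℕ) :
    ∃ K : ℝ, 0 < K ∧ ∀ Y : ℕ, ∑ δ ∈ Icc 1 Y, totientRatio δ ^ c ≤ K * Y := by
  set κ : ℝ := 2 * 2 ^ c with hκ
  have hκ0 : 0 ≤ κ := by positivity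
  have hsum : Summable (fun n : ℕ => κ * ((n : ℝ) ^ 2)⁻¹) :=
    (Real.summable_nat_pow_inv.2 (by norm_num)).mul_left κ
  refine ⟨Real.exp (∑' n : ℕ, κ * ((n : ℝ) ^ 2)⁻¹), Real.exp_pos _, fun Y => ?_⟩
  set Q := (Icc 1 Y).filter Nat.Prime with hQ
  have hpt : ∀ δ : ℕ, totientRatio δ ^ c ≤ ∏ p ∈ δ.primeFactors, (1 + κ / p) := fun δ => by
    rw [totientRatio, ← prod_pow]
    refine prod_le_prod (fun p hp => ?_) fun p hp => ?_
    · have := one_le_one_add_inv_pred (Nat.prime_of_mem_primeFactors hp)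
      positivity
    · have hp2 : (2 : ℝ) ≤ p := by exact_mod_cast (Nat.prime_of_mem_primeFactors hp).two_le
      have h1 : 1 / ((p : ℝ) - 1) ≤ 1 := by rw [div_le_one (by linarith)]; linarith
      have h0 : 0 ≤ 1 / ((p : ℝ) - 1) := div_nonneg zero_le_one (by linarith)
      have h2 : 1 / ((p : ℝ) - 1) ≤ 2 / p := by
        rw [div_le_div_iff₀ (by linarith) (by linarith)]; linarith
      refine (one_add_pow_le_one_add_mul h0 h1 c).trans ?_
      have h3 : (0 : ℝ) ≤ 2 ^ c - 1 := sub_nonneg.2 (one_le_pow₀ (by norm_num))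
      have h4 : (0 : ℝ) ≤ 2 / p := by positivity
      have : κ / p = 2 ^ c * (2 / p) := by rw [hκ]; ring
      rw [this]
      nlinarith [mul_le_mul_of_nonneg_left h2 h3]
  calc ∑ δ ∈ Icc 1 Y, totientRatio δ ^ c
      ≤ ∑ δ ∈ Icc 1 Y, ∑ T ∈ Q.powerset, if T ⊆ δ.primeFactors then ∏ p ∈ T, κ / p else 0 := by
        refine sum_le_sum fun δ hδ => (hpt δ).trans ?_
        rw [prod_one_add, ← sum_filter]
        refine sum_le_sum_of_subset_of_nonneg (fun T hT => ?_) fun T _ _ =>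
          prod_nonneg fun p _ => by positivity
        rw [mem_powerset] at hT
        refine mem_filter.2 ⟨mem_powerset.2 fun p hp => ?_, hT⟩
        have hp' := hT hp
        have hpr := Nat.prime_of_mem_primeFactors hp'
        have := Nat.le_of_mem_primeFactors hp'
        rw [mem_Icc] at hδ
        exact mem_filter.2 ⟨mem_Icc.2 ⟨hpr.pos, by omega⟩, hpr⟩
    _ = ∑ T ∈ Q.powerset, #{δ ∈ Icc 1 Y | T ⊆ δ.primeFactors} * ∏ p ∈ T, κ / p := by
        rw [sum_comm]
        refine sum_congr rfl fun T _ => ?_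
        rw [← sum_filter, sum_const, nsmul_eq_mul]
    _ ≤ ∑ T ∈ Q.powerset, (Y : ℝ) * ∏ p ∈ T, κ * ((p : ℝ) ^ 2)⁻¹ := by
        refine sum_le_sum fun T hT => ?_
        rw [mem_powerset] at hT
        have hTp : ∀ p ∈ T, p.Prime := fun p hp => (mem_filter.1 (hT hp)).2
        have hcard : #{δ ∈ Icc 1 Y | T ⊆ δ.primeFactors} ≤ Y / ∏ p ∈ T, p := by
          rw [← Nat.Ioc_filter_dvd_card_eq_div]
          refine card_le_card fun δ hδ => ?_
          rw [mem_filter, mem_Icc] at hδ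
          refine mem_filter.2 ⟨mem_Ioc.2 ⟨by omega, hδ.1.2⟩, ?_⟩
          exact prod_primes_dvd δ (fun p hp => (hTp p hp).prime)
            fun p hp => Nat.dvd_of_mem_primeFactors (hδ.2 hp)
        have hcard' : (#{δ ∈ Icc 1 Y | T ⊆ δ.primeFactors} : ℝ) ≤ Y * ∏ p ∈ T, (p : ℝ)⁻¹ := by
          refine (Nat.cast_le.2 hcard).trans (Nat.cast_div_le.trans ?_)
          rw [prod_inv_distrib, ← div_eq_mul_inv, Nat.cast_prod]
        calc _ ≤ (Y * ∏ p ∈ T, (p : ℝ)⁻¹) * ∏ p ∈ T, κ / p := by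
              have : 0 ≤ ∏ p ∈ T, κ / p := prod_nonneg fun p _ => by positivity
              gcongr
          _ = _ := by
              rw [mul_assoc, ← prod_mul_distrib]
              congr 1
              refine prod_congr rfl fun p _ => ?_
              rw [div_eq_mul_inv, sq, mul_inv]; ring
    _ = (∏ p ∈ Q, (1 + κ * ((p : ℝ) ^ 2)⁻¹)) * Y := by
        rw [← mul_sum, prod_one_add, mul_comm]
    _ ≤ (∏ p ∈ Q, Real.exp (κ * ((p : ℝ) ^ 2)⁻¹)) * Y := by
        gcongr with p hp
        linarith [Real.add_one_le_exp (κ * ((p : ℝ) ^ 2)⁻¹)]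
    _ ≤ _ := by
        rw [← Real.exp_sum]
        gcongr
        exact hsum.sum_le_tsum Q fun n _ => by positivity

theorem exists_sum_totientRatio_natAbs_pow_le (c : ℕ) :
    ∃ K : ℝ, 0 < K ∧ ∀ Y : ℕ,
      ∑ δ ∈ Icc (-(Y : ℤ)) Y, totientRatio δ.natAbs ^ c ≤ K * (Y + 1) := by
  obtain ⟨K, hK, h⟩ := exists_sum_totientRatio_pow_le c
  refine ⟨2 * K + 1, by positivity, fun Y => ?_⟩
  have hmaps : ∀ δ ∈ Icc (-(Y : ℤ)) Y, δ.natAbs ∈ range (Y + 1) := fun δ hδ => by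
    rw [mem_Icc] at hδ; rw [mem_range]; omega
  rw [← sum_fiberwise_of_maps_to hmaps]
  have h0 : totientRatio 0 = 1 := by simp [totientRatio]
  have hfib : ∀ n ∈ range Y,
      ∑ δ ∈ Icc (-(Y : ℤ)) Y with δ.natAbs = n + 1, totientRatio δ.natAbs ^ c
        ≤ 2 * totientRatio (n + 1) ^ c := fun n _ => by
    have hsub : {δ ∈ Icc (-(Y : ℤ)) Y | δ.natAbs = n + 1} ⊆ {((n : ℤ) + 1), -((n : ℤ) + 1)} := by
      intro δ hδ
      rw [mem_filter] at hδ
      simp only [mem_insert, mem_singleton]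
      omega
    have hpos : 0 ≤ totientRatio (n + 1) ^ c := by
      have := one_le_totientRatio (n + 1); positivity
    calc _ = ∑ δ ∈ Icc (-(Y : ℤ)) Y with δ.natAbs = n + 1, totientRatio (n + 1) ^ c :=
          sum_congr rfl fun δ hδ => by rw [(mem_filter.1 hδ).2]
      _ ≤ _ := by
          rw [sum_const, nsmul_eq_mul]
          gcongr
          exact_mod_cast (card_le_card hsub).trans card_le_two
  have hzero : ∑ δ ∈ Icc (-(Y : ℤ)) Y with δ.natAbs = 0, totientRatio δ.natAbs ^ c ≤ 1 := by
    have : {δ ∈ Icc (-(Y : ℤ)) Y | δ.natAbs = 0} ⊆ {0} := by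
      intro δ hδ
      rw [mem_filter] at hδ
      simp only [mem_singleton]
      omega
    calc _ = ∑ δ ∈ Icc (-(Y : ℤ)) Y with δ.natAbs = 0, (1 : ℝ) :=
          sum_congr rfl fun δ hδ => by rw [(mem_filter.1 hδ).2, h0, one_pow]
      _ ≤ _ := by
          rw [sum_const, nsmul_eq_mul, mul_one]
          exact_mod_cast card_le_card this
  have hsum : ∑ n ∈ range Y, ∑ δ ∈ Icc (-(Y : ℤ)) Y with δ.natAbs = n + 1,
      totientRatio δ.natAbs ^ c ≤ 2 * ∑ δ ∈ Icc 1 Y, totientRatio δ ^ c := by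
    refine (sum_le_sum hfib).trans (le_of_eq ?_)
    rw [← mul_sum, range_eq_Ico, sum_Ico_add' (fun n => totientRatio n ^ c) 0 Y 1]
    rfl
  rw [sum_range_succ']
  have hY0 : (0 : ℝ) ≤ Y := Y.cast_nonneg
  nlinarith [h Y]

/-! ### Counting translates of a finite set that consist of prime powers -/

theorem prod_biUnion_le_prod_prod {ι : Type*} {s : Finset ι} {t : ι → Finset ℕ} {w : ℕ → ℝ}
    (hw : ∀ i ∈ s, ∀ p ∈ t i, 1 ≤ w p) :
    ∏ p ∈ s.biUnion t, w p ≤ ∏ i ∈ s, ∏ p ∈ t i, w p := by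
  classical
  induction s using Finset.induction_on with
  | empty => simp
  | insert i s hi ih =>
    have h1 : ∀ j ∈ s, ∀ p ∈ t j, 1 ≤ w p := fun j hj => hw j (mem_insert_of_mem hj)
    have h2 : 0 ≤ ∏ p ∈ t i, w p :=
      prod_nonneg fun p hp => zero_le_one.trans (hw i (mem_insert_self _ _) p hp)
    rw [biUnion_insert, prod_insert hi]
    calc _ ≤ (∏ p ∈ t i ∪ s.biUnion t, w p) * ∏ p ∈ t i ∩ s.biUnion t, w p := by
          refine le_mul_of_one_le_right (prod_nonneg fun p hp => ?_) (one_le_prod fun p hp => ?_)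
          · rcases mem_union.1 hp with hp | hp
            · exact zero_le_one.trans (hw i (mem_insert_self _ _) p hp)
            · obtain ⟨j, hj, hp⟩ := mem_biUnion.1 hp
              exact zero_le_one.trans (h1 j hj p hp)
          · exact hw i (mem_insert_self _ _) p (mem_inter.1 hp).1
      _ = (∏ p ∈ t i, w p) * ∏ p ∈ s.biUnion t, w p := prod_union_inter
      _ ≤ _ := mul_le_mul_of_nonneg_left (ih h1) h2

theorem card_filter_exists_dvd_add {B : Finset ℤ} {p : ℕ} (hp : 0 < p)
    (hB : ∀ x ∈ B.offDiag, ¬ p ∣ (x.1 - x.2).natAbs) :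
    #{n ∈ range p | ∃ b ∈ B, (p : ℤ) ∣ ((n : ℕ) : ℤ) + b} = #B := by
  have hp' : (0 : ℤ) < p := by exact_mod_cast hp
  have himg : {n ∈ range p | ∃ b ∈ B, (p : ℤ) ∣ ((n : ℕ) : ℤ) + b} = B.image (fun b => ((-b) % p).toNat) := by
    ext n
    simp only [mem_filter, mem_range, mem_image]
    constructor
    · rintro ⟨hn, b, hb, hd⟩
      refine ⟨b, hb, ?_⟩
      have h1 : (-b) % p = n := by
        have : (-b) % p = (n : ℤ) % p :=
          Int.modEq_iff_dvd.2 (by rwa [sub_neg_eq_add])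
        rw [this, Int.emod_eq_of_lt (by positivity) (by exact_mod_cast hn)]
      rw [h1, Int.toNat_natCast]
    · rintro ⟨b, hb, rfl⟩
      have h0 := Int.emod_nonneg (-b) hp'.ne'
      have h1 := Int.emod_lt_of_pos (-b) hp'
      refine ⟨by omega, b, hb, ?_⟩
      rw [Int.toNat_of_nonneg h0]
      have := Int.emod_add_mul_ediv (-b) p
      exact ⟨-((-b) / p), by linarith⟩
  rw [himg, card_image_of_injOn]
  intro b hb b' hb' h
  by_contra hne
  refine hB (b, b') (mem_offDiag.2 ⟨hb, hb', hne⟩) ?_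
  have h0 := Int.emod_nonneg (-b) hp'.ne'
  have h0' := Int.emod_nonneg (-b') hp'.ne'
  have h1 : (-b) % p = (-b') % p := by simp only at h; omega
  rw [← Int.natCast_dvd]
  have e1 := Int.emod_add_mul_ediv (-b) p
  have e2 := Int.emod_add_mul_ediv (-b') p
  exact ⟨(-b') / p - (-b) / p, by simp only; linarith⟩

/-- Few integers up to `Y` are powers of a given prime. -/
theorem card_filter_vonMangoldt_dvd_le {p : ℕ} (hp : p.Prime) {b : ℤ} {N Y : ℕ}
    (hY : ∀ m ∈ range N, ((m : ℤ) + b).toNat ≤ Y) :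
    #{m ∈ range N | Λ (((m : ℕ) : ℤ) + b).toNat ≠ 0 ∧ (p : ℤ) ∣ ((m : ℕ) : ℤ) + b} ≤ Nat.log 2 Y + 1 := by
  rw [← card_range (Nat.log 2 Y + 1)]
  have hform : ∀ m ∈ {m ∈ range N | Λ (((m : ℕ) : ℤ) + b).toNat ≠ 0 ∧ (p : ℤ) ∣ ((m : ℕ) : ℤ) + b},
      ∃ e : ℕ, ((m : ℤ) + b) = (p : ℤ) ^ e ∧ e ≤ Nat.log 2 Y := by
    intro m hm
    rw [mem_filter] at hm
    obtain ⟨hm, hΛ, hd⟩ := hm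
    have hpp : IsPrimePow ((m : ℤ) + b).toNat := vonMangoldt_ne_zero_iff.1 hΛ
    have hpos : 0 < ((m : ℤ) + b).toNat := hpp.pos
    have hd' : p ∣ ((m : ℤ) + b).toNat := by
      rw [← Int.natCast_dvd_natCast, Int.toNat_of_nonneg (by omega)]; exact hd
    obtain ⟨q, e, hq, he, hqe⟩ := hpp
    have hq' : q.Prime := hq.nat_prime
    have hpq : p = q := by
      rw [← hqe] at hd'
      exact (Nat.prime_dvd_prime_iff_eq hp hq').1 (hp.dvd_of_dvd_pow hd')
    subst hpq
    refine ⟨e, ?_, ?_⟩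
    · have : (((m : ℤ) + b).toNat : ℤ) = m + b := Int.toNat_of_nonneg (by omega)
      rw [← this, ← hqe]; push_cast; rfl
    · refine Nat.le_log_of_pow_le (by norm_num) ?_
      calc 2 ^ e ≤ p ^ e := Nat.pow_le_pow_left hp.two_le e
        _ = _ := hqe
        _ ≤ Y := hY m hm
  choose! f hf using hform
  refine card_le_card_of_injOn f (fun m hm => ?_) fun m hm m' hm' h => ?_
  · have := (hf m hm).2
    simp only [coe_range, Set.mem_Iio]; omega
  · have h1 := (hf m hm).1
    have h2 := (hf m' hm').1
    rw [h, ← h2] at h1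
    omega

theorem exists_one_add_log_pow_le (s : ℕ) :
    ∃ C : ℝ, 0 < C ∧ ∀ X : ℝ, 1 ≤ X → (1 + Real.log X) ^ s ≤ C * X ^ (1 / 2 : ℝ) := by
  rcases Nat.eq_zero_or_pos s with rfl | hs
  · exact ⟨1, one_pos, fun X hX => by simpa using Real.one_le_rpow hX (by norm_num)⟩
  have hs' : (0 : ℝ) < s := by exact_mod_cast hs
  set ε : ℝ := 1 / (2 * s) with hε
  have hε0 : 0 < ε := by positivity
  refine ⟨(1 + 1 / ε) ^ s, by positivity, fun X hX => ?_⟩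
  have h1 : 1 + Real.log X ≤ (1 + 1 / ε) * X ^ ε := by
    have h2 := Real.log_le_rpow_div (by linarith : 0 ≤ X) hε0
    have h3 := Real.one_le_rpow hX hε0.le
    have : X ^ ε / ε = 1 / ε * X ^ ε := by ring
    linarith
  have h0 : 0 ≤ 1 + Real.log X := by linarith [Real.log_nonneg hX]
  calc _ ≤ ((1 + 1 / ε) * X ^ ε) ^ s := by gcongr
    _ = _ := by
      rw [mul_pow, ← Real.rpow_mul_natCast (by linarith)]
      congr 2
      rw [hε]; field_simp

set_option maxHeartbeats 1000000 in
/-- Upper bound sieve for the number of translates of `B` consisting of prime powers. -/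
theorem exists_card_primePow_translates_le {r : ℕ} (hr : 1 ≤ r) {κ : ℝ} (hκ : 1 ≤ κ) :
    ∃ C : ℝ, 0 < C ∧ ∀ B : Finset ℤ, #B = r → ∀ X : ℝ, 2 ≤ X → (∀ b ∈ B, (b : ℝ) ≤ κ * X) →
      (#{m ∈ range (⌊X⌋₊ + 1) | ∀ b ∈ B, Λ (((m : ℕ) : ℤ) + b).toNat ≠ 0} : ℝ) * (1 + Real.log X) ^ r
        ≤ C * X * (∏ x ∈ B.offDiag, totientRatio (x.1 - x.2).natAbs) ^ r := by
  obtain ⟨C₁, hC₁, hlog⟩ := exists_one_add_log_pow_le (r + 1)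
  set w : ℕ → ℝ := fun p => 1 + 1 / ((p : ℝ) - 1) with hw
  set R₀ := ∏ p ∈ (range (r + 1)).filter Nat.Prime, w p with hR₀
  have hR₀1 : 1 ≤ R₀ := one_le_prod fun p hp => one_le_one_add_inv_pred (mem_filter.1 hp).2
  have hr' : (1 : ℝ) ≤ r := by exact_mod_cast hr
  refine ⟨(36 * r) ^ r * (R₀ ^ r * 4) + r * (2 * (3 + 2 * κ) * C₁), by positivity, ?_⟩
  intro B hB X hX hbX
  set L := 1 + Real.log X with hL
  set R := ∏ x ∈ B.offDiag, totientRatio (x.1 - x.2).natAbs with hR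
  have hR1 : 1 ≤ R := one_le_prod fun x _ => one_le_totientRatio _
  have hX1 : 1 ≤ X := by linarith
  have hX0 : 0 ≤ X := by linarith
  have hlogX : 1 / 2 ≤ Real.log X := by
    have h1 := Real.log_two_gt_d9
    have h2 := Real.log_le_log (by norm_num) hX
    linarith
  have hL1 : 1 ≤ L := by linarith
  set θ : ℝ := 1 / (12 * r) with hθ
  have hθ0 : 0 < θ := by positivity
  set z := ⌊X ^ θ⌋₊ with hz
  have hzX : (z : ℝ) ≤ X ^ θ := Nat.floor_le (by positivity)
  have hXz : X ^ θ ≤ z + 1 := (Nat.lt_floor_add_one _).le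
  have hz1 : 1 ≤ z := Nat.le_floor (by simpa using Real.one_le_rpow hX1 hθ0.le)
  have hD6 : ((z ^ r : ℕ) : ℝ) ^ 6 ≤ X ^ (1 / 2 : ℝ) := by
    push_cast
    calc (((z : ℝ) ^ r) ^ 6) ≤ ((X ^ θ) ^ r) ^ 6 := by gcongr
      _ = X ^ (1 / 2 : ℝ) := by
        rw [← Real.rpow_mul_natCast hX0, ← Real.rpow_mul_natCast hX0, hθ]
        congr 1
        push_cast
        field_simp
        norm_num
  have hhalf : X ^ (1 / 2 : ℝ) ≤ X := by
    conv_rhs => rw [← Real.rpow_one X]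
    exact Real.rpow_le_rpow_of_exponent_le hX1 (by norm_num)
  have hzhalf : (z : ℝ) ≤ X ^ (1 / 2 : ℝ) := by
    refine hzX.trans (Real.rpow_le_rpow_of_exponent_le hX1 ?_)
    rw [hθ, div_le_div_iff₀ (by positivity) (by norm_num)]
    linarith
  have hlogz : Real.log X ≤ 12 * r * Real.log (z + 1) := by
    have h1 := Real.log_le_log (by positivity) hXz
    rw [Real.log_rpow (by linarith), hθ] at h1
    have h2 := mul_le_mul_of_nonneg_left h1 (by positivity : (0 : ℝ) ≤ 12 * r)
    refine le_trans (le_of_eq ?_) h2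
    field_simp
  set Q := (range (z + 1)).filter Nat.Prime with hQ
  set P := Q.filter (fun p => r < p ∧ ∀ x ∈ B.offDiag, ¬ p ∣ (x.1 - x.2).natAbs) with hP
  have hPp : ∀ p ∈ P, p.Prime := fun p hp => (mem_filter.1 (mem_filter.1 hp).1).2
  have hPr : ∀ p ∈ P, r < p := fun p hp => (mem_filter.1 hp).2.1
  set N := ⌊X⌋₊ + 1 with hN
  have hNX : (N : ℝ) ≤ 2 * X := by
    rw [hN]; push_cast
    linarith [Nat.floor_le hX0]
  set S := ∑ T ∈ P.powerset with ∏ p ∈ T, p ≤ z ^ r, ∏ p ∈ T, (r : ℝ) / ((p : ℝ) - r) with hS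
  set Z := {m ∈ range N | ∀ p ∈ P, ¬ ∃ b ∈ B, (p : ℤ) ∣ ((m : ℕ) : ℤ) + b} with hZ
  have hsieve : (#Z : ℝ) * S ≤ 4 * X := by
    have h := card_mul_sum_le_of_sifted hPp hr hPr (fun p m => ∃ b ∈ B, (p : ℤ) ∣ (m : ℤ) + b)
      (fun p _ n => by
        simp only [Nat.cast_add]
        refine exists_congr fun b => and_congr_right fun _ => ?_
        rw [add_right_comm]
        exact dvd_add_self_right)
      (fun p hp => by
        rw [← hB]
        exact card_filter_exists_dvd_add (hPp p hp).pos (mem_filter.1 hp).2.2)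
      (D := z ^ r) (N := N) (Nat.one_le_pow _ _ hz1) (filter_subset _ _)
      (fun n hn => (mem_filter.1 hn).2)
    linarith
  have hdens : Real.log (z + 1) ^ r ≤ (R₀ * R) ^ r * S := by
    have h := log_pow_le_sieve_density (P := P) (z := z) (filter_subset _ _) hPr
    have hS0 : 0 ≤ S := sum_nonneg fun T hT => prod_nonneg fun p hp => by
      have h1 := hPr p (mem_powerset.1 (mem_filter.1 hT).1 hp)
      have h2 : (r : ℝ) < p := by exact_mod_cast h1
      exact div_nonneg (by positivity) (by linarith)
    refine h.trans (mul_le_mul_of_nonneg_right ?_ hS0)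
    have hQP : ∀ p ∈ Q \ P, p.Prime := fun p hp => (mem_filter.1 (mem_sdiff.1 hp).1).2
    refine pow_le_pow_left₀ (prod_nonneg fun p hp =>
      zero_le_one.trans (one_le_one_add_inv_pred (hQP p hp))) ?_ r
    have hsub : Q \ P ⊆ ({none} ∪ B.offDiag.image some).biUnion (fun i : Option (ℤ × ℤ) =>
        i.elim ((range (r + 1)).filter Nat.Prime) fun x => (x.1 - x.2).natAbs.primeFactors) := by
      intro p hp
      have hpp := hQP p hp
      rw [mem_sdiff] at hp
      have hnot : ¬ (r < p ∧ ∀ x ∈ B.offDiag, ¬ p ∣ (x.1 - x.2).natAbs) := fun h =>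
        hp.2 (mem_filter.2 ⟨hp.1, h⟩)
      rw [mem_biUnion]
      by_cases hrp : r < p
      · push Not at hnot
        obtain ⟨x, hx, hd⟩ := hnot hrp
        refine ⟨some x, by simp [mem_offDiag.1 hx], ?_⟩
        have hne : x.1 - x.2 ≠ 0 := sub_ne_zero.2 (mem_offDiag.1 hx).2.2
        exact Nat.mem_primeFactors.2 ⟨hpp, hd, Int.natAbs_ne_zero.2 hne⟩
      · exact ⟨none, by simp, mem_filter.2 ⟨mem_range.2 (by omega), hpp⟩⟩
    have hone : ∀ i ∈ {none} ∪ B.offDiag.image some, ∀ p ∈ (fun i : Option (ℤ × ℤ) =>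
        i.elim ((range (r + 1)).filter Nat.Prime) fun x => (x.1 - x.2).natAbs.primeFactors) i,
        1 ≤ w p := by
      rintro (_ | x) _ p hp
      · exact one_le_one_add_inv_pred (mem_filter.1 hp).2
      · exact one_le_one_add_inv_pred (Nat.prime_of_mem_primeFactors hp)
    calc ∏ p ∈ Q \ P, (1 + 1 / ((p : ℝ) - 1)) ≤ _ :=
          Finset.prod_le_prod_of_subset_of_one_le hsub
            (fun p hp => zero_le_one.trans (one_le_one_add_inv_pred (hQP p hp)))
            (fun p hp _ => by
              obtain ⟨i, hi, hp⟩ := mem_biUnion.1 hp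
              exact hone i hi p hp)
      _ ≤ _ := prod_biUnion_le_prod_prod hone
      _ = R₀ * R := by
          rw [prod_union (by simp), prod_singleton, prod_image (by simp)]
          rfl
  have hmain : (#Z : ℝ) * L ^ r ≤ (36 * r) ^ r * (R₀ ^ r * 4) * X * R ^ r := by
    have h1 : L ≤ 36 * r * Real.log (z + 1) := by linarith
    have h2 : 0 ≤ Real.log ((z : ℝ) + 1) := Real.log_nonneg (by simp)
    calc (#Z : ℝ) * L ^ r ≤ #Z * (36 * r * Real.log (z + 1)) ^ r := by gcongr
      _ = (36 * r) ^ r * (#Z * Real.log (z + 1) ^ r) := by rw [mul_pow]; ring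
      _ ≤ (36 * r) ^ r * (#Z * ((R₀ * R) ^ r * S)) := by gcongr
      _ = (36 * r) ^ r * ((R₀ * R) ^ r * (#Z * S)) := by ring
      _ ≤ (36 * r) ^ r * ((R₀ * R) ^ r * (4 * X)) := by gcongr
      _ = _ := by rw [mul_pow]; ring
  set Y := ⌈(1 + κ) * X⌉₊ with hY
  have hYX : (Y : ℝ) ≤ (2 + κ) * X := by
    have := (Nat.ceil_lt_add_one (by positivity : 0 ≤ (1 + κ) * X)).le
    linarith
  have hY1 : (1 : ℝ) ≤ Y := by
    refine le_trans ?_ (Nat.le_ceil _)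
    nlinarith
  have hlogY : ((Nat.log 2 Y + 1 : ℕ) : ℝ) ≤ (3 + 2 * κ) * L := by
    have hY0 : Y ≠ 0 := by rintro h; rw [h] at hY1; norm_num at hY1
    have h1 : ((2 : ℝ) ^ Nat.log 2 Y) ≤ Y := by exact_mod_cast Nat.pow_log_le_self 2 hY0
    have h2 := Real.log_le_log (by positivity) (h1.trans hYX)
    rw [Real.log_pow, Real.log_mul (by linarith) (by linarith)] at h2
    have h3 : Real.log (2 + κ) ≤ 1 + κ := by
      have := Real.log_le_sub_one_of_pos (by linarith : 0 < 2 + κ); linarith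
    have h4 := Real.log_two_gt_d9
    have h5 : (0 : ℝ) ≤ Nat.log 2 Y := Nat.cast_nonneg _
    push_cast
    nlinarith
  have hrest : ∀ p ∈ P, ∀ b ∈ B,
      (#{m ∈ range N | Λ (((m : ℕ) : ℤ) + b).toNat ≠ 0 ∧ (p : ℤ) ∣ ((m : ℕ) : ℤ) + b} : ℝ)
        ≤ (3 + 2 * κ) * L := by
    intro p hp b hb
    refine le_trans ?_ hlogY
    refine Nat.cast_le.2 (card_filter_vonMangoldt_dvd_le (hPp p hp) fun m hm => ?_)
    rw [Int.toNat_le]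
    have h1 : (m : ℝ) ≤ X := by
      have : m ≤ ⌊X⌋₊ := by rw [mem_range] at hm; omega
      exact (Nat.le_floor_iff hX0).1 this
    have h2 : (m : ℝ) + b ≤ Y := by
      have := Nat.le_ceil ((1 + κ) * X)
      linarith [hbX b hb]
    exact_mod_cast h2
  have hcover : {m ∈ range N | ∀ b ∈ B, Λ (((m : ℕ) : ℤ) + b).toNat ≠ 0} ⊆
      Z ∪ (P ×ˢ B).biUnion (fun x =>
        {m ∈ range N | Λ (((m : ℕ) : ℤ) + x.2).toNat ≠ 0 ∧ (x.1 : ℤ) ∣ ((m : ℕ) : ℤ) + x.2}) := by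
    intro m hm
    rw [mem_filter] at hm
    rw [mem_union]
    by_cases hmZ : m ∈ Z
    · exact Or.inl hmZ
    · right
      have : ¬ ∀ p ∈ P, ¬ ∃ b ∈ B, (p : ℤ) ∣ (m : ℤ) + b := fun h =>
        hmZ (mem_filter.2 ⟨hm.1, h⟩)
      push Not at this
      obtain ⟨p, hp, b, hb, hd⟩ := this
      exact mem_biUnion.2 ⟨(p, b), mem_product.2 ⟨hp, hb⟩,
        mem_filter.2 ⟨hm.1, hm.2 b hb, hd⟩⟩
  have hcardP : (#P : ℝ) ≤ 2 * X ^ (1 / 2 : ℝ) := by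
    have h1 : #P ≤ z + 1 := by
      refine (card_le_card ((filter_subset _ _).trans (filter_subset _ _))).trans ?_
      rw [card_range]
    have h2 : (#P : ℝ) ≤ z + 1 := by exact_mod_cast h1
    have h3 := Real.one_le_rpow hX1 (by norm_num : (0 : ℝ) ≤ 1 / 2)
    linarith
  have hcount : (#{m ∈ range N | ∀ b ∈ B, Λ (((m : ℕ) : ℤ) + b).toNat ≠ 0} : ℝ)
      ≤ #Z + r * (2 * (3 + 2 * κ)) * X ^ (1 / 2 : ℝ) * L := by
    calc _ ≤ ((#Z + ∑ x ∈ P ×ˢ B, #{m ∈ range N | Λ (((m : ℕ) : ℤ) + x.2).toNat ≠ 0 ∧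
            (x.1 : ℤ) ∣ ((m : ℕ) : ℤ) + x.2} : ℕ) : ℝ) := by
          refine Nat.cast_le.2 ((card_le_card hcover).trans ((card_union_le _ _).trans ?_))
          exact Nat.add_le_add_left card_biUnion_le _
      _ ≤ #Z + ∑ x ∈ P ×ˢ B, (3 + 2 * κ) * L := by
          push_cast
          gcongr with x hx
          exact hrest x.1 (mem_product.1 hx).1 x.2 (mem_product.1 hx).2
      _ = #Z + #P * r * ((3 + 2 * κ) * L) := by
          rw [sum_const, card_product, hB, nsmul_eq_mul]; push_cast; ring
      _ ≤ #Z + (2 * X ^ (1 / 2 : ℝ)) * r * ((3 + 2 * κ) * L) := by gcongr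
      _ = _ := by ring
  have hRr : 1 ≤ R ^ r := one_le_pow₀ hR1
  have hsmall : r * (2 * (3 + 2 * κ)) * X ^ (1 / 2 : ℝ) * L * L ^ r
      ≤ r * (2 * (3 + 2 * κ) * C₁) * X * R ^ r := by
    calc _ = r * (2 * (3 + 2 * κ)) * X ^ (1 / 2 : ℝ) * L ^ (r + 1) := by ring
      _ ≤ r * (2 * (3 + 2 * κ)) * X ^ (1 / 2 : ℝ) * (C₁ * X ^ (1 / 2 : ℝ)) := by
          gcongr
          exact hlog X hX1
      _ = r * (2 * (3 + 2 * κ) * C₁) * (X ^ (1 / 2 : ℝ) * X ^ (1 / 2 : ℝ)) * 1 := by ring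
      _ ≤ _ := by
          rw [← Real.rpow_add (by linarith)]
          norm_num
          exact le_mul_of_one_le_right (by positivity) hRr
  calc _ ≤ (#Z + r * (2 * (3 + 2 * κ)) * X ^ (1 / 2 : ℝ) * L) * L ^ r := by gcongr
    _ ≤ _ := by
      rw [add_mul]
      linarith [hmain, hsmall]

/-! ### Sums over families of lattice points determined by few coordinates -/

theorem card_le_of_determined {ι : Type*} {U : Finset (ι → ℤ)} {h : ℕ}
    (hU : ∀ u ∈ U, ∀ i, u i ∈ Icc (0 : ℤ) h) {R : Finset ι}
    (hR : ∀ u ∈ U, ∀ v ∈ U, (∀ i ∈ R, u i = v i) → u = v) :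
    #U ≤ (h + 1) ^ #R := by
  classical
  have hcard : #(Fintype.piFinset fun _ : R => Icc (0 : ℤ) h) = (h + 1) ^ #R := by
    simp
  rw [← hcard]
  refine card_le_card_of_injOn (fun u i => u i) (fun u hu => ?_) fun u hu v hv huv => ?_
  · exact Fintype.mem_piFinset.2 fun i => hU u hu i
  · exact hR u hu v hv fun i hi => congrFun huv ⟨i, hi⟩

theorem sum_sub_le_of_determined {ι : Type*} {U : Finset (ι → ℤ)} {h : ℕ}
    (hU : ∀ u ∈ U, ∀ i, u i ∈ Icc (0 : ℤ) h) {R : Finset ι}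
    (hR : ∀ u ∈ U, ∀ v ∈ U, (∀ i ∈ R, u i = v i) → u = v) {s s' : ι} (hs : s ∈ R) (hs' : s' ∈ R)
    (hss' : s ≠ s') {f : ℤ → ℝ} (hf : ∀ δ, 0 ≤ f δ) {τ : ℤ} {T : ℕ} (hτ : |τ| ≤ T) :
    ∑ u ∈ U, f (u s - u s' + τ)
      ≤ ((h : ℝ) + 1) ^ (#R - 1) * ∑ δ ∈ Icc (-((h + T : ℕ) : ℤ)) ((h + T : ℕ) : ℤ), f δ := by
  classical
  have hmaps : ∀ u ∈ U, u s - u s' + τ ∈ Icc (-((h + T : ℕ) : ℤ)) ((h + T : ℕ) : ℤ) := by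
    intro u hu
    have h1 := mem_Icc.1 (hU u hu s)
    have h2 := mem_Icc.1 (hU u hu s')
    have h3 := abs_le.1 hτ
    rw [mem_Icc]
    push_cast
    omega
  rw [← sum_fiberwise_of_maps_to hmaps, mul_sum]
  refine sum_le_sum fun δ _ => ?_
  calc ∑ u ∈ U with u s - u s' + τ = δ, f (u s - u s' + τ)
      = ∑ u ∈ U with u s - u s' + τ = δ, f δ :=
        sum_congr rfl fun u hu => by rw [(mem_filter.1 hu).2]
    _ = (#{u ∈ U | u s - u s' + τ = δ} : ℝ) * f δ := by rw [sum_const, nsmul_eq_mul]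
    _ ≤ _ := by
      refine mul_le_mul_of_nonneg_right ?_ (hf δ)
      rw [← card_erase_of_mem hs]
      have := card_le_of_determined (U := {u ∈ U | u s - u s' + τ = δ}) (h := h)
        (R := R.erase s) (fun u hu => hU u (mem_filter.1 hu).1) fun u hu v hv huv => by
          rw [mem_filter] at hu hv
          refine hR u hu.1 v hv.1 fun i hi => ?_
          by_cases his : i = s
          · have := huv s' (mem_erase.2 ⟨hss'.symm, hs'⟩)
            subst his
            linarith [hu.2, hv.2]
          · exact huv i (mem_erase.2 ⟨his, hi⟩)
      exact_mod_cast this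

/-- A point `u` is of type `(Q, σ, t)` when its coordinates are clustered around those in `Q`. -/
structure IsClustered {ι : Type*} (T : ℕ) (Q : Finset ι) (σ : ι → ι) (t : ι → ℤ) (u : ι → ℤ) :
    Prop where
  mem : ∀ i, σ i ∈ Q
  fix : ∀ q ∈ Q, σ q = q
  eq : ∀ i, u i = u (σ i) + t i
  small : ∀ i, |t i| ≤ T
  sep : ∀ q ∈ Q, ∀ q' ∈ Q, q ≠ q' → (T : ℤ) < |u q - u q'|

theorem exists_isClustered {ι : Type*} [Fintype ι] (T : ℕ) (u : ι → ℤ) :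
    ∃ Q σ t, IsClustered T Q σ t u := by
  classical
  set S := (univ : Finset (Finset ι)).filter
    fun Q => ∀ q ∈ Q, ∀ q' ∈ Q, q ≠ q' → (T : ℤ) < |u q - u q'| with hS
  obtain ⟨Q, hQ, hmax⟩ := exists_max_image S card ⟨∅, by simp [hS]⟩
  have hsep := (mem_filter.1 hQ).2
  have hex : ∀ i, ∃ q ∈ Q, |u i - u q| ≤ T ∧ (i ∈ Q → q = i) := by
    intro i
    by_cases hi : i ∈ Q
    · exact ⟨i, hi, by simp, fun _ => rfl⟩
    by_contra! hcon
    have hfar : ∀ q ∈ Q, (T : ℤ) < |u i - u q| := by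
      intro q hq
      by_contra! hle
      exact hi (hcon q hq hle).1
    have hmem : insert i Q ∈ S := by
      refine mem_filter.2 ⟨mem_univ _, fun q hq q' hq' hne => ?_⟩
      rcases mem_insert.1 hq with hqi | hqQ <;> rcases mem_insert.1 hq' with hqi' | hqQ'
      · exact absurd (hqi.trans hqi'.symm) hne
      · rw [hqi]; exact hfar q' hqQ'
      · rw [hqi', abs_sub_comm]; exact hfar q hqQ
      · exact hsep q hqQ q' hqQ' hne
    have := hmax _ hmem
    rw [card_insert_of_notMem hi] at this
    omega
  choose σ hσ hclose hfix using hex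
  exact ⟨Q, σ, fun i => u i - u (σ i), hσ, fun q hq => hfix q hq, fun i => by ring, hclose, hsep⟩

section Clusters

variable {ι : Type*} [Fintype ι] [DecidableEq ι] {T : ℕ} {Q : Finset ι} {σ : ι → ι} {t u : ι → ℤ}
  {ε : ι → ℤ}

theorem IsClustered.sum_weight (hu : IsClustered T Q σ t u) (ε : ι → ℤ) :
    ∑ i, ε i * u i = ∑ q ∈ Q, (∑ i with σ i = q, ε i) * u q + ∑ i, ε i * t i := by
  rw [sum_congr rfl fun i _ => by rw [hu.eq i, mul_add], sum_add_distrib,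
    ← sum_fiberwise_of_maps_to (fun i _ => hu.mem i)]
  congr 1
  refine sum_congr rfl fun q _ => ?_
  rw [sum_mul]
  exact sum_congr rfl fun i hi => by rw [(mem_filter.1 hi).2]

/-- If there are more than `#ι / 2` clusters, then one of them has nonzero weight. -/
theorem exists_weight_ne_zero (hmem : ∀ i, σ i ∈ Q) (hfix : ∀ q ∈ Q, σ q = q)
    (hε : ∀ i, ε i ≠ 0) (hQ : Fintype.card ι < 2 * #Q) :
    ∃ q ∈ Q, ∑ i with σ i = q, ε i ≠ 0 := by
  by_contra! hcon
  have h2 : ∀ q ∈ Q, 2 ≤ #{i | σ i = q} := by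
    intro q hq
    by_contra! hlt
    have hqm : q ∈ ({i | σ i = q} : Finset ι) := by simp [hfix q hq]
    have h1 : ({i | σ i = q} : Finset ι) = {q} := by
      have := card_pos.2 ⟨q, hqm⟩
      obtain ⟨x, hx⟩ := card_eq_one.1 (by omega : #{i | σ i = q} = 1)
      rw [hx] at hqm ⊢
      rw [mem_singleton.1 hqm]
    have h0 := hcon q hq
    rw [h1, sum_singleton] at h0
    exact hε q h0
  have h3 := card_eq_sum_card_fiberwise (s := (univ : Finset ι)) (t := Q) (f := σ)
    (fun i _ => hmem i)
  have h4 := sum_le_sum h2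
  rw [sum_const, smul_eq_mul] at h4
  rw [card_univ] at h3
  omega

/-- Averages of `f (u s - u s' + τ)` over balanced points with prescribed clusters. -/
theorem sum_clustered_le {f : ℤ → ℝ} (hf : ∀ δ, 0 ≤ f δ) {K : ℝ}
    (hK : ∀ Y : ℕ, ∑ δ ∈ Icc (-(Y : ℤ)) Y, f δ ≤ K * (Y + 1))
    (hε : ∀ i, ε i = 1 ∨ ε i = -1) (hε0 : ∑ i, ε i = 0) {h : ℕ} {U : Finset (ι → ℤ)}
    (hU : ∀ u ∈ U, ∀ i, u i ∈ Icc (0 : ℤ) h) (hbal : ∀ u ∈ U, ∑ i, ε i * u i = 0)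
    (hcl : ∀ u ∈ U, IsClustered T Q σ t u) {s s' : ι} (hs : s ∈ Q) (hs' : s' ∈ Q) {τ : ℤ}
    (hτ : |τ| ≤ T) :
    ∑ u ∈ U, f (u s - u s' + τ) ≤ K * (((Fintype.card ι + 1) * T : ℕ) + 1) *
      ((h : ℝ) + 1) ^ (if 2 * #Q ≤ Fintype.card ι then #Q else #Q - 1) := by
  have hK0 : 0 ≤ K := by
    have := (sum_nonneg fun δ _ => hf δ).trans (hK 0)
    simpa using this
  set W := (Fintype.card ι + 1) * T with hW
  have hTW : T ≤ W := by rw [hW]; nlinarith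
  have hdet : ∀ u ∈ U, ∀ v ∈ U, (∀ i ∈ Q, u i = v i) → u = v := by
    intro u hu v hv huv
    funext i
    rw [(hcl u hu).eq, (hcl v hv).eq, huv _ ((hcl u hu).mem i)]
  have hoff : ∀ R : Finset ι, s ∈ R → s' ∈ R → s ≠ s' →
      (∀ u ∈ U, ∀ v ∈ U, (∀ i ∈ R, u i = v i) → u = v) →
      ∑ u ∈ U, f (u s - u s' + τ) ≤ K * (W + 1) * ((h : ℝ) + 1) ^ #R := by
    intro R hsR hsR' hne hR
    refine (sum_sub_le_of_determined hU hR hsR hsR' hne hf hτ).trans ?_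
    have h1 : 1 ≤ #R := card_pos.2 ⟨s, hsR⟩
    calc _ ≤ ((h : ℝ) + 1) ^ (#R - 1) * (K * (((h + T : ℕ) : ℝ) + 1)) := by
          gcongr
          exact hK _
      _ ≤ ((h : ℝ) + 1) ^ (#R - 1) * (K * ((W + 1) * (h + 1))) := by
          gcongr
          have : (T : ℝ) ≤ W := by exact_mod_cast hTW
          push_cast
          have h0 : (0 : ℝ) ≤ h := Nat.cast_nonneg _
          have h2 : (0 : ℝ) ≤ W := Nat.cast_nonneg _
          nlinarith [mul_nonneg h0 h2]
      _ = K * (W + 1) * (((h : ℝ) + 1) ^ (#R - 1) * (h + 1)) := by ring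
      _ = _ := by rw [← pow_succ, Nat.sub_add_cancel h1]
  have hbdd : ∀ R : Finset ι, (∀ u ∈ U, |u s - u s' + τ| ≤ W) →
      (∀ u ∈ U, ∀ v ∈ U, (∀ i ∈ R, u i = v i) → u = v) →
      ∑ u ∈ U, f (u s - u s' + τ) ≤ K * (W + 1) * ((h : ℝ) + 1) ^ #R := by
    intro R hb hR
    have hpt : ∀ u ∈ U, f (u s - u s' + τ) ≤ K * (W + 1) := fun u hu =>
      (single_le_sum (fun δ _ => hf δ) (mem_Icc.2 (abs_le.1 (hb u hu)))).trans (hK W)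
    refine (sum_le_card_nsmul _ _ _ hpt).trans ?_
    rw [nsmul_eq_mul, mul_comm]
    gcongr
    exact_mod_cast card_le_of_determined hU hR
  split_ifs with hc
  · by_cases hss : s = s'
    · subst hss
      refine hbdd Q (fun u _ => ?_) hdet
      rw [sub_self, zero_add]
      exact hτ.trans (by exact_mod_cast hTW)
    · exact hoff Q hs hs' hss hdet
  · rcases U.eq_empty_or_nonempty with rfl | ⟨u₀, hu₀⟩
    · simp only [sum_empty]; positivity
    have hcl₀ := hcl u₀ hu₀
    set w : ι → ℤ := fun q => ∑ i with σ i = q, ε i with hw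
    have hlin : ∀ u ∈ U, ∑ q ∈ Q, w q * u q = -∑ i, ε i * t i := by
      intro u hu
      have := (hcl u hu).sum_weight ε
      rw [hbal u hu] at this
      linarith
    have hwsum : ∑ q ∈ Q, w q = 0 := by
      rw [← hε0]
      exact sum_fiberwise_of_maps_to (fun i _ => hcl₀.mem i) _
    have herase : ∀ q ∈ Q, w q ≠ 0 →
        ∀ u ∈ U, ∀ v ∈ U, (∀ i ∈ Q.erase q, u i = v i) → u = v := by
      intro q hq hwq u hu v hv huv
      refine hdet u hu v hv fun i hi => ?_
      by_cases hiq : i = q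
      · subst hiq
        have h1 := hlin u hu
        rw [← hlin v hv, ← add_sum_erase _ _ hi, ← add_sum_erase _ _ hi,
          sum_congr rfl fun j hj => by rw [huv j hj]] at h1
        exact mul_left_cancel₀ hwq (add_right_cancel h1)
      · exact huv i (mem_erase.2 ⟨hiq, hi⟩)
    by_cases hex : ∃ q ∈ Q, w q ≠ 0 ∧ q ≠ s ∧ q ≠ s'
    · obtain ⟨q, hq, hwq, hqs, hqs'⟩ := hex
      rw [← card_erase_of_mem hq]
      by_cases hss : s = s'
      · subst hss
        refine hbdd _ (fun u _ => ?_) (herase q hq hwq)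
        rw [sub_self, zero_add]
        exact hτ.trans (by exact_mod_cast hTW)
      · exact hoff _ (mem_erase.2 ⟨hqs.symm, hs⟩) (mem_erase.2 ⟨hqs'.symm, hs'⟩) hss
          (herase q hq hwq)
    · push Not at hex
      have hεne : ∀ i, ε i ≠ 0 := fun i => by rcases hε i with h | h <;> rw [h] <;> norm_num
      obtain ⟨q, hq, hwq⟩ := exists_weight_ne_zero hcl₀.mem hcl₀.fix hεne (by omega)
      rw [← card_erase_of_mem hq]
      refine hbdd _ (fun u hu => ?_) (herase q hq hwq)
      by_cases hss : s = s'
      · subst hss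
        rw [sub_self, zero_add]
        exact hτ.trans (by exact_mod_cast hTW)
      have hsub : ({s, s'} : Finset ι) ⊆ Q := by
        intro x hx
        rcases mem_insert.1 hx with rfl | hx
        · exact hs
        · rw [mem_singleton.1 hx]; exact hs'
      have hzero : ∀ x ∈ Q, x ∉ ({s, s'} : Finset ι) → w x = 0 := by
        intro x hx hxs
        by_contra hne
        simp only [mem_insert, mem_singleton, not_or] at hxs
        exact hxs.2 (hex x hx hne hxs.1)
      have h1 : w s + w s' = 0 := by
        rw [← sum_pair hss, sum_subset hsub hzero, hwsum]
      have h2 : w s * u s + w s' * u s' = -∑ i, ε i * t i := by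
        rw [← hlin u hu, ← sum_pair (f := fun x => w x * u x) hss]
        exact sum_subset hsub fun x hx hxs => by rw [hzero x hx hxs, zero_mul]
      have hws : w s ≠ 0 := by
        intro h0
        have h0' : w s' = 0 := by linarith
        refine hwq ?_
        by_cases hqm : q ∈ ({s, s'} : Finset ι)
        · rcases mem_insert.1 hqm with rfl | hqm
          · exact h0
          · rw [mem_singleton.1 hqm]; exact h0'
        · exact hzero q hq hqm
      have h3 : w s * (u s - u s') = -∑ i, ε i * t i := by
        rw [← h2, show w s' = -w s by linarith]; ring
      have h4 : |∑ i, ε i * t i| ≤ Fintype.card ι * T := by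
        refine (abs_sum_le_sum_abs _ _).trans ?_
        refine (sum_le_card_nsmul univ _ (T : ℤ) fun i _ => ?_).trans_eq ?_
        · rw [abs_mul]
          rcases hε i with h | h <;> rw [h] <;> simpa using hcl₀.small i
        · rw [card_univ, nsmul_eq_mul]
      have h5 : |u s - u s'| ≤ Fintype.card ι * T := by
        calc |u s - u s'| ≤ |w s| * |u s - u s'| :=
              le_mul_of_one_le_left (abs_nonneg _) (Int.one_le_abs hws)
          _ = |∑ i, ε i * t i| := by rw [← abs_mul, h3, abs_neg]
          _ ≤ _ := h4
      refine (abs_add_le _ _).trans ((add_le_add h5 hτ).trans_eq ?_)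
      rw [hW]; push_cast; ring

end Clusters

/-! ### Balanced correlations of the von Mangoldt function -/

theorem prod_offDiag_le_sum_pow {α : Type*} [DecidableEq α] {B : Finset α} (hB : B.Nonempty)
    {ρ : α × α → ℝ} (hρ : ∀ x, 1 ≤ ρ x) :
    ∏ x ∈ B.offDiag, ρ x ≤ ∑ x ∈ B ×ˢ B, ρ x ^ (#B * #B) := by
  obtain ⟨y, hy, hmax⟩ := exists_max_image (B ×ˢ B) ρ (hB.product hB)
  have hnn : ∀ x, 0 ≤ ρ x := fun x => zero_le_one.trans (hρ x)
  have hsub : B.offDiag ⊆ B ×ˢ B := fun x hx =>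
    mem_product.2 ⟨(mem_offDiag.1 hx).1, (mem_offDiag.1 hx).2.1⟩
  calc ∏ x ∈ B.offDiag, ρ x ≤ ρ y ^ #B.offDiag :=
        (prod_le_prod (fun x _ => hnn x) fun x hx => hmax x (hsub hx)).trans_eq (prod_const _)
    _ ≤ ρ y ^ (#B * #B) := by
        refine pow_le_pow_right₀ (hρ y) ?_
        rw [← card_product]
        exact card_le_card hsub
    _ ≤ _ := single_le_sum (f := fun x => ρ x ^ (#B * #B)) (fun x _ => pow_nonneg (hnn x) _) hy

theorem pow_mul_pow_le_add_add {H M : ℝ} (hH : 1 ≤ H) (hM : 1 ≤ M) {k c : ℕ} (hc : 1 ≤ c)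
    (hck : c ≤ 2 * k) :
    H ^ (if 2 * c ≤ 2 * k then c else c - 1) * M ^ (2 * k - c)
      ≤ H ^ (2 * k - 1) + H ^ k * M ^ k + H * M ^ (2 * k - 1) := by
  have hH0 : 0 ≤ H := by linarith
  have hM0 : 0 ≤ M := by linarith
  have p1 : 0 ≤ H ^ (2 * k - 1) := by positivity
  have p2 : 0 ≤ H ^ k * M ^ k := by positivity
  have p3 : 0 ≤ H * M ^ (2 * k - 1) := by positivity
  split_ifs with h <;> rcases le_total H M with hHM | hHM
  · have : H ^ c * M ^ (2 * k - c) ≤ H * M ^ (2 * k - 1) := by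
      calc H ^ c * M ^ (2 * k - c) = H * (H ^ (c - 1) * M ^ (2 * k - c)) := by
            rw [← mul_assoc, ← pow_succ', Nat.sub_add_cancel hc]
        _ ≤ H * (M ^ (c - 1) * M ^ (2 * k - c)) := by gcongr
        _ = _ := by rw [← pow_add]; congr 2; omega
    linarith
  · have : H ^ c * M ^ (2 * k - c) ≤ H ^ k * M ^ k := by
      calc H ^ c * M ^ (2 * k - c) = H ^ c * M ^ (k - c) * M ^ k := by
            rw [mul_assoc, ← pow_add]; congr 2; omega
        _ ≤ H ^ c * H ^ (k - c) * M ^ k := by gcongr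
        _ = _ := by rw [← pow_add]; congr 2; omega
    linarith
  · have : H ^ (c - 1) * M ^ (2 * k - c) ≤ H ^ k * M ^ k := by
      calc H ^ (c - 1) * M ^ (2 * k - c) = H ^ k * (H ^ (c - 1 - k) * M ^ (2 * k - c)) := by
            rw [← mul_assoc, ← pow_add]; congr 2; omega
        _ ≤ H ^ k * (M ^ (c - 1 - k) * M ^ (2 * k - c)) := by gcongr
        _ = H ^ k * M ^ (k - 1) := by rw [← pow_add]; congr 2; omega
        _ ≤ _ := by gcongr; omega
    linarith
  · have : H ^ (c - 1) * M ^ (2 * k - c) ≤ H ^ (2 * k - 1) := by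
      calc H ^ (c - 1) * M ^ (2 * k - c) ≤ H ^ (c - 1) * H ^ (2 * k - c) := by gcongr
        _ = _ := by rw [← pow_add]; congr 1; omega
    linarith

section Correlations

variable {ι : Type*} [Fintype ι] [DecidableEq ι] {ℓ : ℕ}

/-- The correlation sum at `u` is controlled by the differences between separated coordinates. -/
theorem exists_sum_prod_vonMangoldt_le (hℓ : 1 ≤ ℓ) {a : Fin ℓ → ℤ} (ha : Function.Injective a)
    {T : ℕ} (hT : ∀ j j', |a j - a j'| ≤ T) {κ : ℝ} (hκ : 1 ≤ κ) {Q : Finset ι}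
    (hQ : Q.Nonempty) :
    ∃ C : ℝ, 0 < C ∧ ∃ E : ℕ, ∀ X : ℝ, 2 ≤ X → ∀ u : ι → ℤ,
      (∀ i j, ((u i + a j : ℤ) : ℝ) ≤ κ * X) →
      (∀ q ∈ Q, ∀ q' ∈ Q, q ≠ q' → (T : ℤ) < |u q - u q'|) →
      ∑ m ∈ range (⌊X⌋₊ + 1), ∏ i, ∏ j, Λ ((m : ℤ) + u i + a j).toNat
        ≤ C * X * (1 + Real.log X) ^ ((Fintype.card ι - #Q) * ℓ) *
          ∑ q ∈ Q, ∑ q' ∈ Q, ∑ j, ∑ j', totientRatio (u q - u q' + (a j - a j')).natAbs ^ E := by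
  have hr : 1 ≤ #Q * ℓ := Nat.mul_pos (card_pos.2 hQ) hℓ
  obtain ⟨C, hC, hsieve⟩ := exists_card_primePow_translates_le hr hκ
  refine ⟨κ ^ (Fintype.card ι * ℓ) * C, by positivity, (#Q * ℓ) * ((#Q * ℓ) * (#Q * ℓ)), ?_⟩
  intro X hX u huX hsep
  set r := #Q * ℓ with hrdef
  set L := 1 + Real.log X with hL
  have hX0 : 0 ≤ X := by linarith
  have hL1 : 1 ≤ L := by linarith [Real.log_nonneg (by linarith : 1 ≤ X)]
  set φ : ι × Fin ℓ → ℤ := fun x => u x.1 + a x.2 with hφ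
  set I := Q ×ˢ (univ : Finset (Fin ℓ)) with hI
  set B := I.image φ with hBdef
  have hinj : Set.InjOn φ I := by
    rintro ⟨q, j⟩ hq ⟨q', j'⟩ hq' h
    simp only [hφ] at h
    have hqQ : q ∈ Q := (mem_product.1 hq).1
    have hqQ' : q' ∈ Q := (mem_product.1 hq').1
    have hqq : q = q' := by
      by_contra hne
      have h1 := hsep q hqQ q' hqQ' hne
      have h2 := hT j' j
      rw [show u q - u q' = a j' - a j by linarith] at h1
      omega
    subst hqq
    rw [ha (add_left_cancel h)]
  have hBcard : #B = r := by
    rw [hBdef, card_image_of_injOn hinj, hI, card_product, card_univ, Fintype.card_fin]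
  have hBne : B.Nonempty := card_pos.1 (by omega)
  set Z := {m ∈ range (⌊X⌋₊ + 1) | ∀ b ∈ B, Λ (((m : ℕ) : ℤ) + b).toNat ≠ 0} with hZ
  have hcount := hsieve B hBcard X hX fun b hb => by
    obtain ⟨⟨q, j⟩, _, rfl⟩ := mem_image.1 hb
    exact huX q j
  have hterm : ∀ m ∈ range (⌊X⌋₊ + 1), ∀ i j, Λ ((m : ℤ) + u i + a j).toNat ≤ κ * L := by
    intro m hm i j
    set n := ((m : ℤ) + u i + a j).toNat with hn
    refine vonMangoldt_le_log.trans ?_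
    rcases Nat.eq_zero_or_pos n with h0 | h0
    · rw [h0]; simp only [CharP.cast_eq_zero, Real.log_zero]; positivity
    have hmX : (m : ℝ) ≤ X :=
      (Nat.le_floor_iff hX0).1 (by rw [mem_range] at hm; omega)
    have hnX : (n : ℝ) ≤ (1 + κ) * X := by
      have h1 : (n : ℤ) = m + (u i + a j) := by omega
      have h2 : (n : ℝ) = m + ((u i + a j : ℤ) : ℝ) := by exact_mod_cast h1
      rw [h2]
      linarith [huX i j]
    have h3 := Real.log_le_log (by exact_mod_cast h0) hnX
    rw [Real.log_mul (by linarith) (by linarith)] at h3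
    have h4 := Real.log_le_sub_one_of_pos (by linarith : 0 < 1 + κ)
    have h5 : Real.log X ≤ κ * Real.log X :=
      le_mul_of_one_le_left (Real.log_nonneg (by linarith)) hκ
    rw [hL, mul_add]
    linarith
  have hsum : ∑ m ∈ range (⌊X⌋₊ + 1), ∏ i, ∏ j, Λ ((m : ℤ) + u i + a j).toNat
      ≤ #Z * (κ * L) ^ (Fintype.card ι * ℓ) := by
    calc _ = ∑ m ∈ Z, ∏ i, ∏ j, Λ ((m : ℤ) + u i + a j).toNat := by
          symm
          refine sum_subset (filter_subset _ _) fun m hm hmZ => ?_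
          have : ¬ ∀ b ∈ B, Λ ((m : ℤ) + b).toNat ≠ 0 := fun h => hmZ (mem_filter.2 ⟨hm, h⟩)
          push Not at this
          obtain ⟨b, hb, h0⟩ := this
          obtain ⟨⟨q, j⟩, _, rfl⟩ := mem_image.1 hb
          refine prod_eq_zero (mem_univ q) (prod_eq_zero (mem_univ j) ?_)
          rw [add_assoc]
          exact h0
      _ ≤ ∑ m ∈ Z, (κ * L) ^ (Fintype.card ι * ℓ) := by
          refine sum_le_sum fun m hm => ?_
          have hm' := (mem_filter.1 hm).1
          calc _ ≤ ∏ i : ι, ∏ j : Fin ℓ, (κ * L) :=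
                prod_le_prod (fun i _ => prod_nonneg fun j _ => vonMangoldt_nonneg) fun i _ =>
                  prod_le_prod (fun j _ => vonMangoldt_nonneg) fun j _ => hterm m hm' i j
            _ = _ := by simp [pow_mul, pow_right_comm]
      _ = _ := by rw [sum_const, nsmul_eq_mul]
  set S := ∑ q ∈ Q, ∑ q' ∈ Q, ∑ j, ∑ j',
    totientRatio (u q - u q' + (a j - a j')).natAbs ^ (r * (r * r)) with hS
  have hprod : (∏ x ∈ B.offDiag, totientRatio (x.1 - x.2).natAbs) ^ r ≤ S := by
    rw [← prod_pow]
    refine (prod_offDiag_le_sum_pow hBne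
      (ρ := fun x => totientRatio (x.1 - x.2).natAbs ^ r)
      fun x => one_le_pow₀ (one_le_totientRatio _)).trans (le_of_eq ?_)
    have himg : ∀ f : ℤ → ℝ, ∑ y ∈ B, f y = ∑ q ∈ Q, ∑ j, f (u q + a j) := fun f => by
      rw [sum_image hinj, hI, sum_product]
    simp only [← pow_mul, hBcard]
    rw [sum_product, himg, hS]
    refine sum_congr rfl fun q _ => ?_
    rw [sum_congr rfl fun j _ => himg _, sum_comm]
    refine sum_congr rfl fun q' _ => sum_congr rfl fun j _ => sum_congr rfl fun j' _ => ?_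
    simp only
    rw [show u q + a j - (u q' + a j') = u q - u q' + (a j - a j') by ring]
  have hQι : #Q ≤ Fintype.card ι := card_le_univ Q
  have hLr : 0 < L ^ r := by positivity
  refine hsum.trans ?_
  refine le_of_mul_le_mul_right ?_ hLr
  calc _ = (κ * L) ^ (Fintype.card ι * ℓ) * (#Z * L ^ r) := by ring
    _ ≤ (κ * L) ^ (Fintype.card ι * ℓ) * (C * X * S) := by
        refine mul_le_mul_of_nonneg_left (hcount.trans ?_) (by positivity)
        gcongr
    _ = κ ^ (Fintype.card ι * ℓ) * C * X * L ^ (Fintype.card ι * ℓ) * S := by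
        rw [mul_pow]; ring
    _ = _ := by
        have : L ^ (Fintype.card ι * ℓ) = L ^ ((Fintype.card ι - #Q) * ℓ) * L ^ r := by
          rw [← pow_add, hrdef, ← add_mul, Nat.sub_add_cancel hQι]
        rw [this]; ring

/-- Correlation sums over balanced points with prescribed clusters. -/
theorem exists_sum_clustered_prod_vonMangoldt_le (hℓ : 1 ≤ ℓ) {a : Fin ℓ → ℤ}
    (ha : Function.Injective a) {T : ℕ} (hT : ∀ j j', |a j - a j'| ≤ T) {κ : ℝ} (hκ : 1 ≤ κ)
    {ε : ι → ℤ} (hε : ∀ i, ε i = 1 ∨ ε i = -1) (hε0 : ∑ i, ε i = 0) {k : ℕ}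
    (hk : Fintype.card ι = 2 * k) (hk1 : 1 ≤ k) (Q : Finset ι) :
    ∃ C : ℝ, 0 < C ∧ ∀ X : ℝ, 2 ≤ X → ∀ h : ℕ, ∀ U : Finset (ι → ℤ),
      (∀ u ∈ U, ∀ i, u i ∈ Icc (0 : ℤ) h) → (∀ u ∈ U, ∑ i, ε i * u i = 0) →
      (∀ u ∈ U, ∀ i j, ((u i + a j : ℤ) : ℝ) ≤ κ * X) →
      ∀ σ t, (∀ u ∈ U, IsClustered T Q σ t u) →
      ∑ u ∈ U, ∑ m ∈ range (⌊X⌋₊ + 1), ∏ i, ∏ j, Λ ((m : ℤ) + u i + a j).toNat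
        ≤ C * (X * (((h : ℝ) + 1) ^ (2 * k - 1) + (h + 1) ^ k * ((1 + Real.log X) ^ ℓ) ^ k
          + (h + 1) * ((1 + Real.log X) ^ ℓ) ^ (2 * k - 1))) := by
  have hne : Nonempty ι := Fintype.card_pos_iff.1 (by omega)
  rcases Q.eq_empty_or_nonempty with rfl | hQ
  · refine ⟨1, one_pos, fun X hX h U _ _ _ σ t hcl => ?_⟩
    have hU : U = ∅ := eq_empty_of_forall_notMem fun u hu =>
      absurd ((hcl u hu).mem hne.some) (notMem_empty _)
    have : 0 ≤ Real.log X := Real.log_nonneg (by linarith)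
    rw [hU, sum_empty]
    positivity
  obtain ⟨C, hC, E, hcorr⟩ := exists_sum_prod_vonMangoldt_le hℓ ha hT hκ hQ
  obtain ⟨K, hK, hratio⟩ := exists_sum_totientRatio_natAbs_pow_le E
  set W : ℝ := K * (((Fintype.card ι + 1) * T : ℕ) + 1) with hW
  have hc1 : 1 ≤ #Q := card_pos.2 hQ
  have hc2 : #Q ≤ 2 * k := hk ▸ card_le_univ Q
  refine ⟨C * (#Q * (#Q * (ℓ * (ℓ * W)))), by positivity, ?_⟩
  intro X hX h U hU hbal hUX σ t hcl
  set L := 1 + Real.log X with hL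
  have hX0 : 0 ≤ X := by linarith
  have hL1 : 1 ≤ L := by linarith [Real.log_nonneg (by linarith : 1 ≤ X)]
  set e := if 2 * #Q ≤ Fintype.card ι then #Q else #Q - 1 with he
  have hψ : ∀ δ : ℤ, 0 ≤ totientRatio δ.natAbs ^ E := fun δ =>
    pow_nonneg (zero_le_one.trans (one_le_totientRatio _)) _
  have hpair : ∀ q ∈ Q, ∀ q' ∈ Q, ∀ j j',
      ∑ u ∈ U, totientRatio (u q - u q' + (a j - a j')).natAbs ^ E ≤ W * ((h : ℝ) + 1) ^ e :=
    fun q hq q' hq' j j' =>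
      sum_clustered_le hψ hratio hε hε0 hU hbal hcl hq hq' (hT j j')
  calc _ ≤ ∑ u ∈ U, C * X * L ^ ((Fintype.card ι - #Q) * ℓ) *
          ∑ q ∈ Q, ∑ q' ∈ Q, ∑ j, ∑ j', totientRatio (u q - u q' + (a j - a j')).natAbs ^ E :=
        sum_le_sum fun u hu => hcorr X hX u (hUX u hu) (hcl u hu).sep
    _ = C * X * L ^ ((Fintype.card ι - #Q) * ℓ) *
          ∑ q ∈ Q, ∑ q' ∈ Q, ∑ j, ∑ j', ∑ u ∈ U,
            totientRatio (u q - u q' + (a j - a j')).natAbs ^ E := by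
        rw [← mul_sum]
        congr 1
        rw [sum_comm]
        refine sum_congr rfl fun q _ => ?_
        rw [sum_comm]
        refine sum_congr rfl fun q' _ => ?_
        rw [sum_comm]
        refine sum_congr rfl fun j _ => ?_
        rw [sum_comm]
    _ ≤ C * X * L ^ ((Fintype.card ι - #Q) * ℓ) *
          ∑ q ∈ Q, ∑ q' ∈ Q, ∑ j : Fin ℓ, ∑ j' : Fin ℓ, W * ((h : ℝ) + 1) ^ e := by
        gcongr with q hq q' hq' j _ j' _
        exact hpair q hq q' hq' j j'
    _ = C * (#Q * (#Q * (ℓ * (ℓ * W)))) * (X * (((h : ℝ) + 1) ^ e * (L ^ ℓ) ^ (2 * k - #Q))) := by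
        simp only [sum_const, nsmul_eq_mul, card_univ, Fintype.card_fin]
        rw [hk, mul_comm (2 * k - #Q) ℓ, pow_mul]
        ring
    _ ≤ _ := by
        gcongr
        rw [he, hk]
        exact pow_mul_pow_le_add_add (by linarith [Nat.cast_nonneg (α := ℝ) h])
          (one_le_pow₀ hL1) hc1 hc2

theorem exists_sum_balanced_prod_vonMangoldt_le (hℓ : 1 ≤ ℓ) {a : Fin ℓ → ℤ}
    (ha : Function.Injective a) {ε : ι → ℤ} (hε : ∀ i, ε i = 1 ∨ ε i = -1) (hε0 : ∑ i, ε i = 0)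
    {k : ℕ} (hk : Fintype.card ι = 2 * k) (hk1 : 1 ≤ k) :
    ∃ C : ℝ, 0 < C ∧ ∀ X : ℝ, 2 ≤ X → ∀ h : ℕ, (h : ℝ) ≤ 2 * X →
      ∑ u ∈ Fintype.piFinset (fun _ : ι => Icc (0 : ℤ) h) with ∑ i, ε i * u i = 0,
        ∑ m ∈ range (⌊X⌋₊ + 1), ∏ i, ∏ j, Λ ((m : ℤ) + u i + a j).toNat
        ≤ C * (X * (((h : ℝ) + 1) ^ (2 * k - 1) + (h + 1) ^ k * ((1 + Real.log X) ^ ℓ) ^ k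
          + (h + 1) * ((1 + Real.log X) ^ ℓ) ^ (2 * k - 1))) := by
  classical
  set A : ℕ := ∑ j, (a j).natAbs with hA
  have haA : ∀ j, |a j| ≤ A := fun j => by
    rw [Int.abs_eq_natAbs, hA]
    exact_mod_cast single_le_sum (f := fun j => (a j).natAbs) (fun _ _ => Nat.zero_le _)
      (mem_univ j)
  have hT : ∀ j j', |a j - a j'| ≤ (2 * A : ℕ) := fun j j' => by
    have h1 := abs_le.1 (haA j)
    have h2 := abs_le.1 (haA j')
    rw [abs_le]
    push_cast
    omega
  have hκ : (1 : ℝ) ≤ 2 + A := by linarith [Nat.cast_nonneg (α := ℝ) A]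
  choose C hC hbound using
    exists_sum_clustered_prod_vonMangoldt_le hℓ ha hT hκ hε hε0 hk hk1
  set V : Finset (ι → ℤ) := Fintype.piFinset fun _ => Icc (-((2 * A : ℕ) : ℤ)) ((2 * A : ℕ) : ℤ)
    with hV
  set D : Finset (Finset ι × (ι → ι) × (ι → ℤ)) := univ ×ˢ univ ×ˢ V with hD
  have hD0 : 0 ≤ ∑ d ∈ D, C d.1 := sum_nonneg fun d _ => (hC d.1).le
  refine ⟨∑ d ∈ D, C d.1 + 1, by positivity, ?_⟩
  intro X hX h hhX
  set G : (ι → ℤ) → ℝ := fun u =>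
    ∑ m ∈ range (⌊X⌋₊ + 1), ∏ i, ∏ j, Λ ((m : ℤ) + u i + a j).toNat with hG
  have hG0 : ∀ u, 0 ≤ G u := fun u => sum_nonneg fun m _ => prod_nonneg fun i _ =>
    prod_nonneg fun j _ => vonMangoldt_nonneg
  set U := {u ∈ Fintype.piFinset (fun _ : ι => Icc (0 : ℤ) h) | ∑ i, ε i * u i = 0} with hU
  set bound := X * (((h : ℝ) + 1) ^ (2 * k - 1) + (h + 1) ^ k * ((1 + Real.log X) ^ ℓ) ^ k
          + (h + 1) * ((1 + Real.log X) ^ ℓ) ^ (2 * k - 1)) with hbdef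
  have hlog : 0 ≤ Real.log X := Real.log_nonneg (by linarith)
  have hb0 : 0 ≤ bound := by positivity
  have hUbox : ∀ u ∈ U, ∀ i, u i ∈ Icc (0 : ℤ) h := fun u hu =>
    Fintype.mem_piFinset.1 (mem_filter.1 hu).1
  have hUX : ∀ u ∈ U, ∀ i j, ((u i + a j : ℤ) : ℝ) ≤ (2 + A) * X := by
    intro u hu i j
    have h1 : u i + a j ≤ h + A := add_le_add (mem_Icc.1 (hUbox u hu i)).2
      ((le_abs_self _).trans (haA j))
    have h2 : ((u i + a j : ℤ) : ℝ) ≤ h + A := by exact_mod_cast h1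
    have h3 : (A : ℝ) ≤ A * X := le_mul_of_one_le_right (Nat.cast_nonneg _) (by linarith)
    linarith
  have hcover : ∀ u, ∃ d ∈ D, IsClustered (2 * A) d.1 d.2.1 d.2.2 u := by
    intro u
    obtain ⟨Q, σ, t, hcl⟩ := exists_isClustered (2 * A) u
    refine ⟨(Q, σ, t), ?_, hcl⟩
    simp only [hD, mem_product, mem_univ, true_and, hV, Fintype.mem_piFinset, mem_Icc]
    exact fun i => abs_le.1 (hcl.small i)
  calc ∑ u ∈ U, G u
      ≤ ∑ u ∈ U, ∑ d ∈ D, if IsClustered (2 * A) d.1 d.2.1 d.2.2 u then G u else 0 := by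
        refine sum_le_sum fun u _ => ?_
        obtain ⟨d, hd, hcl⟩ := hcover u
        refine le_trans (le_of_eq (if_pos hcl).symm) (single_le_sum
          (f := fun d => if IsClustered (2 * A) d.1 d.2.1 d.2.2 u then G u else 0)
          (fun d _ => ?_) hd)
        split_ifs
        exacts [hG0 u, le_rfl]
    _ = ∑ d ∈ D, ∑ u ∈ U with IsClustered (2 * A) d.1 d.2.1 d.2.2 u, G u := by
        rw [sum_comm]
        exact sum_congr rfl fun d _ => (sum_filter _ _).symm
    _ ≤ ∑ d ∈ D, C d.1 * bound := sum_le_sum fun d _ =>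
        hbound d.1 X hX h _ (fun u hu => hUbox u (mem_filter.1 hu).1)
          (fun u hu => (mem_filter.1 (mem_filter.1 hu).1).2)
          (fun u hu => hUX u (mem_filter.1 hu).1) _ _ fun u hu => (mem_filter.1 hu).2
    _ ≤ _ := by rw [← sum_mul]; gcongr; linarith

end Correlations

/-! ### Moments of exponential sums -/

theorem eTwoPi_sum {ι : Type*} (s : Finset ι) (f : ι → ℝ) :
    eTwoPi (∑ i ∈ s, f i) = ∏ i ∈ s, eTwoPi (f i) := by
  simp only [eTwoPi]
  rw [← Complex.exp_sum, Complex.ofReal_sum, mul_sum]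

theorem conj_eTwoPi (θ : ℝ) : (starRingEnd ℂ) (eTwoPi θ) = eTwoPi (-θ) := by
  simp only [eTwoPi]
  rw [← Complex.exp_conj]
  simp [map_ofNat]

theorem continuous_eTwoPi : Continuous eTwoPi := by
  unfold eTwoPi
  fun_prop

theorem integral_eTwoPi_mul_intCast (n : ℤ) :
    ∫ α in (0 : ℝ)..1, eTwoPi (α * n) = if n = 0 then 1 else 0 := by
  split_ifs with h
  · simp [h, eTwoPi]
  · have hc : 2 * (Real.pi : ℂ) * Complex.I * n ≠ 0 := by
      simp [Real.pi_ne_zero, h]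
    have := integral_exp_mul_complex (a := 0) (b := 1) hc
    simp only [eTwoPi]
    rw [intervalIntegral.integral_congr (g := fun x : ℝ =>
      Complex.exp (2 * (Real.pi : ℂ) * Complex.I * n * x)) fun x _ => by
        simp only; congr 1; push_cast; ring, this]
    have h1 : Complex.exp (2 * (Real.pi : ℂ) * Complex.I * n * (1 : ℝ)) = 1 := by
      rw [Complex.exp_eq_one_iff]
      exact ⟨n, by push_cast; ring⟩
    rw [h1]
    simp

/-- Opening the even moment of an exponential sum. -/
theorem integral_norm_pow_le_sum_balanced {β : Type*} (k : ℕ) (S : Finset β)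
    (φ : β → ℤ) (c : β → ℂ) :
    ∫ α in (0 : ℝ)..1, ‖∑ b ∈ S, c b * eTwoPi (α * φ b)‖ ^ (2 * k)
      ≤ ∑ v ∈ Fintype.piFinset (fun _ : Fin k ⊕ Fin k => S) with
          ∑ i, Sum.elim (fun _ => 1) (fun _ => -1) i * φ (v i) = (0 : ℤ), ∏ i, ‖c (v i)‖ := by
  classical
  set ε : Fin k ⊕ Fin k → ℤ := Sum.elim (fun _ => 1) (fun _ => -1) with hε
  set d : Fin k ⊕ Fin k → β → ℂ :=
    Sum.elim (fun _ => c) (fun _ b => (starRingEnd ℂ) (c b)) with hd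
  have hdn : ∀ i b, ‖d i b‖ = ‖c b‖ := by
    rintro (i | i) b <;> simp [hd]
  have hexp : ∀ α : ℝ, ((‖∑ b ∈ S, c b * eTwoPi (α * φ b)‖ ^ (2 * k) : ℝ) : ℂ)
      = ∑ v ∈ Fintype.piFinset (fun _ : Fin k ⊕ Fin k => S),
          (∏ i, d i (v i)) * eTwoPi (α * ((∑ i, ε i * φ (v i) : ℤ) : ℝ)) := by
    intro α
    have h1 : ∏ i : Fin k ⊕ Fin k, ∑ b ∈ S, d i b * eTwoPi (ε i * (α * φ b))
        = ((‖∑ b ∈ S, c b * eTwoPi (α * φ b)‖ ^ (2 * k) : ℝ) : ℂ) := by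
      rw [Fintype.prod_sum_type]
      simp only [hd, hε, Sum.elim_inl, Sum.elim_inr, prod_const, card_univ, Fintype.card_fin]
      have h2 : ∑ b ∈ S, (starRingEnd ℂ) (c b) * eTwoPi (((-1 : ℤ) : ℝ) * (α * φ b))
          = (starRingEnd ℂ) (∑ b ∈ S, c b * eTwoPi (α * φ b)) := by
        rw [map_sum]
        refine sum_congr rfl fun b _ => ?_
        rw [map_mul, conj_eTwoPi]
        congr 2; push_cast; ring
      rw [h2, ← mul_pow]
      simp only [Int.cast_one, one_mul]
      rw [Complex.mul_conj, Complex.normSq_eq_norm_sq, pow_mul]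
      push_cast
      rfl
    rw [← h1, prod_univ_sum]
    refine sum_congr rfl fun v _ => ?_
    rw [prod_mul_distrib, ← eTwoPi_sum]
    congr 2
    push_cast
    rw [mul_sum]
    exact sum_congr rfl fun i _ => by ring
  have hinteg : ((∫ α in (0 : ℝ)..1, ‖∑ b ∈ S, c b * eTwoPi (α * φ b)‖ ^ (2 * k) : ℝ) : ℂ)
      = ∑ v ∈ Fintype.piFinset (fun _ : Fin k ⊕ Fin k => S) with ∑ i, ε i * φ (v i) = 0,
          ∏ i, d i (v i) := by
    rw [← intervalIntegral.integral_ofReal, intervalIntegral.integral_congr fun α _ => hexp α,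
      intervalIntegral.integral_finsetSum, sum_filter]
    · refine sum_congr rfl fun v _ => ?_
      rw [intervalIntegral.integral_const_mul, integral_eTwoPi_mul_intCast]
      simp
    · intro v _
      refine Continuous.intervalIntegrable ?_ _ _
      exact continuous_const.mul (continuous_eTwoPi.comp (continuous_id.mul continuous_const))
  refine (le_abs_self _).trans ?_
  rw [← Real.norm_eq_abs, ← Complex.norm_real, hinteg]
  refine (norm_sum_le _ _).trans (sum_le_sum fun v _ => ?_)
  rw [norm_prod]
  exact (prod_congr rfl fun i _ => hdn i _).le

theorem integral_le_sum_floor {f : ℝ → ℝ} {G : ℕ → ℝ} {X : ℝ} (hX : 0 ≤ X) (hf : ∀ x, 0 ≤ f x)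
    (hG : ∀ m, 0 ≤ G m) (h : ∀ x, 0 ≤ x → x ≤ X → f x ≤ G ⌊x⌋₊) :
    ∫ x in (0 : ℝ)..X, f x ≤ ∑ m ∈ range (⌊X⌋₊ + 1), G m := by
  set g : ℝ → ℝ := fun x => ∑ m ∈ range (⌊X⌋₊ + 1),
    (Set.Ico (m : ℝ) (m + 1)).indicator (fun _ => G m) x with hg
  have hinteg : ∀ m : ℕ, MeasureTheory.Integrable
      ((Set.Ico (m : ℝ) (m + 1)).indicator fun _ => G m) := fun m =>
    (MeasureTheory.integrable_indicator_iff measurableSet_Ico).2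
      (MeasureTheory.integrableOn_const (by simp))
  have hginteg : MeasureTheory.Integrable g := MeasureTheory.integrable_finsetSum _ fun m _ => hinteg m
  have hg0 : ∀ x, 0 ≤ g x := fun x => sum_nonneg fun m _ =>
    Set.indicator_nonneg (fun _ _ => hG m) x
  have hle : ∀ x, 0 ≤ x → x ≤ X → f x ≤ g x := by
    intro x hx hxX
    refine (h x hx hxX).trans ?_
    have hmem : x ∈ Set.Ico ((⌊x⌋₊ : ℕ) : ℝ) (⌊x⌋₊ + 1) :=
      ⟨Nat.floor_le hx, Nat.lt_floor_add_one x⟩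
    have hr : ⌊x⌋₊ ∈ range (⌊X⌋₊ + 1) :=
      mem_range.2 (Nat.lt_succ_of_le (Nat.floor_le_floor hxX))
    refine le_trans (le_of_eq (Set.indicator_of_mem hmem (fun _ => G ⌊x⌋₊)).symm) ?_
    exact single_le_sum (f := fun m : ℕ => (Set.Ico (m : ℝ) (m + 1)).indicator (fun _ => G m) x)
      (fun m _ => Set.indicator_nonneg (fun _ _ => hG m) x) hr
  rw [intervalIntegral.integral_of_le hX]
  calc ∫ x in Set.Ioc 0 X, f x ≤ ∫ x in Set.Ioc 0 X, g x := by
        refine MeasureTheory.integral_mono_of_nonneg (Filter.Eventually.of_forall hf)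
          hginteg.integrableOn ?_
        filter_upwards [MeasureTheory.ae_restrict_mem measurableSet_Ioc] with x hx
        exact hle x hx.1.le hx.2
    _ ≤ ∫ x, g x := MeasureTheory.setIntegral_le_integral hginteg (Filter.Eventually.of_forall hg0)
    _ = _ := by
        rw [hg, MeasureTheory.integral_finsetSum _ fun m _ => hinteg m]
        refine sum_congr rfl fun m _ => ?_
        rw [MeasureTheory.integral_indicator measurableSet_Ico, MeasureTheory.setIntegral_const]
        simp

/-! ### The moment bound -/

section Moments

variable {ℓ : ℕ}

theorem sum_balanced_Icc_eq (k m h : ℕ) (f : ℤ → ℝ) :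
    ∑ v ∈ Fintype.piFinset (fun _ : Fin k ⊕ Fin k => Icc m (m + h)) with
        ∑ i, Sum.elim (fun _ => 1) (fun _ => -1) i * (v i : ℤ) = (0 : ℤ), ∏ i, f (v i)
      = ∑ u ∈ Fintype.piFinset (fun _ : Fin k ⊕ Fin k => Icc (0 : ℤ) h) with
        ∑ i, Sum.elim (fun _ => 1) (fun _ => -1) i * u i = (0 : ℤ), ∏ i, f (m + u i) := by
  have hshift : ∀ u : Fin k ⊕ Fin k → ℤ,
      ∑ i, Sum.elim (fun _ => (1 : ℤ)) (fun _ => -1) i * ((m : ℤ) + u i)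
        = ∑ i, Sum.elim (fun _ => (1 : ℤ)) (fun _ => -1) i * u i := by
    intro u
    simp only [mul_add, sum_add_distrib, ← sum_mul]
    simp
  refine sum_nbij' (fun v i => (v i : ℤ) - m) (fun u i => ((m : ℤ) + u i).toNat) ?_ ?_ ?_ ?_ ?_
  · intro v hv
    simp only [mem_filter, Fintype.mem_piFinset, mem_Icc] at hv ⊢
    refine ⟨fun i => ?_, ?_⟩
    · have := hv.1 i; omega
    · rw [← hshift]; simpa using hv.2
  · intro u hu
    simp only [mem_filter, Fintype.mem_piFinset, mem_Icc] at hu ⊢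
    refine ⟨fun i => ?_, ?_⟩
    · have := hu.1 i; omega
    · rw [← hu.2, ← hshift u]
      refine sum_congr rfl fun i _ => ?_
      rw [Int.toNat_of_nonneg (by have := hu.1 i; omega)]
  · intro v hv
    funext i
    simp
  · intro u hu
    simp only [mem_filter, Fintype.mem_piFinset, mem_Icc] at hu
    funext i
    have := hu.1 i
    simp only
    omega
  · intro v hv
    simp

/-- The integrand in `x` is bounded by a sum over balanced points. -/
theorem integral_norm_pow_le_sum_floor (k : ℕ) (a : Fin ℓ → ℤ) {g : ℕ → ℂ} (hg : ∀ n, ‖g n‖ ≤ 1)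
    {H x : ℝ} (hH : 0 ≤ H) (hx : 0 ≤ x) :
    ∫ α in (0 : ℝ)..(1 : ℝ), ‖∑ n ∈ Icc ⌈x⌉₊ ⌊x + H⌋₊,
        g n * eTwoPi (α * n) * ((∏ j, Λ (((n : ℤ) + a j).toNat) : ℝ) : ℂ)‖ ^ (2 * k)
      ≤ ∑ u ∈ Fintype.piFinset (fun _ : Fin k ⊕ Fin k => Icc (0 : ℤ) ((⌊H⌋₊ + 1 : ℕ) : ℤ)) with
          ∑ i, Sum.elim (fun _ => 1) (fun _ => -1) i * u i = (0 : ℤ),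
          ∏ i, ∏ j, Λ ((⌊x⌋₊ : ℤ) + u i + a j).toNat := by
  set F : ℤ → ℝ := fun n => ∏ j, Λ (n + a j).toNat with hF
  have hF0 : ∀ n, 0 ≤ F n := fun n => prod_nonneg fun j _ => vonMangoldt_nonneg
  have h1 := integral_norm_pow_le_sum_balanced k (Icc ⌈x⌉₊ ⌊x + H⌋₊) (fun n : ℕ => (n : ℤ))
    (fun n => g n * ((F n : ℝ) : ℂ))
  have hsub : Icc ⌈x⌉₊ ⌊x + H⌋₊ ⊆ Icc ⌊x⌋₊ (⌊x⌋₊ + (⌊H⌋₊ + 1)) := by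
    refine Icc_subset_Icc (Nat.floor_le_ceil x) ?_
    rw [← Nat.lt_add_one_iff, Nat.floor_lt (by linarith)]
    push_cast
    linarith [Nat.lt_floor_add_one x, Nat.lt_floor_add_one H]
  calc _ = ∫ α in (0 : ℝ)..(1 : ℝ), ‖∑ n ∈ Icc ⌈x⌉₊ ⌊x + H⌋₊,
        g n * ((F n : ℝ) : ℂ) * eTwoPi (α * ((n : ℤ) : ℝ))‖ ^ (2 * k) := by
        refine intervalIntegral.integral_congr fun α _ => ?_
        simp only [Int.cast_natCast, mul_right_comm _ _ (eTwoPi _), hF]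
    _ ≤ _ := h1
    _ ≤ ∑ v ∈ Fintype.piFinset (fun _ : Fin k ⊕ Fin k => Icc ⌈x⌉₊ ⌊x + H⌋₊) with
          ∑ i, Sum.elim (fun _ => 1) (fun _ => -1) i * (v i : ℤ) = (0 : ℤ), ∏ i, F (v i) := by
        refine sum_le_sum fun v _ => prod_le_prod (fun i _ => norm_nonneg _) fun i _ => ?_
        rw [norm_mul, Complex.norm_real, Real.norm_of_nonneg (hF0 _)]
        exact mul_le_of_le_one_left (hF0 _) (hg _)
    _ ≤ ∑ v ∈ Fintype.piFinset (fun _ : Fin k ⊕ Fin k => Icc ⌊x⌋₊ (⌊x⌋₊ + (⌊H⌋₊ + 1))) with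
          ∑ i, Sum.elim (fun _ => 1) (fun _ => -1) i * (v i : ℤ) = (0 : ℤ), ∏ i, F (v i) :=
        sum_le_sum_of_subset_of_nonneg
          (filter_subset_filter _ (Fintype.piFinset_subset _ _ fun _ => hsub))
          fun v _ _ => prod_nonneg fun i _ => hF0 _
    _ = _ := sum_balanced_Icc_eq k _ _ F

theorem exists_moment_le (hℓ : 1 ≤ ℓ) {k : ℕ} (hk : 1 ≤ k) {a : Fin ℓ → ℤ}
    (ha : Function.Injective a) :
    ∃ K : ℝ, 0 < K ∧ ∀ X H : ℝ, ∀ g : ℕ → ℂ, 2 ≤ H → H ≤ X → (∀ n, ‖g n‖ ≤ 1) →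
      ∫ x in (0 : ℝ)..X, ∫ α in (0 : ℝ)..(1 : ℝ),
          ‖∑ n ∈ Icc ⌈x⌉₊ ⌊x + H⌋₊,
            g n * eTwoPi (α * n) * ((∏ j, Λ (((n : ℤ) + a j).toNat) : ℝ) : ℂ)‖ ^ (2 * k)
        ≤ K * (X * (H ^ (2 * k - 1) + H ^ k * Real.log X ^ (k * ℓ)
            + H * Real.log X ^ ((2 * k - 1) * ℓ))) := by
  set ε : Fin k ⊕ Fin k → ℤ := Sum.elim (fun _ => 1) (fun _ => -1) with hε
  have hε1 : ∀ i, ε i = 1 ∨ ε i = -1 := by rintro (i | i) <;> simp [hε]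
  have hε0 : ∑ i, ε i = 0 := by simp [hε]
  obtain ⟨C, hC, hbound⟩ := exists_sum_balanced_prod_vonMangoldt_le hℓ ha hε1 hε0
    (k := k) (by simp [two_mul]) hk
  refine ⟨C * (2 ^ (2 * k - 1) + 2 ^ k * 3 ^ (k * ℓ) + 2 * 3 ^ ((2 * k - 1) * ℓ)), by positivity, ?_⟩
  intro X H g hH hHX hg
  have hX : 2 ≤ X := hH.trans hHX
  set h := ⌊H⌋₊ + 1 with hh
  have hhH : (h : ℝ) + 1 ≤ 2 * H := by
    rw [hh]
    push_cast
    linarith [Nat.floor_le (by linarith : 0 ≤ H)]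
  have hlog : 1 / 2 ≤ Real.log X := by
    have h1 := Real.log_two_gt_d9
    have h2 := Real.log_le_log (by norm_num) hX
    linarith
  have hL : 1 + Real.log X ≤ 3 * Real.log X := by linarith
  set G : ℕ → ℝ := fun m =>
    ∑ u ∈ Fintype.piFinset (fun _ : Fin k ⊕ Fin k => Icc (0 : ℤ) (h : ℤ)) with
      ∑ i, ε i * u i = 0, ∏ i, ∏ j, Λ ((m : ℤ) + u i + a j).toNat with hG
  calc _ ≤ ∑ m ∈ range (⌊X⌋₊ + 1), G m := by
        refine integral_le_sum_floor (by linarith) (fun x => ?_) (fun m => ?_) fun x hx _ => ?_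
        · exact intervalIntegral.integral_nonneg zero_le_one fun α _ => by positivity
        · exact sum_nonneg fun u _ => prod_nonneg fun i _ => prod_nonneg fun j _ =>
            vonMangoldt_nonneg
        · exact integral_norm_pow_le_sum_floor k a hg (by linarith) hx
    _ ≤ C * (X * (((h : ℝ) + 1) ^ (2 * k - 1) + (h + 1) ^ k * ((1 + Real.log X) ^ ℓ) ^ k
          + (h + 1) * ((1 + Real.log X) ^ ℓ) ^ (2 * k - 1))) := by
        rw [hG, sum_comm]
        exact hbound X hX h (by linarith)
    _ ≤ C * (X * ((2 * H) ^ (2 * k - 1) + (2 * H) ^ k * ((3 * Real.log X) ^ ℓ) ^ k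
          + 2 * H * ((3 * Real.log X) ^ ℓ) ^ (2 * k - 1))) := by
        gcongr
    _ = C * (X * (2 ^ (2 * k - 1) * H ^ (2 * k - 1)
          + 2 ^ k * 3 ^ (k * ℓ) * (H ^ k * Real.log X ^ (k * ℓ))
          + 2 * 3 ^ ((2 * k - 1) * ℓ) * (H * Real.log X ^ ((2 * k - 1) * ℓ)))) := by
        rw [mul_comm k ℓ, mul_comm (2 * k - 1) ℓ, ← pow_mul, ← pow_mul]
        simp only [mul_pow]
        ring
    _ ≤ _ := by
        rw [mul_assoc C]
        refine mul_le_mul_of_nonneg_left ?_ hC.le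
        rw [mul_left_comm _ X]
        refine mul_le_mul_of_nonneg_left ?_ (by linarith)
        have p1 : 0 ≤ H ^ (2 * k - 1) := by positivity
        have p2 : 0 ≤ H ^ k * Real.log X ^ (k * ℓ) := by positivity
        have p3 : 0 ≤ H * Real.log X ^ ((2 * k - 1) * ℓ) := by positivity
        have q1 : (0 : ℝ) ≤ 2 ^ (2 * k - 1) := by positivity
        have q2 : (0 : ℝ) ≤ 2 ^ k * 3 ^ (k * ℓ) := by positivity
        have q3 : (0 : ℝ) ≤ 2 * 3 ^ ((2 * k - 1) * ℓ) := by positivity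
        set A₁ := H ^ (2 * k - 1)
        set A₂ := H ^ k * Real.log X ^ (k * ℓ)
        set A₃ := H * Real.log X ^ ((2 * k - 1) * ℓ)
        set B₁ : ℝ := 2 ^ (2 * k - 1)
        set B₂ : ℝ := 2 ^ k * 3 ^ (k * ℓ)
        set B₃ : ℝ := 2 * 3 ^ ((2 * k - 1) * ℓ)
        nlinarith [mul_nonneg q1 p2, mul_nonneg q1 p3, mul_nonneg q2 p1, mul_nonneg q2 p3,
          mul_nonneg q3 p1, mul_nonneg q3 p2]

theorem three_terms_le_of_log_rpow_le {k : ℕ} (hk : 2 ≤ k) {X H : ℝ} (hH : 1 ≤ H)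
    (hX : 1 ≤ X) (h : Real.log X ^ (((ℓ : ℝ) * k) / ((k : ℝ) - 1)) ≤ H) :
    H ^ (2 * k - 1) + H ^ k * Real.log X ^ (k * ℓ) + H * Real.log X ^ ((2 * k - 1) * ℓ)
      ≤ 3 * H ^ (2 * k - 1) := by
  have hlog : 0 ≤ Real.log X := Real.log_nonneg hX
  have hk' : (0 : ℝ) < (k : ℝ) - 1 := by
    have : (2 : ℝ) ≤ k := by exact_mod_cast hk
    linarith
  have h1 : Real.log X ^ (k * ℓ) ≤ H ^ (k - 1) := by
    calc Real.log X ^ (k * ℓ)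
        = (Real.log X ^ (((ℓ : ℝ) * k) / ((k : ℝ) - 1))) ^ (k - 1) := by
          rw [← Real.rpow_mul_natCast hlog, ← Real.rpow_natCast, Nat.cast_sub (by omega)]
          congr 1
          push_cast
          field_simp
      _ ≤ _ := by gcongr
  have h2 : Real.log X ^ ((2 * k - 1) * ℓ) ≤ H ^ (2 * k - 2) := by
    rcases le_total (Real.log X) 1 with hle | hle
    · exact (pow_le_one₀ hlog hle).trans (one_le_pow₀ hH)
    · calc Real.log X ^ ((2 * k - 1) * ℓ) ≤ Real.log X ^ (k * ℓ * 2) := by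
            refine pow_le_pow_right₀ hle ?_
            calc (2 * k - 1) * ℓ ≤ 2 * k * ℓ := Nat.mul_le_mul_right _ (by omega)
              _ = _ := by ring
        _ = (Real.log X ^ (k * ℓ)) ^ 2 := pow_mul _ _ _
        _ ≤ (H ^ (k - 1)) ^ 2 := by gcongr
        _ = _ := by rw [← pow_mul]; congr 1; omega
  have h3 : H ^ k * Real.log X ^ (k * ℓ) ≤ H ^ (2 * k - 1) := by
    calc _ ≤ H ^ k * H ^ (k - 1) := by gcongr
      _ = _ := by rw [← pow_add]; congr 1; omega
  have h4 : H * Real.log X ^ ((2 * k - 1) * ℓ) ≤ H ^ (2 * k - 1) := by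
    calc _ ≤ H * H ^ (2 * k - 2) := by gcongr
      _ = _ := by rw [← pow_succ']; congr 1; omega
  linarith

end Moments

/-- **Proposition 2.7 (moments of short exponential sums of prime correlations).**
For fixed `ℓ ≥ 1`, `k ≥ 2` and distinct integers `a₁, …, a_ℓ`, for `X ≥ H ≥ 2`
and any `g` with `|g(n)| ≤ 1`,
`M_{2k} = ∫₀^X ∫₀^1 |∑_{x≤n≤x+H} g(n)e(αn)∏_j Λ(n+a_j)|^{2k} dα dx`
satisfies `M_{2k} ≪ X·(H^{2k−1} + H^k(log X)^{kℓ} + H(log X)^{(2k−1)ℓ})`;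
in particular, if `H ≥ (log X)^{ℓk/(k−1)}` then `M_{2k} ≪ X·H^{2k−1}`. -/
theorem moment_bound_vonMangoldt_exponential_sums
    (ℓ k : ℕ) (hℓ : 1 ≤ ℓ) (hk : 2 ≤ k) (a : Fin ℓ → ℤ)
    (hdistinct : Function.Injective a) :
    ∃ K : ℝ, 0 < K ∧ ∀ X H : ℝ, ∀ g : ℕ → ℂ, 2 ≤ H → H ≤ X →
      (∀ n, ‖g n‖ ≤ 1) →
      ((∫ x in (0 : ℝ)..X, ∫ α in (0 : ℝ)..(1 : ℝ),
          ‖∑ n ∈ Icc ⌈x⌉₊ ⌊x + H⌋₊,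
            g n * eTwoPi (α * n) *
              ((∏ j, Λ (((n : ℤ) + a j).toNat) : ℝ) : ℂ)‖ ^ (2 * k))
        ≤ K * (X * (H ^ (2 * k - 1) + H ^ k * Real.log X ^ (k * ℓ)
            + H * Real.log X ^ ((2 * k - 1) * ℓ)))) ∧
      (Real.log X ^ (((ℓ : ℝ) * k) / ((k : ℝ) - 1)) ≤ H →
        (∫ x in (0 : ℝ)..X, ∫ α in (0 : ℝ)..(1 : ℝ),
          ‖∑ n ∈ Icc ⌈x⌉₊ ⌊x + H⌋₊,
            g n * eTwoPi (α * n) *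
              ((∏ j, Λ (((n : ℤ) + a j).toNat) : ℝ) : ℂ)‖ ^ (2 * k))
        ≤ K * (X * H ^ (2 * k - 1))) := by
  obtain ⟨K, hK, hbound⟩ := exists_moment_le hℓ (by omega : 1 ≤ k) hdistinct
  refine ⟨3 * K, by positivity, fun X H g hH hHX hg => ⟨?_, fun hlog => ?_⟩⟩
  · have hlogX : 0 ≤ Real.log X := Real.log_nonneg (by linarith)
    have hX0 : 0 ≤ X := by linarith
    refine (hbound X H g hH hHX hg).trans ?_
    gcongr
    linarith
  · have hX0 : 0 ≤ X := by linarith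
    calc _ ≤ _ := hbound X H g hH hHX hg
      _ ≤ K * (X * (3 * H ^ (2 * k - 1))) := by
          gcongr
          exact three_terms_le_of_log_rpow_le hk (by linarith) (by linarith) hlog
      _ = _ := by ring
end
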